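/- arXiv:1404.2192 — 6 statements merged into one kernel-verified Lean document; each statement's English description precedes it below -/
import Mathlib

section
/- Let s > 1 be a real number and let h : ℍ → ℂ be a continuous function on the upper half plane that is invariant under the action of SL(2,ℤ) by Möbius transformations. Suppose there is a constant C > 0 such that |h(x+iy)| ≤ C·y^s for every point x+iy in the standard fundamental domain F = { x+iy : |x| ≤ 1/2, x²+y² ≥ 1, y > 0 }. Then for every integer n and every y > 0, the n-th Fourier mode ĥ_n(y) = ∫₀¹ h(x+iy) e^{−2πinx} dx satisfies |ĥ_n(y)| ≤ C·( y^s + c_s·y^{1−s} ), where c_s = √π · Γ(s − 1/2) · ζ(2s − 1) / ( Γ(s) · ζ(2s) ). In particular, ĥ_n(y) = O(y^{1−s}) as y → 0⁺. -/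
open Real MeasureTheory

/-- Riemann zeta function for real arguments `s > 1`, as a sum. -/
noncomputable def zetaR (s : ℝ) : ℝ := ∑' n : ℕ, 1 / ((n : ℝ) + 1) ^ s

lemma aux_gauss (u : ℝ) (hu : 0 < u) :
    ∫⁻ x : ℝ, ENNReal.ofReal (Real.exp (-u * x ^ 2)) = ENNReal.ofReal (√(π / u)) := by
  rw [← integral_gaussian, ofReal_integral_eq_lintegral_ofReal]
  · exact integrable_exp_neg_mul_sq hu
  · exact Filter.Eventually.of_forall fun x => (Real.exp_pos _).le

lemma aux_gamma (a r : ℝ) (ha : 0 < a) (hr : 0 < r) :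
    ∫⁻ t in Set.Ioi (0:ℝ), ENNReal.ofReal (t ^ (a - 1) * Real.exp (-(r * t)))
      = ENNReal.ofReal ((1 / r) ^ a * Real.Gamma a) := by
  rw [← Real.integral_rpow_mul_exp_neg_mul_Ioi ha hr, ofReal_integral_eq_lintegral_ofReal]
  · have := integrableOn_rpow_mul_exp_neg_mul_rpow (s := a - 1) (p := 1) (b := r)
      (by linarith) one_pos hr
    refine this.congr_fun (fun t ht => ?_) measurableSet_Ioi
    simp
  · refine (ae_restrict_mem measurableSet_Ioi).mono fun t ht => ?_
    have : (0:ℝ) < t := ht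
    simp only [Pi.zero_apply]
    positivity

/-- The basic integral `∫ (x²+y²)^(-s) dx`. -/
lemma aux_J (s y : ℝ) (hs : 1 < s) (hy : 0 < y) :
    ∫⁻ x : ℝ, ENNReal.ofReal ((x ^ 2 + y ^ 2) ^ (-s)) =
      ENNReal.ofReal (√π * Real.Gamma (s - 1 / 2) / Real.Gamma s * y ^ (1 - 2 * s)) := by
  have hG : 0 < Real.Gamma s := Real.Gamma_pos_of_pos (by linarith)
  have hG' : 0 < Real.Gamma (s - 1/2) := Real.Gamma_pos_of_pos (by linarith)
  have key : ∫⁻ x : ℝ, ∫⁻ t in Set.Ioi (0:ℝ),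
        ENNReal.ofReal (t ^ (s - 1) * Real.exp (-((x ^ 2 + y ^ 2) * t)))
      = ∫⁻ t in Set.Ioi (0:ℝ), ∫⁻ x : ℝ,
        ENNReal.ofReal (t ^ (s - 1) * Real.exp (-((x ^ 2 + y ^ 2) * t))) := by
    apply lintegral_lintegral_swap
    apply Measurable.aemeasurable
    unfold Function.uncurry
    fun_prop
  have hL : ∀ x : ℝ, ∫⁻ t in Set.Ioi (0:ℝ),
        ENNReal.ofReal (t ^ (s - 1) * Real.exp (-((x ^ 2 + y ^ 2) * t)))
      = ENNReal.ofReal (Real.Gamma s) * ENNReal.ofReal ((x ^ 2 + y ^ 2) ^ (-s)) := by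
    intro x
    have hp : 0 < x ^ 2 + y ^ 2 := by positivity
    rw [aux_gamma s _ (by linarith) hp, ← ENNReal.ofReal_mul hG.le]
    congr 1
    rw [mul_comm, one_div, Real.inv_rpow hp.le, Real.rpow_neg hp.le]
  have hR : ∫⁻ t in Set.Ioi (0:ℝ), ∫⁻ x : ℝ,
        ENNReal.ofReal (t ^ (s - 1) * Real.exp (-((x ^ 2 + y ^ 2) * t)))
      = ENNReal.ofReal (√π) * ENNReal.ofReal ((1 / y ^ 2) ^ (s - 1/2) * Real.Gamma (s - 1/2)) := by
    rw [← aux_gamma (s - 1/2) (y ^ 2) (by linarith) (by positivity),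
      ← lintegral_const_mul' _ _ ENNReal.ofReal_ne_top]
    refine setLIntegral_congr_fun measurableSet_Ioi fun t ht => ?_
    have ht : (0:ℝ) < t := ht
    have e : ∀ x : ℝ, ENNReal.ofReal (t ^ (s - 1) * Real.exp (-((x ^ 2 + y ^ 2) * t)))
        = ENNReal.ofReal (t ^ (s - 1) * Real.exp (-(y ^ 2 * t))) *
          ENNReal.ofReal (Real.exp (-t * x ^ 2)) := by
      intro x
      rw [← ENNReal.ofReal_mul (by positivity), mul_assoc, ← Real.exp_add]
      congr 3
      ring
    simp only [e]
    rw [lintegral_const_mul' _ _ ENNReal.ofReal_ne_top, aux_gauss t ht,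
      ← ENNReal.ofReal_mul (by positivity), ← ENNReal.ofReal_mul (by positivity)]
    congr 1
    have : t ^ (s - 1) = t ^ (s - 1/2 - 1) * √t := by
      rw [Real.sqrt_eq_rpow, ← Real.rpow_add ht]
      congr 1; ring
    rw [this, Real.sqrt_div' _ ht.le]
    have := (Real.sqrt_pos.2 ht).ne'
    field_simp
  simp only [hL] at key
  rw [hR, lintegral_const_mul' _ _ ENNReal.ofReal_ne_top] at key
  have hG0 : ENNReal.ofReal (Real.Gamma s) ≠ 0 := by simpa using hG
  rw [← ENNReal.mul_right_inj hG0 ENNReal.ofReal_ne_top, key,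
    ← ENNReal.ofReal_mul (by positivity), ← ENNReal.ofReal_mul (by positivity)]
  congr 1
  have : ((1 / y ^ 2) ^ (s - 1/2) : ℝ) = y ^ (1 - 2 * s) := by
    rw [one_div, Real.inv_rpow (by positivity), ← Real.rpow_neg (by positivity),
      ← Real.rpow_natCast, ← Real.rpow_mul hy.le]
    congr 1; push_cast; ring
  rw [this]
  field_simp

/-- Unfolding over integer translates. -/
lemma aux_unfold (K : ℝ → ENNReal) (hK : Measurable K) (a : ℝ) :
    ∑' m : ℤ, ∫⁻ x in Set.Ioc (0:ℝ) 1, K (x + m + a) = ∫⁻ x, K x := by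
  rw [← lintegral_add_right_eq_self K a, ← setLIntegral_univ, ← iUnion_Ioc_intCast ℝ,
    lintegral_iUnion (fun _ => measurableSet_Ioc) (Set.pairwise_disjoint_Ioc_intCast ℝ)]
  refine tsum_congr fun m => ?_
  have := (measurePreserving_add_right (volume : Measure ℝ) (m:ℝ)).setLIntegral_comp_preimage
    (s := Set.Ioc (m:ℝ) (m+1)) measurableSet_Ioc (f := fun x => K (x + a)) (by fun_prop)
  rw [← this]
  simp

/-- The summands of the Eisenstein series. -/
noncomputable def eisTerm (s y : ℝ) (c : ℕ) (d : ℤ) (x : ℝ) : ENNReal :=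
  if Int.gcd c d = 1 then
    ENNReal.ofReal (y ^ s * ((c * x + d) ^ 2 + (c * y) ^ 2) ^ (-s)) else 0

lemma eisTerm_measurable (s y : ℝ) (c : ℕ) (d : ℤ) : Measurable (eisTerm s y c d) := by
  unfold eisTerm
  split_ifs
  · fun_prop
  · fun_prop

lemma aux_totient (c : ℕ) (A : ENNReal) :
    ∑ r : Fin c, (if Int.gcd c (r : ℕ) = 1 then A else 0) = (Nat.totient c : ENNReal) * A := by
  rw [Fin.sum_univ_eq_sum_range (fun r => if Int.gcd c (r : ℕ) = 1 then A else 0),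
    ← Finset.sum_filter, Finset.sum_const, nsmul_eq_mul, Nat.totient_eq_card_coprime]
  simp only [Int.gcd_natCast_natCast, Nat.Coprime]

lemma aux_sum_d (s y : ℝ) (hs : 1 < s) (hy : 0 < y) (c : ℕ) (hc : 0 < c) :
    ∑' d : ℤ, ∫⁻ x in Set.Ioc (0:ℝ) 1, eisTerm s y c d x =
      ENNReal.ofReal (√π * Real.Gamma (s - 1 / 2) / Real.Gamma s * y ^ (1 - s)) *
      ((Nat.totient c : ENNReal) * ENNReal.ofReal ((c : ℝ) ^ (-(2 * s)))) := by
  have : NeZero c := ⟨hc.ne'⟩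
  have hc' : (0:ℝ) < c := by exact_mod_cast hc
  rw [← (Int.divModEquiv c).symm.tsum_eq, ENNReal.tsum_prod', ENNReal.tsum_comm, tsum_fintype]
  have e : ∀ (r : Fin c), ∑' m : ℤ, ∫⁻ x in Set.Ioc (0:ℝ) 1,
      eisTerm s y c ((Int.divModEquiv c).symm (m, r)) x
      = if Int.gcd c (r : ℕ) = 1 then
        ENNReal.ofReal (√π * Real.Gamma (s - 1 / 2) / Real.Gamma s * y ^ (1 - s)) *
          ENNReal.ofReal ((c : ℝ) ^ (-(2 * s))) else 0 := by
    intro r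
    have hd : ∀ m : ℤ, (Int.divModEquiv c).symm (m, r) = (r : ℕ) + c * m := by
      intro m
      simp [Int.divModEquiv_symm_apply, mul_comm, add_comm]
    have hg : ∀ m : ℤ, Int.gcd c ((r : ℕ) + c * m) = Int.gcd c (r : ℕ) := by
      intro m
      simp
    simp only [hd, eisTerm, hg]
    split_ifs with hr
    · have e2 : ∀ (m : ℤ) (x : ℝ),
          ENNReal.ofReal (y ^ s * ((c * x + (((r : ℕ) + c * m : ℤ) : ℝ)) ^ 2 + (c * y) ^ 2) ^ (-s))
          = ENNReal.ofReal (y ^ s * (c : ℝ) ^ (-(2 * s))) *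
            ENNReal.ofReal (((x + m + (r : ℕ) / c) ^ 2 + y ^ 2) ^ (-s)) := by
        intro m x
        rw [← ENNReal.ofReal_mul (by positivity), mul_assoc]
        congr 2
        have : (c : ℝ) ^ (-(2 * s)) = ((c : ℝ) ^ 2) ^ (-s) := by
          rw [← Real.rpow_natCast, ← Real.rpow_mul hc'.le]
          congr 1; push_cast; ring
        rw [this, ← Real.mul_rpow (by positivity) (by positivity)]
        congr 1
        push_cast
        field_simp
        ring
      simp only [e2]
      simp only [lintegral_const_mul' _ _ ENNReal.ofReal_ne_top]
      rw [ENNReal.tsum_mul_left,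
        aux_unfold (fun x => ENNReal.ofReal ((x ^ 2 + y ^ 2) ^ (-s))) (by fun_prop) ((r : ℕ) / c),
        aux_J s y hs hy]
      have hG : 0 < Real.Gamma s := Real.Gamma_pos_of_pos (by linarith)
      have hG' : 0 < Real.Gamma (s - 1/2) := Real.Gamma_pos_of_pos (by linarith)
      rw [← ENNReal.ofReal_mul (by positivity), ← ENNReal.ofReal_mul (by positivity)]
      congr 1
      have : y ^ (1 - s) = y ^ s * y ^ (1 - 2 * s) := by
        rw [← Real.rpow_add hy]; congr 1; ring
      rw [this]; ring
    · simp
  simp only [e]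
  rw [aux_totient]
  ring

/-- Zeta as an extended nonnegative sum. -/
noncomputable def zetaE (t : ℝ) : ENNReal := ∑' n : ℕ+, ENNReal.ofReal ((n : ℝ) ^ (-t))

lemma zetaE_eq (t : ℝ) (ht : 1 < t) : zetaE t = ENNReal.ofReal (zetaR t) := by
  unfold zetaE zetaR
  rw [ENNReal.ofReal_tsum_of_nonneg (fun n => by positivity)]
  · rw [tsum_pnat_eq_tsum_succ (f := fun n : ℕ => ENNReal.ofReal ((n : ℝ) ^ (-t)))]
    refine tsum_congr fun n => ?_
    push_cast
    rw [Real.rpow_neg (by positivity), one_div]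
  · have := (summable_nat_add_iff 1).2 (Real.summable_one_div_nat_rpow.2 ht)
    simpa using this

lemma zetaR_pos (t : ℝ) (ht : 1 < t) : 0 < zetaR t := by
  have h0 : 0 < zetaE t := by
    refine lt_of_lt_of_le ?_ (ENNReal.le_tsum (1 : ℕ+))
    simp
  rw [zetaE_eq t ht] at h0
  simpa using h0

lemma aux_zeta (t : ℝ) :
    zetaE t * (∑' c : ℕ+, (Nat.totient c : ENNReal) * ENNReal.ofReal ((c : ℝ) ^ (-t)))
      = zetaE (t - 1) := by
  unfold zetaE
  rw [← ENNReal.tsum_mul_right]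
  simp only [← ENNReal.tsum_mul_left]
  rw [← ENNReal.tsum_prod (f := fun a c : ℕ+ => ENNReal.ofReal ((a : ℝ) ^ (-t)) *
    ((Nat.totient c : ENNReal) * ENNReal.ofReal ((c : ℝ) ^ (-t)))),
    ← sigmaAntidiagonalEquivProd.tsum_eq, ENNReal.tsum_sigma']
  refine tsum_congr fun n => ?_
  rw [tsum_fintype]
  have e : ∀ b : ↥(Nat.divisorsAntidiagonal (n : ℕ)),
      ENNReal.ofReal (((sigmaAntidiagonalEquivProd ⟨n, b⟩).1 : ℝ) ^ (-t)) *
      ((Nat.totient (sigmaAntidiagonalEquivProd ⟨n, b⟩).2 : ENNReal) *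
        ENNReal.ofReal (((sigmaAntidiagonalEquivProd ⟨n, b⟩).2 : ℝ) ^ (-t)))
      = (Nat.totient b.1.2 : ENNReal) * ENNReal.ofReal ((n : ℝ) ^ (-t)) := by
    rintro ⟨⟨a, c⟩, hb⟩
    have hac := (Nat.mem_divisorsAntidiagonal.1 hb).1
    change ENNReal.ofReal ((a : ℝ) ^ (-t)) *
      ((Nat.totient c : ENNReal) * ENNReal.ofReal ((c : ℝ) ^ (-t))) = _
    have : (n : ℝ) = a * c := by rw [← Nat.cast_mul]; exact_mod_cast hac.symm
    rw [this, Real.mul_rpow (by positivity) (by positivity), ENNReal.ofReal_mul (by positivity)]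
    ring
  rw [Finset.sum_congr rfl (fun b _ => e b), ← Finset.sum_mul, Finset.univ_eq_attach,
    Finset.sum_attach _ (fun b : ℕ × ℕ => (Nat.totient b.2 : ENNReal)),
    Nat.sum_divisorsAntidiagonal' (fun _ j => (Nat.totient j : ENNReal)),
    ← Nat.cast_sum, Nat.sum_totient]
  have hn : (0:ℝ) < n := by exact_mod_cast n.pos
  rw [show (-(t - 1)) = 1 + -t by ring, Real.rpow_add hn, Real.rpow_one,
    ENNReal.ofReal_mul hn.le, ENNReal.ofReal_natCast]

lemma aux_pointwise (s : ℝ) (h : UpperHalfPlane → ℂ)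
    (hinv : ∀ (γ : Matrix.SpecialLinearGroup (Fin 2) ℤ) (z : UpperHalfPlane),
      h (γ • z) = h z)
    (C : ℝ) (hC : 0 < C)
    (hbound : ∀ z : UpperHalfPlane, |z.re| ≤ 1 / 2 → 1 ≤ z.re ^ 2 + z.im ^ 2 →
      ‖h z‖ ≤ C * z.im ^ s) (x y : ℝ) (hy : 0 < y) :
    ‖h ⟨⟨x, y⟩, hy⟩‖ₑ ≤ ENNReal.ofReal C * (ENNReal.ofReal (y ^ s) +
      ∑' c : ℕ+, ∑' d : ℤ, eisTerm s y c d x) := by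
  set z : UpperHalfPlane := ⟨⟨x, y⟩, hy⟩ with hz
  obtain ⟨g, hg1, hg2⟩ := ModularGroup.exists_smul_mem_fd z
  have hb := hbound (g • z) hg2 (by
    rw [Complex.normSq_apply] at hg1
    simpa [sq] using hg1)
  rw [hinv, ModularGroup.im_smul_eq_div_normSq] at hb
  have hcop := ModularGroup.bottom_row_coprime g
  rw [Int.isCoprime_iff_gcd_eq_one] at hcop
  have hden : Complex.normSq (UpperHalfPlane.denom (Matrix.SpecialLinearGroup.toGL
      ((Matrix.SpecialLinearGroup.map (Int.castRingHom ℝ)) g)) z) =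
      ((g 1 0 : ℝ) * x + (g 1 1 : ℝ)) ^ 2 + ((g 1 0 : ℝ) * y) ^ 2 := by
    rw [UpperHalfPlane.denom, Complex.normSq_apply]
    simp [hz]
    ring
  rw [hden] at hb
  have him : z.im = y := rfl
  rw [him] at hb
  generalize g 1 0 = c at *
  generalize g 1 1 = d at *
  rw [← ofReal_norm]
  refine (ENNReal.ofReal_le_ofReal hb).trans ?_
  rw [ENNReal.ofReal_mul hC.le]
  gcongr
  have main : ∀ (k : ℕ+) (e : ℤ), Int.gcd (k : ℕ) e = 1 →
      ((k : ℕ) * x + e) ^ 2 + ((k : ℕ) * y) ^ 2 = ((c : ℝ) * x + d) ^ 2 + ((c : ℝ) * y) ^ 2 →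
      ENNReal.ofReal ((y / (((c : ℝ) * x + d) ^ 2 + ((c : ℝ) * y) ^ 2)) ^ s) ≤
        ENNReal.ofReal (y ^ s) + ∑' c : ℕ+, ∑' d : ℤ, eisTerm s y c d x := by
    intro k e hk he
    refine le_add_left ?_
    refine le_trans (le_trans ?_ (ENNReal.le_tsum e)) (ENNReal.le_tsum k)
    rw [eisTerm, if_pos hk, he, Real.div_rpow hy.le (by positivity),
      Real.rpow_neg (by positivity), div_eq_mul_inv]
  rcases lt_trichotomy c 0 with hc | hc | hc
  · refine main ⟨c.natAbs, by omega⟩ (-d) ?_ ?_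
    · simpa [Int.gcd_def, Int.natAbs_abs] using hcop
    · have : ((c.natAbs : ℕ) : ℝ) = -c := by
        rw [Nat.cast_natAbs, abs_of_neg hc]; simp
      simp only [PNat.mk_coe, this]
      push_cast
      ring
  · subst hc
    have hd : (d : ℝ) ^ 2 = 1 := by
      have : d.natAbs = 1 := by simpa using hcop
      have : d ^ 2 = 1 := by rw [← Int.natAbs_sq, this]; rfl
      exact_mod_cast this
    refine le_add_right ?_
    simp [hd]
  · refine main ⟨c.natAbs, by omega⟩ d ?_ ?_
    · simpa [Int.gcd_def, Int.natAbs_abs] using hcop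
    · have : ((c.natAbs : ℕ) : ℝ) = c := by
        rw [Nat.cast_natAbs, abs_of_pos hc]
      simp only [PNat.mk_coe, this]

/-- bound on Fourier modes of an `SL(2,ℤ)`-invariant function with
moderate growth on the fundamental domain. -/
theorem fourier_mode_bound (s : ℝ) (hs : 1 < s) (h : UpperHalfPlane → ℂ)
    (hcont : Continuous h)
    (hinv : ∀ (γ : Matrix.SpecialLinearGroup (Fin 2) ℤ) (z : UpperHalfPlane),
      h (γ • z) = h z)
    (C : ℝ) (hC : 0 < C)
    (hbound : ∀ z : UpperHalfPlane, |z.re| ≤ 1 / 2 → 1 ≤ z.re ^ 2 + z.im ^ 2 →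
      ‖h z‖ ≤ C * z.im ^ s) :
    ∀ (n : ℤ) (y : ℝ) (hy : 0 < y),
      ‖∫ x in (0:ℝ)..1, h ⟨⟨x, y⟩, hy⟩ * Complex.exp (-2 * π * Complex.I * n * x)‖ ≤
        C * (y ^ s +
          (Real.sqrt π * Real.Gamma (s - 1 / 2) * zetaR (2 * s - 1) /
            (Real.Gamma s * zetaR (2 * s))) * y ^ (1 - s)) := by
  intro n y hy
  have hG : 0 < Real.Gamma s := Real.Gamma_pos_of_pos (by linarith)
  have hG' : 0 < Real.Gamma (s - 1/2) := Real.Gamma_pos_of_pos (by linarith)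
  have hz1 := zetaR_pos (2 * s) (by linarith)
  have hz2 := zetaR_pos (2 * s - 1) (by linarith)
  have hA : (∑' c : ℕ+, (Nat.totient c : ENNReal) * ENNReal.ofReal ((c : ℝ) ^ (-(2 * s))))
      = ENNReal.ofReal (zetaR (2 * s - 1) / zetaR (2 * s)) := by
    have := aux_zeta (2 * s)
    rw [zetaE_eq _ (by linarith), zetaE_eq _ (by linarith)] at this
    have h0 : ENNReal.ofReal (zetaR (2 * s)) ≠ 0 := by simpa using hz1
    rw [← ENNReal.mul_right_inj h0 ENNReal.ofReal_ne_top, this, ← ENNReal.ofReal_mul hz1.le]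
    congr 1
    field_simp
  rw [← ENNReal.ofReal_le_ofReal_iff (by positivity), ofReal_norm,
    intervalIntegral.integral_of_le zero_le_one]
  refine (enorm_integral_le_lintegral_enorm _).trans ?_
  have hle : ∀ x : ℝ, ‖h ⟨⟨x, y⟩, hy⟩ * Complex.exp (-2 * π * Complex.I * n * x)‖ₑ ≤
      ENNReal.ofReal C * (ENNReal.ofReal (y ^ s) +
      ∑' c : ℕ+, ∑' d : ℤ, eisTerm s y c d x) := by
    intro x
    have he : ‖Complex.exp (-2 * π * Complex.I * n * x)‖ₑ = 1 := by
      rw [← ofReal_norm, Complex.norm_exp]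
      simp
    rw [enorm_mul, he, mul_one]
    exact aux_pointwise s h hinv C hC hbound x y hy
  refine (lintegral_mono hle).trans ?_
  rw [lintegral_const_mul' _ _ ENNReal.ofReal_ne_top, lintegral_add_left measurable_const,
    lintegral_tsum (fun c : ℕ+ => (Measurable.tsum
      (fun d => eisTerm_measurable s y c d)).aemeasurable)]
  have e : ∀ c : ℕ+, ∫⁻ x in Set.Ioc (0:ℝ) 1, ∑' d : ℤ, eisTerm s y c d x = _ := fun c =>
    (lintegral_tsum (fun d => (eisTerm_measurable s y c d).aemeasurable)).trans
      (aux_sum_d s y hs hy c c.pos)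
  simp only [e]
  rw [ENNReal.tsum_mul_left, hA, ENNReal.ofReal_mul hC.le, ← ENNReal.ofReal_mul (by positivity)]
  gcongr
  rw [ENNReal.ofReal_add (by positivity) (by positivity)]
  apply le_of_eq
  congr 1
  · simp
  · congr 1
    field_simp
end

section
/- Let n be a nonzero integer, let f be as follows: f(y) = (8·σ₂(|n|)/(9π|n|³)) · ( q⁰(π|n|y)·K₀(2π|n|y) + q¹(π|n|y)·K₁(2π|n|y) ) with q⁰(z) = (90ζ(3) − n²π⁴ + 9z²ζ(3))/z and q¹(z) = (90ζ(3) − n²π⁴ + 54z²ζ(3))/z², and set α = 64·σ₂(|n|)·(n²π⁴ − 90ζ(3)) / (135·|n|^{5/2}·π). Then the function g(y) = f(y) + α·√y·K_{7/2}(2π|n|y) satisfies: g(y) − 4π²σ₂(|n|)/(15·n²·y) remains bounded as y → 0⁺. -/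
open Real

/-- Modified Bessel function `K₀`. -/
noncomputable def K0 (x : ℝ) : ℝ := ∫ t in Set.Ioi (0 : ℝ), Real.exp (-x * Real.cosh t)

/-- Modified Bessel function `K₁`. -/
noncomputable def K1 (x : ℝ) : ℝ :=
  ∫ t in Set.Ioi (0 : ℝ), Real.exp (-x * Real.cosh t) * Real.cosh t

/-- Divisor sum `σ₂(m) = ∑_{d ∣ m} d²`. -/
def sigma2 (m : ℕ) : ℕ := ∑ d ∈ m.divisors, d ^ 2

/-- The coefficient `q⁰`. -/
noncomputable def q0 (n : ℤ) (z : ℝ) : ℝ :=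
  (90 * zetaR 3 - (n : ℝ) ^ 2 * π ^ 4 + 9 * z ^ 2 * zetaR 3) / z

/-- The coefficient `q¹`. -/
noncomputable def q1 (n : ℤ) (z : ℝ) : ℝ :=
  (90 * zetaR 3 - (n : ℝ) ^ 2 * π ^ 4 + 54 * z ^ 2 * zetaR 3) / z ^ 2

/-- The particular solution `f̂^P_{n,0}`. -/
noncomputable def fP (n : ℤ) (y : ℝ) : ℝ :=
  8 * (sigma2 n.natAbs : ℝ) / (9 * π * |(n : ℝ)| ^ 3) *
    (q0 n (π * |(n : ℝ)| * y) * K0 (2 * π * |(n : ℝ)| * y) +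
      q1 n (π * |(n : ℝ)| * y) * K1 (2 * π * |(n : ℝ)| * y))


/-- Modified Bessel function `K_{7/2}`. -/
noncomputable def K7half (x : ℝ) : ℝ :=
  Real.sqrt (π / (2 * x)) * (1 + 6 / x + 15 / x ^ 2 + 15 / x ^ 3) * Real.exp (-x)

/-- The homogeneous-solution coefficient `α_{n,0}`. -/
noncomputable def alphaN0 (n : ℤ) : ℝ :=
  64 * (sigma2 n.natAbs : ℝ) * ((n : ℝ) ^ 2 * π ^ 4 - 90 * zetaR 3) /
    (135 * |(n : ℝ)| ^ ((5 : ℝ) / 2) * π)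


lemma aux_sinh (x : ℝ) (hx : 0 < x) :
    MeasureTheory.IntegrableOn (fun t => Real.exp (-x * Real.cosh t) * Real.sinh t) (Set.Ioi 0) ∧
    ∫ t in Set.Ioi (0:ℝ), Real.exp (-x * Real.cosh t) * Real.sinh t = Real.exp (-x) / x := by
  have hd : ∀ t ∈ Set.Ici (0:ℝ), HasDerivAt (fun t => -(Real.exp (-x * Real.cosh t) / x))
      (Real.exp (-x * Real.cosh t) * Real.sinh t) t := by
    intro t _
    have h := (((Real.hasDerivAt_cosh t).const_mul (-x)).exp.div_const x).neg
    exact h.congr_deriv (by field_simp)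
  have hpos : ∀ t ∈ Set.Ioi (0:ℝ), 0 ≤ Real.exp (-x * Real.cosh t) * Real.sinh t := by
    intro t ht
    have : 0 ≤ Real.sinh t := Real.sinh_nonneg_iff.2 (le_of_lt ht)
    positivity
  have hl : Filter.Tendsto (fun t => -(Real.exp (-x * Real.cosh t) / x)) Filter.atTop (nhds 0) := by
    have h1 : Filter.Tendsto Real.cosh Filter.atTop Filter.atTop := by
      apply Filter.tendsto_atTop_mono' _ _ Filter.tendsto_id
      filter_upwards [Filter.eventually_ge_atTop 0] with t ht
      exact (Real.self_le_sinh_iff.2 ht).trans (Real.sinh_lt_cosh t).le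
    have h2 : Filter.Tendsto (fun t => -x * Real.cosh t) Filter.atTop Filter.atBot :=
      h1.const_mul_atTop_of_neg (by linarith)
    have h3 := ((Real.tendsto_exp_atBot.comp h2).div_const x).neg
    simpa using h3
  refine ⟨MeasureTheory.integrableOn_Ioi_deriv_of_nonneg' hd hpos hl, ?_⟩
  rw [MeasureTheory.integral_Ioi_of_hasDerivAt_of_nonneg' hd hpos hl]
  simp

lemma aux_exp_int (k : ℝ) (hk : 0 < k) :
    MeasureTheory.IntegrableOn (fun t => Real.exp (-k * t)) (Set.Ioi 0) ∧
    ∫ t in Set.Ioi (0:ℝ), Real.exp (-k * t) = 1 / k := by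
  refine ⟨integrableOn_exp_mul_Ioi (by linarith) 0, ?_⟩
  rw [integral_exp_mul_Ioi (by linarith)]
  simp

lemma aux_dom (x k : ℝ) (hx : 0 < x) (hk : 0 < k) :
    MeasureTheory.IntegrableOn (fun t => Real.exp (-x * Real.cosh t) * Real.exp (-k * t))
      (Set.Ioi 0) := by
  refine MeasureTheory.Integrable.mono' (aux_exp_int k hk).1 ?_ ?_
  · apply Continuous.aestronglyMeasurable
    have := Real.continuous_cosh
    fun_prop
  · filter_upwards with t
    rw [Real.norm_eq_abs, abs_of_nonneg (by positivity)]
    have : Real.exp (-x * Real.cosh t) ≤ 1 := by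
      rw [Real.exp_le_one_iff]
      nlinarith [Real.cosh_pos t]
    nlinarith [Real.exp_pos (-k * t)]

lemma bessel (x : ℝ) (hx : 0 < x) : ∃ D ε : ℝ, |D| ≤ 1 ∧ |ε| ≤ 1 ∧
    K1 x = Real.exp (-x) / x + D ∧
    K0 x = (Real.exp (-x) + x / 2 * (1 / 2 + x * ε) - D) * 2 / x := by
  obtain ⟨hs, hsv⟩ := aux_sinh x hx
  have hD := aux_dom x 1 hx one_pos
  have hE := aux_dom x 2 hx two_pos
  obtain ⟨h1, h1v⟩ := aux_exp_int 1 one_pos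
  obtain ⟨h2, h2v⟩ := aux_exp_int 2 two_pos
  have hle : ∀ t, Real.exp (-x * Real.cosh t) ≤ 1 := by
    intro t
    rw [Real.exp_le_one_iff]
    nlinarith [Real.cosh_pos t]
  have hsplit : ∀ t, Real.exp (-x * Real.cosh t) * Real.cosh t =
      Real.exp (-x * Real.cosh t) * Real.sinh t + Real.exp (-x * Real.cosh t) * Real.exp (-1 * t) := by
    intro t
    rw [← mul_add, show -1 * t = -t by ring, ← Real.cosh_sub_sinh]
    ring
  have hK1i : MeasureTheory.IntegrableOn
      (fun t => Real.exp (-x * Real.cosh t) * Real.cosh t) (Set.Ioi 0) := by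
    simp_rw [hsplit]
    exact hs.add hD
  have hK0i : MeasureTheory.IntegrableOn
      (fun t => Real.exp (-x * Real.cosh t)) (Set.Ioi 0) := by
    refine MeasureTheory.Integrable.mono' hK1i ?_ ?_
    · apply Continuous.aestronglyMeasurable
      have := Real.continuous_cosh
      fun_prop
    · filter_upwards with t
      rw [Real.norm_eq_abs, abs_of_nonneg (by positivity)]
      nlinarith [Real.exp_pos (-x * Real.cosh t), Real.one_le_cosh t]
  set D := ∫ t in Set.Ioi (0:ℝ), Real.exp (-x * Real.cosh t) * Real.exp (-1 * t) with hDdef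
  set E := ∫ t in Set.Ioi (0:ℝ), Real.exp (-x * Real.cosh t) * Real.exp (-2 * t) with hEdef
  have hD0 : 0 ≤ D := MeasureTheory.integral_nonneg (fun t => by positivity)
  have hD1 : D ≤ 1 := by
    have : D ≤ ∫ t in Set.Ioi (0:ℝ), Real.exp (-1 * t) := by
      apply MeasureTheory.integral_mono hD h1
      intro t
      show Real.exp (-x * Real.cosh t) * Real.exp (-1 * t) ≤ Real.exp (-1 * t)
      nlinarith [Real.exp_pos (-1 * t), hle t]
    rw [h1v] at this
    linarith
  have hE1 : E ≤ 1 / 2 := by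
    rw [← h2v]
    apply MeasureTheory.integral_mono hE h2
    intro t
    show Real.exp (-x * Real.cosh t) * Real.exp (-2 * t) ≤ Real.exp (-2 * t)
    nlinarith [Real.exp_pos (-2 * t), hle t]
  have hE0 : 1 / 2 - x ≤ E := by
    have : ∫ t in Set.Ioi (0:ℝ), (Real.exp (-2 * t) - x * Real.exp (-1 * t)) ≤ E := by
      apply MeasureTheory.setIntegral_mono_on (h2.sub (h1.const_mul x)) hE measurableSet_Ioi
      intro t ht
      have ht : 0 < t := ht
      have e1 := Real.add_one_le_exp (-x * Real.cosh t)
      have e2 : Real.exp (-2 * t) = Real.exp (-1 * t) * Real.exp (-1 * t) := by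
        rw [← Real.exp_add]; ring_nf
      have e3 : Real.cosh t * Real.exp (-1 * t) ≤ 1 := by
        have : Real.exp (-1 * t) = Real.exp (-t) := by ring_nf
        rw [this, Real.cosh_eq]
        have h4 : Real.exp t * Real.exp (-t) = 1 := by rw [← Real.exp_add]; simp
        have h5 : Real.exp (-t) ≤ 1 := by rw [Real.exp_le_one_iff]; linarith
        nlinarith [Real.exp_pos (-t)]
      have p := Real.exp_pos (-1 * t)
      have e4 : Real.cosh t * Real.exp (-2 * t) ≤ Real.exp (-1 * t) := by
        rw [e2]; nlinarith
      have e5 := mul_le_mul_of_nonneg_right e1 (Real.exp_pos (-2 * t)).le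
      have e6 := mul_le_mul_of_nonneg_left e4 hx.le
      show Real.exp (-2 * t) - x * Real.exp (-1 * t) ≤ Real.exp (-x * Real.cosh t) * Real.exp (-2 * t)
      nlinarith
    rw [MeasureTheory.integral_sub h2 (h1.const_mul x), MeasureTheory.integral_const_mul, h1v, h2v] at this
    linarith
  have hK1 : K1 x = Real.exp (-x) / x + D := by
    unfold K1
    simp_rw [hsplit]
    rw [MeasureTheory.integral_add hs hD, hsv]
  have hparts : -(x / 2) * K0 x + x / 2 * E - D = - Real.exp (-x) := by
    have hd : ∀ t ∈ Set.Ici (0:ℝ), HasDerivAt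
        (fun t => Real.exp (-x * Real.cosh t) * Real.exp (-1 * t))
        (-(x / 2) * Real.exp (-x * Real.cosh t)
          + x / 2 * (Real.exp (-x * Real.cosh t) * Real.exp (-2 * t))
          - Real.exp (-x * Real.cosh t) * Real.exp (-1 * t)) t := by
      intro t _
      have h := ((Real.hasDerivAt_cosh t).const_mul (-x)).exp.mul
        (((hasDerivAt_id t).const_mul (-1)).exp)
      refine h.congr_deriv ?_
      have e2 : Real.exp (-2 * t) = Real.exp (-t) * Real.exp (-t) := by
        rw [← Real.exp_add]; ring_nf
      have e3 : Real.exp (-1 * t) = Real.exp (-t) := by ring_nf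
      have h4 : Real.exp t * Real.exp (-t) = 1 := by rw [← Real.exp_add]; simp
      simp only [id, mul_one]
      rw [e2, e3, Real.sinh_eq]
      linear_combination (-x / 2 * Real.exp (-x * Real.cosh t)) * h4
    have hi1 := hK0i.const_mul (-(x / 2))
    have hi2 := hE.const_mul (x / 2)
    have hl : Filter.Tendsto (fun t => Real.exp (-x * Real.cosh t) * Real.exp (-1 * t))
        Filter.atTop (nhds 0) := by
      have h3 : Filter.Tendsto (fun t : ℝ => Real.exp (-1 * t)) Filter.atTop (nhds 0) := by
        simpa using Real.tendsto_exp_neg_atTop_nhds_zero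
      refine squeeze_zero (fun t => by positivity) (fun t => ?_) h3
      nlinarith [Real.exp_pos (-1 * t), hle t]
    have key := MeasureTheory.integral_Ioi_of_hasDerivAt_of_tendsto' hd ((hi1.add hi2).sub hD) hl
    have s1 := MeasureTheory.integral_sub (hi1.add hi2) hD
    have s2 := MeasureTheory.integral_add hi1 hi2
    simp only [Pi.add_apply] at s1
    rw [s1, s2, MeasureTheory.integral_const_mul, MeasureTheory.integral_const_mul] at key
    simp only [Real.cosh_zero, mul_one, mul_zero, Real.exp_zero, zero_sub] at key
    exact key
  refine ⟨D, (E - 1 / 2) / x, abs_le.2 ⟨by linarith, hD1⟩, ?_, hK1, ?_⟩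
  · rw [abs_div, abs_of_pos hx, div_le_one hx, abs_le]
    constructor <;> linarith
  · field_simp
    field_simp at hparts
    linarith

lemma exp_rho (x : ℝ) (hx : 0 < x) (hx1 : x ≤ 1) :
    ∃ ρ : ℝ, |ρ| ≤ 1 ∧ Real.exp (-x) = 1 - x + x ^ 2 / 2 + x ^ 3 * ρ := by
  have h := Real.exp_bound (x := -x) (by rw [abs_neg, abs_of_pos hx]; exact hx1) (n := 3) (by norm_num)
  rw [abs_neg, abs_of_pos hx] at h
  norm_num [Finset.sum_range_succ, Nat.factorial] at h
  refine ⟨(Real.exp (-x) - (1 - x + x ^ 2 / 2)) / x ^ 3, ?_, by field_simp; ring⟩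
  have hp : 0 < x ^ 3 := by positivity
  rw [abs_div, abs_of_pos hp, div_le_one hp]
  have : Real.exp (-x) - (1 - x + x ^ 2 / 2) = Real.exp (-x) - (1 + -x + x ^ 2 / 2) := by ring
  rw [this]
  linarith

lemma main_bound (x : ℝ) (hx : 0 < x) (hx1 : x ≤ 1) :
    |K0 x * (2 / x) + K1 x * (4 / x ^ 2) - 4 / x ^ 3 + 1 / x| ≤ 12 ∧
    |x / 2 * K0 x| ≤ 10 ∧ |K1 x - 1 / x| ≤ 10 ∧
    |(1 + 6 / x + 15 / x ^ 2 + 15 / x ^ 3) * Real.exp (-x) - 15 / x ^ 3 + 3 / (2 * x)| ≤ 50 := by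
  obtain ⟨D, ε, hD, hε, h1, h0⟩ := bessel x hx
  obtain ⟨ρ, hρ, he⟩ := exp_rho x hx hx1
  rw [he] at h1 h0
  have hb : ∀ k : ℕ, |x ^ k| ≤ 1 := fun k => by
    rw [abs_of_pos (by positivity)]; exact pow_le_one₀ hx.le hx1
  have hm : ∀ (k : ℕ) (r : ℝ), |r| ≤ 1 → |x ^ k * r| ≤ 1 := fun k r hr => by
    rw [abs_mul]; exact mul_le_one₀ (hb k) (abs_nonneg _) hr
  have b1 := abs_le.1 (hb 1)
  have b2 := abs_le.1 (hb 2)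
  have m1 := abs_le.1 (hm 1 ρ hρ)
  have m2 := abs_le.1 (hm 2 ρ hρ)
  have m3 := abs_le.1 (hm 3 ρ hρ)
  have n2 := abs_le.1 (hm 2 ε hε)
  rw [abs_le] at hD hε hρ
  refine ⟨?_, ?_, ?_, ?_⟩
  · have : K0 x * (2 / x) + K1 x * (4 / x ^ 2) - 4 / x ^ 3 + 1 / x
        = 4 * (1 / 2 + x ^ 1 * ρ + ε / 2 + ρ) := by
      rw [h0, h1]; field_simp; ring
    rw [this, abs_le]; constructor <;> linarith
  · have : x / 2 * K0 x = 1 - x ^ 1 + x ^ 2 / 2 + x ^ 3 * ρ + x ^ 1 / 4 + (x ^ 2 * ε) / 2 - D := by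
      rw [h0]; field_simp; ring
    rw [this, abs_le]; constructor <;> linarith
  · have : K1 x - 1 / x = -1 + x ^ 1 / 2 + x ^ 2 * ρ + D := by
      rw [h1]; field_simp; ring
    rw [this, abs_le]; constructor <;> linarith
  · have : (1 + 6 / x + 15 / x ^ 2 + 15 / x ^ 3) * Real.exp (-x) - 15 / x ^ 3 + 3 / (2 * x)
        = 5 / 2 + 2 * x ^ 1 + x ^ 2 / 2 + 15 * ρ + 15 * (x ^ 1 * ρ) + 6 * (x ^ 2 * ρ) + x ^ 3 * ρ := by
      rw [he]; field_simp; ring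
    rw [this, abs_le]; constructor <;> linarith

/-- after adding the homogeneous solution with coefficient `α_{n,0}`,
the mode `f̂_{n,0}` differs from `4π²σ₂(|n|)/(15 n² y)` by a bounded quantity as `y → 0⁺`. -/
theorem mode_n0_small_y (n : ℤ) (hn : n ≠ 0) :
    ∃ C : ℝ, ∀ᶠ y in nhdsWithin (0 : ℝ) (Set.Ioi 0),
      |(fP n y + alphaN0 n * Real.sqrt y * K7half (2 * π * |(n : ℝ)| * y)) -
          4 * π ^ 2 * (sigma2 n.natAbs : ℝ) / (15 * (n : ℝ) ^ 2 * y)| ≤ C := by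
  have hN : 0 < |(n : ℝ)| := abs_pos.2 (by exact_mod_cast hn)
  have hsq : (n : ℝ) ^ 2 = |(n : ℝ)| ^ 2 := (sq_abs _).symm
  unfold fP alphaN0 q0 q1 K7half
  rw [hsq]
  generalize |(n : ℝ)| = N at *
  generalize (sigma2 n.natAbs : ℝ) = s
  generalize zetaR 3 = Z
  have hpi := Real.pi_pos
  set c : ℝ := 8 * s / (9 * π * N ^ 3) with hc
  set A : ℝ := 90 * Z - N ^ 2 * π ^ 4 with hA
  refine ⟨|c * A| * 12 + |c * 9 * Z| * 10 + |c * 54 * Z| * 10 + |-(4 / 15) * c * A| * 50, ?_⟩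
  have hev : Set.Ioc 0 (1 / (2 * π * N)) ∈ nhdsWithin (0:ℝ) (Set.Ioi 0) :=
    Ioc_mem_nhdsGT (by positivity)
  filter_upwards [hev] with y hy
  obtain ⟨hy0, hy1⟩ := hy
  rw [le_div_iff₀ (by positivity)] at hy1
  have hx : 0 < 2 * π * N * y := by positivity
  obtain ⟨t1, t2, t3, t4⟩ := main_bound (2 * π * N * y) hx (by linarith)
  have hsqrt : Real.sqrt y * Real.sqrt (π / (2 * (2 * π * N * y))) = 1 / (2 * Real.sqrt N) := by
    rw [← Real.sqrt_mul hy0.le]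
    have : y * (π / (2 * (2 * π * N * y))) = (1 / (2 * Real.sqrt N)) ^ 2 := by
      rw [div_pow, mul_pow, Real.sq_sqrt hN.le]; field_simp
    rw [this, Real.sqrt_sq (by positivity)]
  have hpow : N ^ ((5:ℝ) / 2) = N ^ 2 * Real.sqrt N := by
    rw [Real.sqrt_eq_rpow, ← Real.rpow_natCast, ← Real.rpow_add hN]; norm_num
  have hα : 64 * s * (N ^ 2 * π ^ 4 - 90 * Z) / (135 * N ^ ((5:ℝ) / 2) * π) * Real.sqrt y *
      Real.sqrt (π / (2 * (2 * π * N * y))) = -(4 / 15) * c * A := by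
    rw [mul_assoc, hsqrt, hpow, hc, hA]
    have hs : Real.sqrt N ^ 2 = N := Real.sq_sqrt hN.le
    have hs0 : 0 < Real.sqrt N := Real.sqrt_pos.2 hN
    generalize Real.sqrt N = w at *
    subst hs
    field_simp
    ring
  generalize hk0 : K0 (2 * π * N * y) = k0 at *
  generalize hk1 : K1 (2 * π * N * y) = k1 at *
  generalize hex : Real.exp (-(2 * π * N * y)) = e at *
  have hα2 : ∀ P : ℝ, 64 * s * (N ^ 2 * π ^ 4 - 90 * Z) / (135 * N ^ ((5:ℝ) / 2) * π) * Real.sqrt y *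
      (Real.sqrt (π / (2 * (2 * π * N * y))) * P * e) = -(4 / 15) * c * A * (P * e) := by
    intro P; rw [← hα]; ring
  rw [hα2]
  have hmain : 4 * π ^ 2 * s / (15 * N ^ 2 * y) =
      c * (3 * N ^ 2 * π ^ 4 / 10) / (π * N * y) := by
    rw [hc]; field_simp; ring
  rw [hmain]
  have hN4 : N ^ 2 * π ^ 4 = 90 * Z - A := by rw [hA]; ring
  have hN4' : 3 * N ^ 2 * π ^ 4 = 3 * (90 * Z - A) := by rw [hA]; ring
  rw [hN4']
  clear_value c A
  have hz : π * N * y = (2 * π * N * y) / 2 := by ring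
  rw [hz]
  clear hy1 hsqrt hα hα2 hmain hk0 hk1 hex hN4 hN4' hz
  generalize 2 * π * N * y = x at *
  have : c * ((A + 9 * (x / 2) ^ 2 * Z) / (x / 2) * k0 + (A + 54 * (x / 2) ^ 2 * Z) / (x / 2) ^ 2 * k1) +
      -(4 / 15) * c * A * ((1 + 6 / x + 15 / x ^ 2 + 15 / x ^ 3) * e) -
      c * (3 * (90 * Z - A) / 10) / (x / 2) =
      c * A * (k0 * (2 / x) + k1 * (4 / x ^ 2) - 4 / x ^ 3 + 1 / x) + c * 9 * Z * (x / 2 * k0)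
      + c * 54 * Z * (k1 - 1 / x)
      + -(4 / 15) * c * A *
        ((1 + 6 / x + 15 / x ^ 2 + 15 / x ^ 3) * e - 15 / x ^ 3 + 3 / (2 * x)) := by
    field_simp
    ring
  rw [this]
  refine (abs_add_le _ _).trans (add_le_add ((abs_add_le _ _).trans (add_le_add
    ((abs_add_le _ _).trans (add_le_add ?_ ?_)) ?_)) ?_) <;>
  · rw [abs_mul]; gcongr
end

section
/- Let n₁ and n₂ be nonzero integers with n := n₁ + n₂ ≠ 0. Define q⁰⁰(z) = sgn(n₁n₂)·( −4z·n₁n₂·(n₁² + n₂² − 6n₁n₂) − (30/z)·n₁n₂·(n₁ − n₂)² ); q⁰¹(z) = ε₁·( −n₁·(13n₁²n₂ − 65n₁n₂² + n₁³ + 19n₂³) + (30/z²)·n₁n₂²·(n₁ − n₂) ), where ε₁ = 1 if n₁n₂ > 0 and ε₁ = sgn(n₁)·sgn(n₁+n₂) if n₁n₂ < 0; q¹⁰(z) = ε₂·( −n₂·(13n₂²n₁ − 65n₂n₁² + n₂³ + 19n₁³) + (30/z²)·n₂n₁²·(n₂ − n₁) ), where ε₂ = 1 if n₁n₂ > 0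 and ε₂ = sgn(n₂)·sgn(n₁+n₂) if n₁n₂ < 0; and q¹¹(z) = −4z·n₁n₂·(n₁² + n₂² − 6n₁n₂) − (14n₁³n₂ − 94n₁²n₂² + 14n₁n₂³ + n₁⁴ + n₂⁴)/z. Then the function f(y) = (32π·σ₂(|n₁|)·σ₂(|n₂|)) / (3·|n₁n₂|·|n|⁵) · ∑_{i,j ∈ {0,1}} q^{ij}(π|n|y)·K_i(2π|n₁|y)·K_j(2π|n₂|y) satisfies y²·f''(y) − (12 + 4π²n²y²)·f(y) = −64π²·y·(σ₂(|n₁|)·σ₂(|n₂|)/|n₁n₂|)·K₁(2π|n₁|y)·K₁(2π|n₂|y) for all y > 0. -/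
open Real

/-- The coefficient `q⁰⁰`. -/
noncomputable def q00 (n₁ n₂ : ℤ) (z : ℝ) : ℝ :=
  ((n₁ * n₂).sign : ℝ) *
    (-4 * z * ((n₁ : ℝ) * n₂) * ((n₁ : ℝ) ^ 2 + (n₂ : ℝ) ^ 2 - 6 * n₁ * n₂) -
      30 / z * ((n₁ : ℝ) * n₂) * ((n₁ : ℝ) - n₂) ^ 2)

/-- The sign `ε₁`. -/
noncomputable def eps1 (n₁ n₂ : ℤ) : ℝ :=
  if 0 < n₁ * n₂ then 1 else ((n₁.sign * (n₁ + n₂).sign : ℤ) : ℝ)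

/-- The sign `ε₂`. -/
noncomputable def eps2 (n₁ n₂ : ℤ) : ℝ :=
  if 0 < n₁ * n₂ then 1 else ((n₂.sign * (n₁ + n₂).sign : ℤ) : ℝ)

/-- The coefficient `q⁰¹`. -/
noncomputable def q01 (n₁ n₂ : ℤ) (z : ℝ) : ℝ :=
  eps1 n₁ n₂ *
    (-(n₁ : ℝ) * (13 * (n₁ : ℝ) ^ 2 * n₂ - 65 * (n₁ : ℝ) * (n₂ : ℝ) ^ 2 + (n₁ : ℝ) ^ 3 +
        19 * (n₂ : ℝ) ^ 3) +
      30 / z ^ 2 * ((n₁ : ℝ) * (n₂ : ℝ) ^ 2) * ((n₁ : ℝ) - n₂))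

/-- The coefficient `q¹⁰`. -/
noncomputable def q10 (n₁ n₂ : ℤ) (z : ℝ) : ℝ :=
  eps2 n₁ n₂ *
    (-(n₂ : ℝ) * (13 * (n₂ : ℝ) ^ 2 * n₁ - 65 * (n₂ : ℝ) * (n₁ : ℝ) ^ 2 + (n₂ : ℝ) ^ 3 +
        19 * (n₁ : ℝ) ^ 3) +
      30 / z ^ 2 * ((n₂ : ℝ) * (n₁ : ℝ) ^ 2) * ((n₂ : ℝ) - n₁))

/-- The coefficient `q¹¹`. -/
noncomputable def q11 (n₁ n₂ : ℤ) (z : ℝ) : ℝ :=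
  -4 * z * ((n₁ : ℝ) * n₂) * ((n₁ : ℝ) ^ 2 + (n₂ : ℝ) ^ 2 - 6 * n₁ * n₂) -
    (14 * (n₁ : ℝ) ^ 3 * n₂ - 94 * (n₁ : ℝ) ^ 2 * (n₂ : ℝ) ^ 2 + 14 * (n₁ : ℝ) * (n₂ : ℝ) ^ 3 +
      (n₁ : ℝ) ^ 4 + (n₂ : ℝ) ^ 4) / z

/-- The particular solution `f̂^P_{n₁,n₂}` for `n₁, n₂ ≠ 0`, `n₁ + n₂ ≠ 0`. -/
noncomputable def fP2 (n₁ n₂ : ℤ) (y : ℝ) : ℝ :=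
  32 * π * (sigma2 n₁.natAbs : ℝ) * (sigma2 n₂.natAbs : ℝ) /
      (3 * |((n₁ * n₂ : ℤ) : ℝ)| * |((n₁ + n₂ : ℤ) : ℝ)| ^ 5) *
    (q00 n₁ n₂ (π * |((n₁ + n₂ : ℤ) : ℝ)| * y) * K0 (2 * π * |(n₁ : ℝ)| * y) *
        K0 (2 * π * |(n₂ : ℝ)| * y) +
      q01 n₁ n₂ (π * |((n₁ + n₂ : ℤ) : ℝ)| * y) * K0 (2 * π * |(n₁ : ℝ)| * y) *
        K1 (2 * π * |(n₂ : ℝ)| * y) +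
      q10 n₁ n₂ (π * |((n₁ + n₂ : ℤ) : ℝ)| * y) * K1 (2 * π * |(n₁ : ℝ)| * y) *
        K0 (2 * π * |(n₂ : ℝ)| * y) +
      q11 n₁ n₂ (π * |((n₁ + n₂ : ℤ) : ℝ)| * y) * K1 (2 * π * |(n₁ : ℝ)| * y) *
        K1 (2 * π * |(n₂ : ℝ)| * y))

open MeasureTheory Filter Topology

namespace ModeODE

/-- The moment integrals `∫ e^{-x cosh t} cosh^k t`. -/
noncomputable def J (k : ℕ) (x : ℝ) : ℝ :=
  ∫ t in Set.Ioi (0 : ℝ), Real.exp (-x * Real.cosh t) * Real.cosh t ^ k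

lemma J_bound (k : ℕ) {c : ℝ} (hc : 0 < c) (t : ℝ) :
    Real.exp (-c * Real.cosh t) * Real.cosh t ^ k
      ≤ 2 * ((k + 1).factorial / c ^ (k + 1)) * Real.exp (-t) := by
  have hcosh : 0 < Real.cosh t := Real.cosh_pos t
  have h1 := Real.pow_div_factorial_le_exp (c * Real.cosh t) (by positivity) (k + 1)
  have h2 : Real.exp t ≤ 2 * Real.cosh t := by
    rw [Real.cosh_eq]; have := Real.exp_pos (-t); linarith
  have hf : (0 : ℝ) < (k + 1).factorial := by positivity
  rw [div_le_iff₀ hf, mul_pow] at h1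
  have e1 : Real.exp (-c * Real.cosh t) = (Real.exp (c * Real.cosh t))⁻¹ := by
    rw [← Real.exp_neg]; ring_nf
  rw [e1, Real.exp_neg]
  have hE := Real.exp_pos (c * Real.cosh t)
  have hT := Real.exp_pos t
  have key : Real.exp t * (c ^ (k + 1) * Real.cosh t ^ k)
      ≤ 2 * (Real.exp (c * Real.cosh t) * (k + 1).factorial) := by
    calc Real.exp t * (c ^ (k + 1) * Real.cosh t ^ k)
        ≤ (2 * Real.cosh t) * (c ^ (k + 1) * Real.cosh t ^ k) := by gcongr
      _ = 2 * (c ^ (k + 1) * Real.cosh t ^ (k + 1)) := by ring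
      _ ≤ _ := by gcongr
  have e2 : (Real.exp (c * Real.cosh t))⁻¹ * Real.cosh t ^ k
      = (Real.exp t * (c ^ (k + 1) * Real.cosh t ^ k)) /
        (Real.exp (c * Real.cosh t) * Real.exp t * c ^ (k + 1)) := by
    field_simp
  have e3 : 2 * (((k + 1).factorial : ℝ) / c ^ (k + 1)) * (Real.exp t)⁻¹
      = (2 * (Real.exp (c * Real.cosh t) * (k + 1).factorial)) /
        (Real.exp (c * Real.cosh t) * Real.exp t * c ^ (k + 1)) := by
    field_simp
  rw [e2, e3]
  gcongr

lemma J_cont (k : ℕ) (c : ℝ) :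
    Continuous fun t : ℝ => Real.exp (-c * Real.cosh t) * Real.cosh t ^ k := by
  fun_prop

lemma J_int (k : ℕ) {c : ℝ} (hc : 0 < c) :
    IntegrableOn (fun t : ℝ => Real.exp (-c * Real.cosh t) * Real.cosh t ^ k)
      (Set.Ioi (0 : ℝ)) := by
  refine Integrable.mono' ((integrableOn_exp_neg_Ioi 0).const_mul
    (2 * ((k + 1).factorial / c ^ (k + 1)))) (J_cont k c).aestronglyMeasurable ?_
  refine ae_of_all _ fun t => ?_
  have := Real.cosh_pos t
  rw [Real.norm_of_nonneg (by positivity)]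
  exact J_bound k hc t

lemma J_deriv (k : ℕ) {x : ℝ} (hx : 0 < x) : HasDerivAt (J k) (-(J (k + 1) x)) x := by
  have h := hasDerivAt_integral_of_dominated_loc_of_deriv_le
    (μ := volume.restrict (Set.Ioi (0 : ℝ)))
    (F := fun (x t : ℝ) => Real.exp (-x * Real.cosh t) * Real.cosh t ^ k)
    (F' := fun (x t : ℝ) => -(Real.exp (-x * Real.cosh t) * Real.cosh t ^ (k + 1)))
    (x₀ := x) (s := Set.Ioi (x / 2))
    (bound := fun t => Real.exp (-(x / 2) * Real.cosh t) * Real.cosh t ^ (k + 1))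
    (Ioi_mem_nhds (by linarith))
    (Eventually.of_forall fun y => (J_cont k y).aestronglyMeasurable)
    (J_int k hx) (J_cont (k + 1) x).neg.aestronglyMeasurable
    (ae_of_all _ fun t y hy => by
      have := Real.cosh_pos t
      rw [norm_neg, Real.norm_of_nonneg (by positivity)]
      have hy' : x / 2 < y := hy
      gcongr)
    (J_int (k + 1) (by linarith))
    (ae_of_all _ fun t y hy => by
      have h1 : HasDerivAt (fun y : ℝ => -y * Real.cosh t) (-1 * Real.cosh t) y :=
        (hasDerivAt_id y).neg.mul_const _
      have h2 := (h1.exp).mul_const (Real.cosh t ^ k)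
      refine h2.congr_deriv ?_
      ring)
  have h2 := h.2
  rw [integral_neg] at h2
  exact h2

lemma J_rec {x : ℝ} (hx : 0 < x) : J 2 x = J 0 x + J 1 x / x := by
  have hi : IntegrableOn (fun t : ℝ => Real.exp (-x * Real.cosh t) * Real.cosh t ^ 1
      - x * (Real.exp (-x * Real.cosh t) * Real.cosh t ^ 2)
      + x * (Real.exp (-x * Real.cosh t) * Real.cosh t ^ 0)) (Set.Ioi (0 : ℝ)) :=
    ((J_int 1 hx).sub ((J_int 2 hx).const_mul x)).add ((J_int 0 hx).const_mul x)
  have hd : ∀ t ∈ Set.Ici (0 : ℝ), HasDerivAt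
      (fun t : ℝ => Real.sinh t * Real.exp (-x * Real.cosh t))
      (Real.exp (-x * Real.cosh t) * Real.cosh t ^ 1
      - x * (Real.exp (-x * Real.cosh t) * Real.cosh t ^ 2)
      + x * (Real.exp (-x * Real.cosh t) * Real.cosh t ^ 0)) t := by
    intro t _
    have h1 := (Real.hasDerivAt_sinh t).mul (((Real.hasDerivAt_cosh t).const_mul (-x)).exp)
    refine h1.congr_deriv ?_
    rw [Real.cosh_sq t]; ring
  have hl : Tendsto (fun t : ℝ => Real.sinh t * Real.exp (-x * Real.cosh t)) atTop (𝓝 0) := by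
    have hb : Tendsto (fun t : ℝ => 2 * ((1 + 1).factorial / x ^ (1 + 1)) * Real.exp (-t))
        atTop (𝓝 0) := by
      have h0 := (Real.tendsto_exp_neg_atTop_nhds_zero).const_mul
        (2 * (((1 + 1).factorial : ℝ) / x ^ (1 + 1)))
      rwa [mul_zero] at h0
    refine squeeze_zero_norm (fun t => ?_) hb
    refine le_trans ?_ (J_bound 1 hx t)
    rw [norm_mul, Real.norm_of_nonneg (Real.exp_pos _).le, mul_comm, pow_one]
    gcongr
    rw [Real.norm_eq_abs]
    have h1 := Real.cosh_sq t
    have h2 := Real.cosh_pos t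
    exact abs_le_of_sq_le_sq (by linarith) h2.le
  have h := integral_Ioi_of_hasDerivAt_of_tendsto' hd hi hl
  have hsub : IntegrableOn (fun t : ℝ => Real.exp (-x * Real.cosh t) * Real.cosh t ^ 1
      - x * (Real.exp (-x * Real.cosh t) * Real.cosh t ^ 2)) (Set.Ioi (0 : ℝ)) :=
    (J_int 1 hx).sub ((J_int 2 hx).const_mul x)
  rw [integral_add hsub ((J_int 0 hx).const_mul x),
    integral_sub (J_int 1 hx) ((J_int 2 hx).const_mul x), integral_const_mul,
    integral_const_mul] at h
  simp only [Real.sinh_zero, zero_mul, sub_zero] at h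
  change J 1 x - x * J 2 x + x * J 0 x = 0 at h
  field_simp
  linarith

lemma K0_eq : K0 = J 0 := by
  funext x; simp [K0, J]

lemma K1_eq : K1 = J 1 := by
  funext x; simp [K1, J]

lemma K0_deriv {x : ℝ} (hx : 0 < x) : HasDerivAt K0 (-(K1 x)) x := by
  rw [K0_eq, K1_eq]; exact J_deriv 0 hx

lemma K1_deriv {x : ℝ} (hx : 0 < x) : HasDerivAt K1 (-(K0 x) - K1 x / x) x := by
  rw [K0_eq, K1_eq]
  have := J_deriv 1 hx
  rw [show (1 + 1 : ℕ) = 2 from rfl, J_rec hx] at this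
  convert this using 1; ring

/-- Derivative of a bilinear combination. -/
lemma comb_deriv {A0 A1 B0 B1 c00 c01 c10 c11 : ℝ → ℝ} {α β d00 d01 d10 d11 y : ℝ}
    (hA0 : HasDerivAt A0 (-α * A1 y) y) (hA1 : HasDerivAt A1 (-α * A0 y - A1 y / y) y)
    (hB0 : HasDerivAt B0 (-β * B1 y) y) (hB1 : HasDerivAt B1 (-β * B0 y - B1 y / y) y)
    (h00 : HasDerivAt c00 d00 y) (h01 : HasDerivAt c01 d01 y)
    (h10 : HasDerivAt c10 d10 y) (h11 : HasDerivAt c11 d11 y) :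
    HasDerivAt (fun y => c00 y * A0 y * B0 y + c01 y * A0 y * B1 y + c10 y * A1 y * B0 y
        + c11 y * A1 y * B1 y)
      ((d00 - α * c10 y - β * c01 y) * A0 y * B0 y
        + (d01 - α * c11 y - β * c00 y - c01 y / y) * A0 y * B1 y
        + (d10 - α * c00 y - β * c11 y - c10 y / y) * A1 y * B0 y
        + (d11 - α * c01 y - β * c10 y - 2 * c11 y / y) * A1 y * B1 y) y := by
  have h := ((((h00.mul hA0).mul hB0).add ((h01.mul hA0).mul hB1)).add
    ((h10.mul hA1).mul hB0)).add ((h11.mul hA1).mul hB1)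
  refine h.congr_deriv ?_
  simp only [Pi.mul_apply]
  ring

lemma lau_deriv (k0 k1 k2 k3 k4 : ℝ) {y : ℝ} (hy : y ≠ 0) :
    HasDerivAt (fun y : ℝ => k0 * y + k1 + k2 / y + k3 / y ^ 2 + k4 / y ^ 3)
      (k0 - k2 / y ^ 2 - 2 * k3 / y ^ 3 - 3 * k4 / y ^ 4) y := by
  have h1 := ((hasDerivAt_id y).const_mul k0).add_const k1
  have h2 := (hasDerivAt_const y k2).div (hasDerivAt_id y) hy
  have h3 := (hasDerivAt_const y k3).div (hasDerivAt_pow 2 y) (pow_ne_zero 2 hy)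
  have h4 := (hasDerivAt_const y k4).div (hasDerivAt_pow 3 y) (pow_ne_zero 3 hy)
  refine (((h1.add h2).add h3).add h4).congr_deriv ?_
  simp only [id]
  field_simp
  ring

/-- The second derivative of a Laurent bilinear combination. -/
lemma second_deriv {A0 A1 B0 B1 : ℝ → ℝ} {α β : ℝ}
    (hA0 : ∀ y : ℝ, 0 < y → HasDerivAt A0 (-α * A1 y) y)
    (hA1 : ∀ y : ℝ, 0 < y → HasDerivAt A1 (-α * A0 y - A1 y / y) y)
    (hB0 : ∀ y : ℝ, 0 < y → HasDerivAt B0 (-β * B1 y) y)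
    (hB1 : ∀ y : ℝ, 0 < y → HasDerivAt B1 (-β * B0 y - B1 y / y) y)
    (P00 Q00 P01 Q01 P10 Q10 P11 Q11 : ℝ) (F : ℝ → ℝ)
    (hF : ∀ y : ℝ, 0 < y → F y = (P00 * y + Q00 / y) * A0 y * B0 y
      + (P01 + Q01 / y ^ 2) * A0 y * B1 y
      + (P10 + Q10 / y ^ 2) * A1 y * B0 y + (P11 * y + Q11 / y) * A1 y * B1 y)
    {y : ℝ} (hy : 0 < y) (e00 e01 e10 e11 : ℝ → ℝ)
    (he00 : e00 = fun y => 0 * y + (P00 - α * P10 - β * P01) + 0 / y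
      + (-Q00 - α * Q10 - β * Q01) / y ^ 2 + 0 / y ^ 3)
    (he01 : e01 = fun y => (-α * P11 - β * P00) * y + 0 + (-α * Q11 - β * Q00 - P01) / y
      + 0 / y ^ 2 + (-3 * Q01) / y ^ 3)
    (he10 : e10 = fun y => (-α * P00 - β * P11) * y + 0 + (-α * Q00 - β * Q11 - P10) / y
      + 0 / y ^ 2 + (-3 * Q10) / y ^ 3)
    (he11 : e11 = fun y => 0 * y + (-P11 - α * P01 - β * P10) + 0 / y
      + (-3 * Q11 - α * Q01 - β * Q10) / y ^ 2 + 0 / y ^ 3) :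
    deriv (deriv F) y =
      ((-2 * (-Q00 - α * Q10 - β * Q01) / y ^ 3) - α * e10 y - β * e01 y) * A0 y * B0 y
      + (((-α * P11 - β * P00) - (-α * Q11 - β * Q00 - P01) / y ^ 2 + 9 * Q01 / y ^ 4)
        - α * e11 y - β * e00 y - e01 y / y) * A0 y * B1 y
      + (((-α * P00 - β * P11) - (-α * Q00 - β * Q11 - P10) / y ^ 2 + 9 * Q10 / y ^ 4)
        - α * e00 y - β * e11 y - e10 y / y) * A1 y * B0 y
      + ((-2 * (-3 * Q11 - α * Q01 - β * Q10) / y ^ 3)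
        - α * e01 y - β * e10 y - 2 * e11 y / y) * A1 y * B1 y := by
  have first : ∀ x : ℝ, 0 < x → deriv F x = e00 x * A0 x * B0 x + e01 x * A0 x * B1 x
      + e10 x * A1 x * B0 x + e11 x * A1 x * B1 x := by
    intro x hx
    have hev : F =ᶠ[𝓝 x] fun y =>
        (P00 * y + 0 + Q00 / y + 0 / y ^ 2 + 0 / y ^ 3) * A0 y * B0 y
        + (0 * y + P01 + 0 / y + Q01 / y ^ 2 + 0 / y ^ 3) * A0 y * B1 y
        + (0 * y + P10 + 0 / y + Q10 / y ^ 2 + 0 / y ^ 3) * A1 y * B0 y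
        + (P11 * y + 0 + Q11 / y + 0 / y ^ 2 + 0 / y ^ 3) * A1 y * B1 y := by
      filter_upwards [Ioi_mem_nhds hx] with z hz
      rw [hF z hz]; ring
    rw [hev.deriv_eq, (comb_deriv (hA0 x hx) (hA1 x hx) (hB0 x hx) (hB1 x hx)
      (lau_deriv P00 0 Q00 0 0 hx.ne') (lau_deriv 0 P01 0 Q01 0 hx.ne')
      (lau_deriv 0 P10 0 Q10 0 hx.ne') (lau_deriv P11 0 Q11 0 0 hx.ne')).deriv]
    subst he00 he01 he10 he11
    have := hx.ne'
    field_simp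
    ring
  have hev : deriv F =ᶠ[𝓝 y] fun x => e00 x * A0 x * B0 x + e01 x * A0 x * B1 x
      + e10 x * A1 x * B0 x + e11 x * A1 x * B1 x := by
    filter_upwards [Ioi_mem_nhds hy] with z hz
    exact first z hz
  rw [hev.deriv_eq, (comb_deriv (hA0 y hy) (hA1 y hy) (hB0 y hy) (hB1 y hy)
    (he00 ▸ lau_deriv _ _ _ _ _ hy.ne') (he01 ▸ lau_deriv _ _ _ _ _ hy.ne')
    (he10 ▸ lau_deriv _ _ _ _ _ hy.ne') (he11 ▸ lau_deriv _ _ _ _ _ hy.ne')).deriv]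
  ring

/-- The ODE in a sign-free form: `a`, `b` may be negative, `a + b > 0`. -/
lemma generic_ode {A0 A1 B0 B1 : ℝ → ℝ} {a b C : ℝ} (hn : 0 < a + b)
    (hA0 : ∀ y : ℝ, 0 < y → HasDerivAt A0 (-(2 * π * a) * A1 y) y)
    (hA1 : ∀ y : ℝ, 0 < y → HasDerivAt A1 (-(2 * π * a) * A0 y - A1 y / y) y)
    (hB0 : ∀ y : ℝ, 0 < y → HasDerivAt B0 (-(2 * π * b) * B1 y) y)
    (hB1 : ∀ y : ℝ, 0 < y → HasDerivAt B1 (-(2 * π * b) * B0 y - B1 y / y) y)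
    (F : ℝ → ℝ)
    (hF : ∀ y : ℝ, 0 < y → F y = C *
      ((-4 * (π * (a + b) * y) * (a * b) * (a ^ 2 + b ^ 2 - 6 * a * b)
          - 30 / (π * (a + b) * y) * (a * b) * (a - b) ^ 2) * A0 y * B0 y
      + (-a * (13 * a ^ 2 * b - 65 * a * b ^ 2 + a ^ 3 + 19 * b ^ 3)
          + 30 / (π * (a + b) * y) ^ 2 * (a * b ^ 2) * (a - b)) * A0 y * B1 y
      + (-b * (13 * b ^ 2 * a - 65 * b * a ^ 2 + b ^ 3 + 19 * a ^ 3)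
          + 30 / (π * (a + b) * y) ^ 2 * (b * a ^ 2) * (b - a)) * A1 y * B0 y
      + (-4 * (π * (a + b) * y) * (a * b) * (a ^ 2 + b ^ 2 - 6 * a * b)
          - (14 * a ^ 3 * b - 94 * a ^ 2 * b ^ 2 + 14 * a * b ^ 3 + a ^ 4 + b ^ 4)
            / (π * (a + b) * y)) * A1 y * B1 y))
    {y : ℝ} (hy : 0 < y) :
    y ^ 2 * deriv (deriv F) y - (12 + 4 * π ^ 2 * (a + b) ^ 2 * y ^ 2) * F y
      = C * (-6 * π * (a + b) ^ 5 * y * A1 y * B1 y) := by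
  have hpi : (π : ℝ) ≠ 0 := Real.pi_ne_zero
  have hn' := hn.ne'
  rw [second_deriv hA0 hA1 hB0 hB1
    (C * (-4 * π * (a + b) * (a * b) * (a ^ 2 + b ^ 2 - 6 * a * b)))
    (C * (-30 / (π * (a + b)) * (a * b) * (a - b) ^ 2))
    (C * (-a * (13 * a ^ 2 * b - 65 * a * b ^ 2 + a ^ 3 + 19 * b ^ 3)))
    (C * (30 / (π * (a + b)) ^ 2 * (a * b ^ 2) * (a - b)))
    (C * (-b * (13 * b ^ 2 * a - 65 * b * a ^ 2 + b ^ 3 + 19 * a ^ 3)))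
    (C * (30 / (π * (a + b)) ^ 2 * (b * a ^ 2) * (b - a)))
    (C * (-4 * π * (a + b) * (a * b) * (a ^ 2 + b ^ 2 - 6 * a * b)))
    (C * (-(14 * a ^ 3 * b - 94 * a ^ 2 * b ^ 2 + 14 * a * b ^ 3 + a ^ 4 + b ^ 4)
      / (π * (a + b)))) F
    (by
      intro x hx
      rw [hF x hx]
      have := hx.ne'
      field_simp
      ring) hy _ _ _ _ rfl rfl rfl rfl, hF y hy]
  have hy' := hy.ne'
  generalize A0 y = u0
  generalize A1 y = u1
  generalize B0 y = v0
  generalize B1 y = v1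
  field_simp
  ring

lemma K0_scaled {c s : ℝ} (a : ℝ) (hc : 0 < c) (hs : s * s = 1) (ha : a = s * c) :
    ∀ y : ℝ, 0 < y → HasDerivAt (fun y => K0 (2 * π * c * y))
      (-(2 * π * a) * (s * K1 (2 * π * c * y))) y := by
  intro y hy
  have hp := Real.pi_pos
  have h1 : HasDerivAt (fun y : ℝ => 2 * π * c * y) (2 * π * c * 1) y :=
    (hasDerivAt_id y).const_mul _
  have h := (K0_deriv (x := 2 * π * c * y) (by positivity)).comp y h1
  refine h.congr_deriv ?_
  rw [ha]
  linear_combination (2 * π * c * K1 (2 * π * c * y)) * hs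

lemma K1_scaled {c s : ℝ} (a : ℝ) (hc : 0 < c) (hs : s * s = 1) (ha : a = s * c) :
    ∀ y : ℝ, 0 < y → HasDerivAt (fun y => s * K1 (2 * π * c * y))
      (-(2 * π * a) * K0 (2 * π * c * y) - s * K1 (2 * π * c * y) / y) y := by
  intro y hy
  have hp := Real.pi_pos
  have h1 : HasDerivAt (fun y : ℝ => 2 * π * c * y) (2 * π * c * 1) y :=
    (hasDerivAt_id y).const_mul _
  have h := ((K1_deriv (x := 2 * π * c * y) (by positivity)).comp y h1).const_mul s
  refine h.congr_deriv ?_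
  rw [ha]
  field_simp

/-- Sign of a nonzero integer, as a real number. -/
lemma sign_facts (m : ℤ) (hm : m ≠ 0) :
    ((m.sign : ℤ) : ℝ) * (m.sign : ℤ) = 1 ∧ (m : ℝ) = (m.sign : ℤ) * |(m : ℝ)| := by
  rcases lt_or_gt_of_ne hm with h | h
  · have : (m : ℝ) < 0 := by exact_mod_cast h
    rw [Int.sign_eq_neg_one_of_neg h, abs_of_neg this]; norm_num
  · have : (0 : ℝ) < m := by exact_mod_cast h
    rw [Int.sign_eq_one_of_pos h, abs_of_pos this]; norm_num

lemma eps1_eq (n₁ n₂ : ℤ) (h₁ : n₁ ≠ 0) (h₂ : n₂ ≠ 0) (h : n₁ + n₂ ≠ 0) :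
    eps1 n₁ n₂ = (n₁.sign : ℝ) * n₂.sign * ((n₁ + n₂).sign * n₂.sign) := by
  have f2 := (sign_facts n₂ h₂).1
  unfold eps1
  split_ifs with hp
  · rcases pos_and_pos_or_neg_and_neg_of_mul_pos hp with ⟨p, q⟩ | ⟨p, q⟩
    · rw [Int.sign_eq_one_of_pos p, Int.sign_eq_one_of_pos q,
        Int.sign_eq_one_of_pos (by lia : 0 < n₁ + n₂)]; norm_num
    · rw [Int.sign_eq_neg_one_of_neg p, Int.sign_eq_neg_one_of_neg q,
        Int.sign_eq_neg_one_of_neg (by lia : n₁ + n₂ < 0)]; norm_num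
  · push_cast
    linear_combination -((n₁.sign : ℝ) * (n₁ + n₂).sign) * f2

lemma eps2_eq (n₁ n₂ : ℤ) (h₁ : n₁ ≠ 0) (h₂ : n₂ ≠ 0) (h : n₁ + n₂ ≠ 0) :
    eps2 n₁ n₂ = (n₁.sign : ℝ) * n₂.sign * ((n₁ + n₂).sign * n₁.sign) := by
  have e : eps2 n₁ n₂ = eps1 n₂ n₁ := by
    unfold eps1 eps2; rw [mul_comm n₁ n₂, add_comm n₁ n₂]
  rw [e, eps1_eq n₂ n₁ h₂ h₁ (by rwa [add_comm]), add_comm n₂ n₁]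
  ring

end ModeODE

/-- `fP2 n₁ n₂` solves the inhomogeneous ODE for the `(n₁,n₂)` mode. -/
theorem mode_n1n2_ode (n₁ n₂ : ℤ) (h₁ : n₁ ≠ 0) (h₂ : n₂ ≠ 0) (h : n₁ + n₂ ≠ 0) :
    ∀ y : ℝ, 0 < y →
      y ^ 2 * deriv (deriv (fP2 n₁ n₂)) y -
          (12 + 4 * π ^ 2 * ((n₁ + n₂ : ℤ) : ℝ) ^ 2 * y ^ 2) * fP2 n₁ n₂ y
      = -64 * π ^ 2 * y *
          ((sigma2 n₁.natAbs : ℝ) * (sigma2 n₂.natAbs : ℝ) / |((n₁ * n₂ : ℤ) : ℝ)|) *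
          K1 (2 * π * |(n₁ : ℝ)| * y) * K1 (2 * π * |(n₂ : ℝ)| * y) := by
  intro y hy
  obtain ⟨s1, a1⟩ := ModeODE.sign_facts n₁ h₁
  obtain ⟨s2, a2⟩ := ModeODE.sign_facts n₂ h₂
  obtain ⟨s0, a0⟩ := ModeODE.sign_facts (n₁ + n₂) h
  have p1 : 0 < |(n₁ : ℝ)| := abs_pos.mpr (by exact_mod_cast h₁)
  have p2 : 0 < |(n₂ : ℝ)| := abs_pos.mpr (by exact_mod_cast h₂)
  have p0 : 0 < |((n₁ + n₂ : ℤ) : ℝ)| := abs_pos.mpr (by exact_mod_cast h)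
  have p12 : 0 < |((n₁ * n₂ : ℤ) : ℝ)| :=
    abs_pos.mpr (by exact_mod_cast mul_ne_zero h₁ h₂)
  have E1 := ModeODE.eps1_eq n₁ n₂ h₁ h₂ h
  have E2 := ModeODE.eps2_eq n₁ n₂ h₁ h₂ h
  have E0 : (((n₁ * n₂).sign : ℤ) : ℝ) = (n₁.sign : ℝ) * n₂.sign := by
    rw [Int.sign_mul]; push_cast; ring
  set σ : ℝ := ((n₁ + n₂).sign : ℝ) with hσ
  set σ₁ : ℝ := (n₁.sign : ℝ) with hσ₁
  set σ₂ : ℝ := (n₂.sign : ℝ) with hσ₂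
  have hsum : σ * (n₁ : ℝ) + σ * n₂ = |((n₁ + n₂ : ℤ) : ℝ)| := by
    have : ((n₁ + n₂ : ℤ) : ℝ) = (n₁ : ℝ) + n₂ := by push_cast; ring
    rw [← mul_add, ← this]
    nth_rewrite 1 [a0]
    linear_combination |((n₁ + n₂ : ℤ) : ℝ)| * s0
  have t1 : σ * σ₁ * (σ * σ₁) = 1 := by linear_combination σ₁ * σ₁ * s0 + s1
  have t2 : σ * σ₂ * (σ * σ₂) = 1 := by linear_combination σ₂ * σ₂ * s0 + s2
  have b1 : σ * (n₁ : ℝ) = σ * σ₁ * |(n₁ : ℝ)| := by rw [mul_assoc, ← a1]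
  have b2 : σ * (n₂ : ℝ) = σ * σ₂ * |(n₂ : ℝ)| := by rw [mul_assoc, ← a2]
  have sq : σ ^ 2 = 1 := by rw [sq]; exact s0
  have s4 : σ ^ 4 = 1 := by rw [show (4 : ℕ) = 2 * 2 from rfl, pow_mul, sq, one_pow]
  have key := ModeODE.generic_ode (a := σ * (n₁ : ℝ)) (b := σ * (n₂ : ℝ))
    (C := 32 * π * (sigma2 n₁.natAbs : ℝ) * (sigma2 n₂.natAbs : ℝ) /
      (3 * |((n₁ * n₂ : ℤ) : ℝ)| * |((n₁ + n₂ : ℤ) : ℝ)| ^ 5) * (σ₁ * σ₂))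
    (by rw [hsum]; exact p0)
    (ModeODE.K0_scaled _ p1 t1 b1) (ModeODE.K1_scaled _ p1 t1 b1)
    (ModeODE.K0_scaled _ p2 t2 b2) (ModeODE.K1_scaled _ p2 t2 b2)
    (fP2 n₁ n₂)
    (by
      intro x hx
      rw [hsum]
      unfold fP2 q00 q01 q10 q11
      rw [E1, E2, E0]
      set z := π * |((n₁ + n₂ : ℤ) : ℝ)| * x with hz
      set u0 := K0 (2 * π * |(n₁ : ℝ)| * x)
      set u1 := K1 (2 * π * |(n₁ : ℝ)| * x)
      set v0 := K0 (2 * π * |(n₂ : ℝ)| * x)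
      set v1 := K1 (2 * π * |(n₂ : ℝ)| * x)
      generalize (n₁ : ℝ) = a
      generalize (n₂ : ℝ) = b
      rw [mul_assoc _ (σ₁ * σ₂)]
      congr 1
      have c00 : -4 * z * (σ * a * (σ * b)) * ((σ * a) ^ 2 + (σ * b) ^ 2 - 6 * (σ * a) * (σ * b))
          - 30 / z * (σ * a * (σ * b)) * (σ * a - σ * b) ^ 2
          = -4 * z * (a * b) * (a ^ 2 + b ^ 2 - 6 * a * b) - 30 / z * (a * b) * (a - b) ^ 2 := by
        linear_combination (-4 * z * (a * b) * (a ^ 2 + b ^ 2 - 6 * a * b)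
          - 30 / z * (a * b) * (a - b) ^ 2) * s4
      have c01 : ∀ a b : ℝ, -(σ * a) * (13 * (σ * a) ^ 2 * (σ * b) - 65 * (σ * a) * (σ * b) ^ 2
            + (σ * a) ^ 3 + 19 * (σ * b) ^ 3)
            + 30 / z ^ 2 * (σ * a * (σ * b) ^ 2) * (σ * a - σ * b)
          = -a * (13 * a ^ 2 * b - 65 * a * b ^ 2 + a ^ 3 + 19 * b ^ 3)
            + 30 / z ^ 2 * (a * b ^ 2) * (a - b) := by
        intro a b
        linear_combination (-a * (13 * a ^ 2 * b - 65 * a * b ^ 2 + a ^ 3 + 19 * b ^ 3)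
            + 30 / z ^ 2 * (a * b ^ 2) * (a - b)) * s4
      have c11 : -4 * z * (σ * a * (σ * b)) * ((σ * a) ^ 2 + (σ * b) ^ 2 - 6 * (σ * a) * (σ * b))
          - (14 * (σ * a) ^ 3 * (σ * b) - 94 * (σ * a) ^ 2 * (σ * b) ^ 2
            + 14 * (σ * a) * (σ * b) ^ 3 + (σ * a) ^ 4 + (σ * b) ^ 4) / z
          = -4 * z * (a * b) * (a ^ 2 + b ^ 2 - 6 * a * b)
          - (14 * a ^ 3 * b - 94 * a ^ 2 * b ^ 2 + 14 * a * b ^ 3 + a ^ 4 + b ^ 4) / z := by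
        linear_combination (-4 * z * (a * b) * (a ^ 2 + b ^ 2 - 6 * a * b)
          - (14 * a ^ 3 * b - 94 * a ^ 2 * b ^ 2 + 14 * a * b ^ 3 + a ^ 4 + b ^ 4) / z) * s4
      rw [c00, c01 a b, c01 b a, c11]
      generalize -4 * z * (a * b) * (a ^ 2 + b ^ 2 - 6 * a * b)
          - (14 * a ^ 3 * b - 94 * a ^ 2 * b ^ 2 + 14 * a * b ^ 3 + a ^ 4 + b ^ 4) / z = r
      have hone : σ₁ * σ₂ * ((σ * σ₁) * (σ * σ₂)) = 1 := by
        linear_combination σ₁ ^ 2 * σ₂ ^ 2 * s0 + σ₂ ^ 2 * s1 + s2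
      linear_combination -(r * u1 * v1) * hone)
    hy
  rw [hsum] at key
  have habs : ((n₁ + n₂ : ℤ) : ℝ) ^ 2 = |((n₁ + n₂ : ℤ) : ℝ)| ^ 2 := (sq_abs _).symm
  rw [habs, key]
  have hone : σ₁ * σ₂ * ((σ * σ₁) * (σ * σ₂)) = 1 := by
    linear_combination σ₁ ^ 2 * σ₂ ^ 2 * s0 + σ₂ ^ 2 * s1 + s2
  generalize K1 (2 * π * |(n₁ : ℝ)| * y) = u1
  generalize K1 (2 * π * |(n₂ : ℝ)| * y) = v1
  have p0' := p0.ne'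
  have p12' := p12.ne'
  generalize |((n₁ + n₂ : ℤ) : ℝ)| = N at *
  generalize |((n₁ * n₂ : ℤ) : ℝ)| = M at *
  generalize (sigma2 n₁.natAbs : ℝ) = S
  generalize (sigma2 n₂.natAbs : ℝ) = T
  calc _ = (-64 * π ^ 2 * y * (S * T / M) * u1 * v1) * (σ₁ * σ₂ * ((σ * σ₁) * (σ * σ₂))) := by
        field_simp
        ring
    _ = _ := by rw [hone, mul_one]
end

section
/- Let n₁ and n₂ be nonzero integers with n := n₁ + n₂ ≠ 0, let f be the function f(y) = (32π·σ₂(|n₁|)·σ₂(|n₂|)) / (3·|n₁n₂|·|n|⁵) · ∑_{i,j ∈ {0,1}} q^{ij}(π|n|y)·K_i(2π|n₁|y)·K_j(2π|n₂|y), where q⁰⁰(z) = sgn(n₁n₂)·( −4z·n₁n₂·(n₁² + n₂² − 6n₁n₂) − (30/z)·n₁n₂·(n₁ − n₂)² ), q⁰¹(z) = ε₁·( −n₁·(13n₁²n₂ − 65n₁n₂² + n₁³ + 19n₂³) + (30/z²)·n₁n₂²·(n₁ − n₂) ) with ε₁ = 1 if n₁n₂ > 0 and ε₁ = sgn(n₁)·sgn(n₁+n₂)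 if n₁n₂ < 0, q¹⁰(z) = ε₂·( −n₂·(13n₂²n₁ − 65n₂n₁² + n₂³ + 19n₁³) + (30/z²)·n₂n₁²·(n₂ − n₁) ) with ε₂ = 1 if n₁n₂ > 0 and ε₂ = sgn(n₂)·sgn(n₁+n₂) if n₁n₂ < 0, and q¹¹(z) = −4z·n₁n₂·(n₁² + n₂² − 6n₁n₂) − (14n₁³n₂ − 94n₁²n₂² + 14n₁n₂³ + n₁⁴ + n₂⁴)/z. Set α = sgn(n₁+n₂)·(128π·σ₂(|n₁|)·σ₂(|n₂|)) / (45·n₁²·n₂²·|n₁+n₂|^{7/2}) · ( n₁⁵ + n₂⁵ + 15n₁⁴n₂ + 15n₁n₂⁴ − 80n₁³n₂² − 80n₁²n₂³ + 60n₁²n₂²·(n₁ − n₂)·log|n₁/n₂| ). Then the function g(y) = f(y) + α·√y·K_{7/2}(2π|n|y) satisfies: g(y) − 8·σ₂(|n₁|)·σ₂(|n₂|)/(5·n₁²·n₂²·y) remains bounded as y → 0⁺. -/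
open Real

/-- The homogeneous-solution coefficient `α_{n₁,n₂}`. -/
noncomputable def alphaN1N2 (n₁ n₂ : ℤ) : ℝ :=
  ((n₁ + n₂).sign : ℝ) *
    (128 * π * (sigma2 n₁.natAbs : ℝ) * (sigma2 n₂.natAbs : ℝ) /
      (45 * (n₁ : ℝ) ^ 2 * (n₂ : ℝ) ^ 2 * |((n₁ + n₂ : ℤ) : ℝ)| ^ ((7 : ℝ) / 2))) *
    ((n₁ : ℝ) ^ 5 + (n₂ : ℝ) ^ 5 + 15 * (n₁ : ℝ) ^ 4 * n₂ + 15 * (n₁ : ℝ) * (n₂ : ℝ) ^ 4 -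
      80 * (n₁ : ℝ) ^ 3 * (n₂ : ℝ) ^ 2 - 80 * (n₁ : ℝ) ^ 2 * (n₂ : ℝ) ^ 3 +
      60 * (n₁ : ℝ) ^ 2 * (n₂ : ℝ) ^ 2 * ((n₁ : ℝ) - n₂) * Real.log |(n₁ : ℝ) / (n₂ : ℝ)|)

open MeasureTheory Filter Topology

lemma bes_dom (x t : ℝ) (hx : 0 < x) :
    Real.exp (-x * Real.cosh t) * Real.cosh t ^ 2 ≤ 12 / x ^ 3 * Real.exp (-t) := by
  have hc : Real.exp t / 2 ≤ Real.cosh t := by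
    rw [Real.cosh_eq]; linarith [Real.exp_pos (-t)]
  have he := Real.exp_pos t
  have hcp : 0 < Real.cosh t := Real.cosh_pos t
  have h3 : (x * Real.cosh t) ^ 3 / 6 ≤ Real.exp (x * Real.cosh t) := by
    have := Real.pow_div_factorial_le_exp (x * Real.cosh t) (by positivity) 3
    simpa [Nat.factorial] using this
  have e1 : Real.exp (-x * Real.cosh t) = 1 / Real.exp (x * Real.cosh t) := by
    rw [neg_mul, Real.exp_neg, one_div]
  rw [e1, Real.exp_neg]
  have h4 : 1 / Real.exp (x * Real.cosh t) ≤ 1 / ((x * Real.cosh t) ^ 3 / 6) :=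
    one_div_le_one_div_of_le (by positivity) h3
  calc 1 / Real.exp (x * Real.cosh t) * Real.cosh t ^ 2
      ≤ 1 / ((x * Real.cosh t) ^ 3 / 6) * Real.cosh t ^ 2 := by gcongr
    _ = 6 / x ^ 3 * (1 / Real.cosh t) := by field_simp
    _ ≤ 6 / x ^ 3 * (1 / (Real.exp t / 2)) := by gcongr
    _ = _ := by field_simp; norm_num

lemma bes_int_exp (C : ℝ) : IntegrableOn (fun t : ℝ => C * Real.exp (-t)) (Set.Ioi 0) := by
  have := (integrableOn_exp_neg_Ioi 0)
  exact this.const_mul C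

lemma bes_int_pow (x : ℝ) (hx : 0 < x) (k : ℕ) (hk : k ≤ 2) :
    IntegrableOn (fun t : ℝ => Real.exp (-x * Real.cosh t) * Real.cosh t ^ k) (Set.Ioi 0) := by
  refine Integrable.mono' (bes_int_exp (12 / x ^ 3)) ?_ ?_
  · exact (by fun_prop : Continuous _).aestronglyMeasurable
  · refine Eventually.of_forall fun t => ?_
    have hcp : 0 < Real.cosh t := Real.cosh_pos t
    rw [Real.norm_of_nonneg (by positivity)]
    refine le_trans ?_ (bes_dom x t hx)
    gcongr
    exact Real.one_le_cosh t

lemma bes_hasDeriv (k : ℕ) (hk : k ≤ 1) (x : ℝ) (hx : 0 < x) :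
    HasDerivAt (fun x => ∫ t in Set.Ioi (0:ℝ), Real.exp (-x * Real.cosh t) * Real.cosh t ^ k)
      (∫ t in Set.Ioi (0:ℝ), -(Real.exp (-x * Real.cosh t) * Real.cosh t ^ (k+1))) x := by
  refine (hasDerivAt_integral_of_dominated_loc_of_deriv_le
    (F := fun x t => Real.exp (-x * Real.cosh t) * Real.cosh t ^ k)
    (F' := fun x t => -(Real.exp (-x * Real.cosh t) * Real.cosh t ^ (k+1)))
    (bound := fun t => 12 / (x/2) ^ 3 * Real.exp (-t))
    (s := Set.Ioi (x/2)) (Ioi_mem_nhds (by linarith)) ?_ ?_ ?_ ?_ ?_ ?_).2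
  · exact Eventually.of_forall fun y => (by fun_prop : Continuous _).aestronglyMeasurable
  · exact bes_int_pow x hx k (by omega)
  · exact (by fun_prop : Continuous _).aestronglyMeasurable
  · refine Eventually.of_forall fun t y hy => ?_
    have hy : x / 2 < y := hy
    have hcp : 0 < Real.cosh t := Real.cosh_pos t
    rw [norm_neg, Real.norm_of_nonneg (by positivity)]
    refine le_trans ?_ (bes_dom (x/2) t (by linarith))
    gcongr
    · exact Real.one_le_cosh t
    · omega
  · exact bes_int_exp _
  · refine Eventually.of_forall fun t y hy => ?_
    have h1 : HasDerivAt (fun y : ℝ => -y * Real.cosh t) (-1 * Real.cosh t) y :=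
      ((hasDerivAt_id y).neg).mul_const _
    have := (h1.exp).mul_const (Real.cosh t ^ k)
    exact this.congr_deriv (by ring)

lemma K0_deriv (x : ℝ) (hx : 0 < x) : HasDerivAt K0 (-K1 x) x := by
  have := bes_hasDeriv 0 (by omega) x hx
  rw [integral_neg] at this
  simp only [zero_add, pow_zero, pow_one, mul_one] at this
  exact this

/-- `x K₁(x)` has derivative `-x K₀(x)`. -/
lemma xK1_deriv (x : ℝ) (hx : 0 < x) : HasDerivAt (fun x => x * K1 x) (-(x * K0 x)) x := by
  have h1 := bes_hasDeriv 1 (by omega) x hx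
  have h2 : HasDerivAt K1 (∫ t in Set.Ioi (0:ℝ), -(Real.exp (-x * Real.cosh t) * Real.cosh t ^ 2)) x := by
    simp only [pow_one] at h1
    exact h1
  have h3 := (hasDerivAt_id x).mul h2
  have i0 := bes_int_pow x hx 0 (by omega)
  have i1 := bes_int_pow x hx 1 (by omega)
  have i2 := bes_int_pow x hx 2 (by omega)
  simp only [pow_zero, mul_one, pow_one] at i0 i1
  have key : ∫ t in Set.Ioi (0:ℝ), (Real.exp (-x * Real.cosh t) * Real.cosh t +
      (x * Real.exp (-x * Real.cosh t) - x * (Real.exp (-x * Real.cosh t) * Real.cosh t ^ 2))) = 0 := by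
    have := integral_Ioi_of_hasDerivAt_of_tendsto (a := 0) (m := 0)
      (f := fun t => Real.sinh t * Real.exp (-x * Real.cosh t))
      (f' := fun t => (Real.exp (-x * Real.cosh t) * Real.cosh t +
      (x * Real.exp (-x * Real.cosh t) - x * (Real.exp (-x * Real.cosh t) * Real.cosh t ^ 2))))
      (by fun_prop) ?_ (i1.add ((i0.const_mul x).sub (i2.const_mul x))) ?_
    · simpa using this
    · intro t ht
      have ha := (Real.hasDerivAt_sinh t).mul ((Real.hasDerivAt_cosh t).const_mul (-x)).exp
      refine ha.congr_deriv ?_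
      have := Real.cosh_sq t
      rw [this]; ring
    · have hz : Tendsto (fun t : ℝ => 12 / x ^ 3 * Real.exp (-t)) atTop (𝓝 0) := by
        have := (Real.tendsto_exp_neg_atTop_nhds_zero).const_mul (12 / x^3)
        simpa using this
      refine squeeze_zero_norm (fun t => ?_) hz
      refine le_trans ?_ (bes_dom x t hx)
      have hcp := Real.one_le_cosh t
      have hs : |Real.sinh t| ≤ Real.cosh t ^ 2 := by
        have := Real.cosh_sq t
        rw [this]
        nlinarith [sq_abs (Real.sinh t), sq_nonneg (|Real.sinh t| - 1)]
      rw [norm_mul, Real.norm_eq_abs, Real.norm_eq_abs, abs_of_pos (Real.exp_pos _), mul_comm]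
      gcongr
  have e1 := integral_add i1 ((i0.const_mul x).sub (i2.const_mul x))
  simp only [Pi.sub_apply] at e1
  rw [e1, integral_sub (i0.const_mul x) (i2.const_mul x), integral_const_mul, integral_const_mul] at key
  refine h3.congr_deriv ?_
  rw [integral_neg]
  simp only [K0, K1, id] at *
  linarith

lemma xK1_bounds (x : ℝ) (hx : 0 < x) : 1 - x ≤ x * K1 x ∧ x * K1 x ≤ 1 := by
  have hder : ∀ t ∈ Set.Ioi (0:ℝ), HasDerivAt (fun t => -Real.exp (-x * Real.sinh t))
      (x * Real.cosh t * Real.exp (-x * Real.sinh t)) t := by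
    intro t _
    have ha := (((Real.hasDerivAt_sinh t).const_mul (-x)).exp).neg
    exact ha.congr_deriv (by ring)
  have hlim : Tendsto (fun t => -Real.exp (-x * Real.sinh t)) atTop (𝓝 0) := by
    have hs : Tendsto Real.sinh atTop atTop := by
      refine tendsto_atTop_mono' atTop ?_ tendsto_id
      filter_upwards [eventually_ge_atTop 0] with t ht
      exact Real.self_le_sinh_iff.2 ht
    have h1 : Tendsto (fun t => -x * Real.sinh t) atTop atBot :=
      hs.const_mul_atTop_of_neg (by linarith)
    have := (Real.tendsto_exp_atBot.comp h1).neg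
    simpa using this
  have hcont : ContinuousWithinAt (fun t => -Real.exp (-x * Real.sinh t)) (Set.Ici 0) 0 :=
    (by fun_prop : Continuous _).continuousWithinAt
  have hpos : ∀ t ∈ Set.Ioi (0:ℝ), 0 ≤ x * Real.cosh t * Real.exp (-x * Real.sinh t) := by
    intro t _
    have := Real.cosh_pos t
    positivity
  have hI := integrableOn_Ioi_deriv_of_nonneg hcont hder hpos hlim
  have hE := integral_Ioi_of_hasDerivAt_of_nonneg hcont hder hpos hlim
  simp only [Real.sinh_zero, mul_zero, Real.exp_zero, sub_neg_eq_add, zero_add] at hE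
  have i1 := bes_int_pow x hx 1 (by omega)
  simp only [pow_one] at i1
  have hw : x * K1 x = ∫ t in Set.Ioi (0:ℝ), x * (Real.exp (-x * Real.cosh t) * Real.cosh t) := by
    rw [integral_const_mul]; rfl
  have hcs : ∀ t : ℝ, 0 < t → Real.sinh t ≤ Real.cosh t ∧ Real.cosh t ≤ Real.sinh t + 1 := by
    intro t ht
    have h1 := Real.exp_pos (-t)
    have h2 : Real.exp (-t) ≤ 1 := Real.exp_le_one_iff.2 (by linarith)
    have := Real.cosh_sub_sinh t
    constructor <;> linarith
  constructor
  · have : Real.exp (-x) ≤ x * K1 x := by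
      rw [hw]
      calc Real.exp (-x) = ∫ t in Set.Ioi (0:ℝ), Real.exp (-x) * (x * Real.cosh t * Real.exp (-x * Real.sinh t)) := by
            rw [integral_const_mul, hE, mul_one]
        _ ≤ _ := by
          refine setIntegral_mono_on (hI.const_mul _) (i1.const_mul x) measurableSet_Ioi ?_
          intro t ht
          have h1 := (hcs t ht).2
          have h2 : Real.exp (-x) * Real.exp (-x * Real.sinh t) ≤ Real.exp (-x * Real.cosh t) := by
            rw [← Real.exp_add]
            apply Real.exp_le_exp.2
            nlinarith
          have := Real.cosh_pos t
          nlinarith [mul_le_mul_of_nonneg_left h2 (by positivity : 0 ≤ x * Real.cosh t)]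
    linarith [Real.add_one_le_exp (-x)]
  · rw [hw, ← hE]
    refine setIntegral_mono_on (i1.const_mul x) hI measurableSet_Ioi ?_
    intro t ht
    have h1 := (hcs t ht).1
    have h2 : Real.exp (-x * Real.cosh t) ≤ Real.exp (-x * Real.sinh t) := by
      apply Real.exp_le_exp.2
      nlinarith
    have := Real.cosh_pos t
    nlinarith [mul_le_mul_of_nonneg_left h2 (by positivity : 0 ≤ x * Real.cosh t)]

lemma small_mvt (F F' φ : ℝ → ℝ) (hF : ∀ x, 0 < x → x ≤ 1 → HasDerivAt F (F' x) x)
    (hb : ∀ x, 0 < x → x ≤ 1 → |F' x| ≤ φ x)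
    (hm : ∀ s x, 0 < s → s ≤ x → x ≤ 1 → φ s ≤ φ x)
    (hl : Tendsto F (𝓝[>] 0) (𝓝 0)) (x : ℝ) (hx : 0 < x) (hx1 : x ≤ 1) :
    |F x| ≤ x * φ x := by
  have hφ : 0 ≤ φ x := le_trans (abs_nonneg _) (hb x hx hx1)
  have h1 : Tendsto (fun s => |F x - F s|) (𝓝[>] 0) (𝓝 |F x - 0|) :=
    (hl.const_sub (F x)).abs
  rw [sub_zero] at h1
  refine le_of_tendsto h1 ?_
  filter_upwards [Ioo_mem_nhdsGT hx] with s hs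
  have := Convex.norm_image_sub_le_of_norm_hasDerivWithin_le (f := F) (f' := F') (C := φ x)
    (s := Set.Icc s x) (x := s) (y := x)
    (fun t ht => (hF t (lt_of_lt_of_le hs.1 ht.1) (ht.2.trans hx1)).hasDerivWithinAt)
    (fun t ht => (hb t (lt_of_lt_of_le hs.1 ht.1) (ht.2.trans hx1)).trans
      (hm t x (lt_of_lt_of_le hs.1 ht.1) ht.2 hx1)) (convex_Icc s x)
      (Set.left_mem_Icc.2 hs.2.le) (Set.right_mem_Icc.2 hs.2.le)
  rw [Real.norm_eq_abs, Real.norm_eq_abs, abs_of_pos (by linarith [hs.2] : 0 < x - s)] at this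
  nlinarith [hs.1]

lemma K0_log_deriv (x : ℝ) (hx : 0 < x) :
    HasDerivAt (fun x => K0 x + Real.log x) ((1 - x * K1 x) / x) x := by
  refine ((K0_deriv x hx).add (Real.hasDerivAt_log hx.ne')).congr_deriv ?_
  field_simp
  ring

lemma K0_const : ∃ c : ℝ, Tendsto (fun x => K0 x + Real.log x) (𝓝[>] 0) (𝓝 c) := by
  have hL : LipschitzOnWith 1 (fun x => K0 x + Real.log x) (Set.Ioi 0) := by
    refine Convex.lipschitzOnWith_of_nnnorm_hasDerivWithin_le (convex_Ioi 0)
      (fun x hx => (K0_log_deriv x hx).hasDerivWithinAt) ?_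
    intro x hx
    have hx : 0 < x := hx
    obtain ⟨h1, h2⟩ := xK1_bounds x hx
    rw [← NNReal.coe_le_coe]
    simp only [coe_nnnorm, NNReal.coe_one, Real.norm_eq_abs]
    rw [abs_le]
    constructor
    · have : 0 ≤ (1 - x * K1 x) / x := by apply div_nonneg <;> linarith
      linarith
    · rw [div_le_one hx]; linarith
  obtain ⟨g, hg, he⟩ := hL.extend_real
  refine ⟨g 0, ?_⟩
  have h1 : Tendsto g (𝓝[>] 0) (𝓝 (g 0)) := (hg.continuous.tendsto 0).mono_left nhdsWithin_le_nhds
  refine h1.congr' ?_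
  filter_upwards [self_mem_nhdsWithin] with x hx
  exact (he hx).symm

lemma sqrt_log_bd : ∃ B : ℝ, 0 ≤ B ∧ ∀ x : ℝ, 0 < x → x ≤ 1 → Real.sqrt x * |Real.log x| ≤ B := by
  refine ⟨2, by norm_num, fun x hx hx1 => ?_⟩
  have h := Real.abs_log_mul_self_rpow_lt x (1/2) hx hx1 (by norm_num)
  rw [← Real.sqrt_eq_rpow, abs_mul, abs_of_nonneg (Real.sqrt_nonneg x)] at h
  norm_num at h
  linarith

lemma xx_log_tendsto : Tendsto (fun x : ℝ => x ^ 2 * Real.log x) (𝓝[>] 0) (𝓝 0) := by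
  have h := tendsto_log_mul_rpow_nhdsGT_zero (r := 2) (by norm_num)
  refine h.congr fun x => ?_
  rw [mul_comm]; norm_num

lemma bes_asymp : ∃ c C : ℝ, ∀ x : ℝ, 0 < x → x ≤ 1 →
    |K0 x - ((c - Real.log x) + x ^ 2 / 4 * ((c - Real.log x) + 1))| ≤ C * x ^ 3 ∧
    |x * K1 x - (1 - x ^ 2 / 2 * ((c - Real.log x) + 1 / 2))| ≤ C * (x ^ 3 * Real.sqrt x) := by
  obtain ⟨c, hc⟩ := K0_const
  obtain ⟨B, hB0, hB⟩ := sqrt_log_bd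
  -- F0
  have f0 : ∀ x : ℝ, 0 < x → x ≤ 1 → |K0 x + Real.log x - c| ≤ x := by
    intro x hx hx1
    have := small_mvt (fun x => K0 x + Real.log x - c) (fun x => (1 - x * K1 x) / x) (fun _ => 1)
      (fun x hx _ => (K0_log_deriv x hx).sub_const c) ?_ (fun _ _ _ _ _ => le_rfl)
      (by simpa using hc.sub_const c) x hx hx1
    · simpa using this
    · intro x hx _
      obtain ⟨h1, h2⟩ := xK1_bounds x hx
      have h3 : 0 ≤ (1 - x * K1 x) / x := by apply div_nonneg <;> linarith
      rw [abs_of_nonneg h3, div_le_one hx]; linarith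
  have dL : ∀ x : ℝ, 0 < x → HasDerivAt (fun x => c - Real.log x) (-x⁻¹) x := fun x hx =>
    (Real.hasDerivAt_log hx.ne').const_sub c
  have d2 : ∀ x : ℝ, HasDerivAt (fun x : ℝ => x ^ 2) (2 * x) x := fun x => by
    simpa using hasDerivAt_pow 2 x
  have dF1 : ∀ x : ℝ, 0 < x → HasDerivAt
      (fun x => x * K1 x - (1 - x ^ 2 / 2 * ((c - Real.log x) + 1 / 2)))
      (-(x * (K0 x + Real.log x - c))) x := by
    intro x hx
    have := (xK1_deriv x hx).sub ((((d2 x).div_const 2).mul ((dL x hx).add_const (1/2))).const_sub 1)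
    refine this.congr_deriv ?_
    field_simp
    ring
  have dF2 : ∀ x : ℝ, 0 < x → HasDerivAt
      (fun x => K0 x - ((c - Real.log x) + x ^ 2 / 4 * ((c - Real.log x) + 1)))
      (-(x * K1 x - (1 - x ^ 2 / 2 * ((c - Real.log x) + 1 / 2))) / x) x := by
    intro x hx
    have := (K0_deriv x hx).sub ((dL x hx).add (((d2 x).div_const 4).mul ((dL x hx).add_const 1)))
    refine this.congr_deriv ?_
    field_simp
    ring
  have tid : Tendsto (fun x : ℝ => x) (𝓝[>] 0) (𝓝 0) := tendsto_id.mono_left nhdsWithin_le_nhds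
  have tx2 : Tendsto (fun x : ℝ => x ^ 2) (𝓝[>] 0) (𝓝 0) := by simpa using tid.pow 2
  have txL := xx_log_tendsto
  have tw : Tendsto (fun x => x * K1 x) (𝓝[>] 0) (𝓝 1) := by
    refine tendsto_of_tendsto_of_tendsto_of_le_of_le' (g := fun x => 1 - x) (h := fun _ => 1)
      (by simpa using tid.const_sub 1) tendsto_const_nhds ?_ ?_
    · filter_upwards [self_mem_nhdsWithin] with x hx
      exact (xK1_bounds x hx).1
    · filter_upwards [self_mem_nhdsWithin] with x hx
      exact (xK1_bounds x hx).2
  have tF1 : Tendsto (fun x => x * K1 x - (1 - x ^ 2 / 2 * ((c - Real.log x) + 1 / 2)))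
      (𝓝[>] 0) (𝓝 0) := by
    have := (tw.sub_const 1).add ((tx2.mul_const ((c + 1/2) / 2)).sub (txL.div_const 2))
    simp only [sub_self, zero_mul, zero_div, add_zero] at this
    refine this.congr fun x => ?_
    ring
  have tF2 : Tendsto (fun x => K0 x - ((c - Real.log x) + x ^ 2 / 4 * ((c - Real.log x) + 1)))
      (𝓝[>] 0) (𝓝 0) := by
    have := (hc.sub_const c).sub ((tx2.mul_const ((c + 1) / 4)).sub (txL.div_const 4))
    simp only [sub_self, zero_mul, zero_div] at this
    refine this.congr fun x => ?_
    ring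
  have f1 : ∀ x : ℝ, 0 < x → x ≤ 1 →
      |x * K1 x - (1 - x ^ 2 / 2 * ((c - Real.log x) + 1 / 2))| ≤ x * x ^ 2 := by
    intro x hx hx1
    refine small_mvt _ _ (fun x => x ^ 2) (fun x hx _ => dF1 x hx) ?_ ?_ tF1 x hx hx1
    · intro x hx hx1
      rw [abs_neg, abs_mul, abs_of_pos hx]
      nlinarith [f0 x hx hx1]
    · intro s x hs hsx _
      gcongr
  have f2 : ∀ x : ℝ, 0 < x → x ≤ 1 →
      |K0 x - ((c - Real.log x) + x ^ 2 / 4 * ((c - Real.log x) + 1))| ≤ x * x ^ 2 := by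
    intro x hx hx1
    refine small_mvt _ _ (fun x => x ^ 2) (fun x hx _ => dF2 x hx) ?_ ?_ tF2 x hx hx1
    · intro x hx hx1
      rw [abs_div, abs_neg, abs_of_pos hx, div_le_iff₀ hx]
      nlinarith [f1 x hx hx1]
    · intro s x hs hsx _
      gcongr
  have f3 : ∀ x : ℝ, 0 < x → x ≤ 1 →
      |x * K1 x - (1 - x ^ 2 / 2 * ((c - Real.log x) + 1 / 2))| ≤
        x * ((1 + |c| + 1 + B) * (x ^ 2 * Real.sqrt x)) := by
    intro x hx hx1
    refine small_mvt _ _ (fun x => (1 + |c| + 1 + B) * (x ^ 2 * Real.sqrt x)) (fun x hx _ => dF1 x hx) ?_ ?_ tF1 x hx hx1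
    · intro x hx hx1
      rw [abs_neg, abs_mul, abs_of_pos hx]
      have hs0 := Real.sqrt_nonneg x
      have hss : Real.sqrt x * Real.sqrt x = x := Real.mul_self_sqrt hx.le
      have hs1 : Real.sqrt x ≤ 1 := Real.sqrt_le_one.2 hx1
      have hb := hB x hx hx1
      have g1 : |K0 x + Real.log x - c| ≤ x * x ^ 2 + x ^ 2 / 4 * (|c| + |Real.log x| + 1) := by
        have e : K0 x + Real.log x - c =
          (K0 x - ((c - Real.log x) + x ^ 2 / 4 * ((c - Real.log x) + 1))) +
            x ^ 2 / 4 * ((c - Real.log x) + 1) := by ring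
        rw [e]
        refine (abs_add_le _ _).trans (add_le_add (f2 x hx hx1) ?_)
        rw [abs_mul, abs_of_nonneg (by positivity : 0 ≤ x ^ 2 / 4)]
        gcongr
        refine (abs_add_le _ _).trans ?_
        rw [abs_one]
        gcongr
        exact abs_sub _ _
      have g2 : x * |K0 x + Real.log x - c| ≤
          x ^ 2 * Real.sqrt x * (Real.sqrt x * (x + 1 / 4 * (|c| + |Real.log x| + 1))) := by
        have : x ^ 2 * Real.sqrt x * (Real.sqrt x * (x + 1 / 4 * (|c| + |Real.log x| + 1)))
          = x * (x * x ^ 2 + x ^ 2 / 4 * (|c| + |Real.log x| + 1)) := by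
          linear_combination (x ^ 2 * (x + 1 / 4 * (|c| + |Real.log x| + 1))) * hss
        rw [this]
        gcongr
      refine g2.trans ?_
      rw [mul_comm]
      gcongr
      have hc0 := abs_nonneg c
      have a1 : Real.sqrt x * x ≤ 1 := by
        nlinarith
      have a2 : Real.sqrt x * (|c| + 1) ≤ |c| + 1 := by nlinarith
      have a3 : 0 ≤ Real.sqrt x * (|c| + 1) := by positivity
      have a4 : 0 ≤ Real.sqrt x * |Real.log x| := by positivity
      have a5 : 1 / 4 * (Real.sqrt x * (|c| + 1) + Real.sqrt x * |Real.log x|) ≤ (|c| + 1 + B) := by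
        nlinarith
      nlinarith
    · intro s x hs hsx _
      gcongr
  refine ⟨c, 1 + |c| + 1 + B, fun x hx hx1 => ⟨(f2 x hx hx1).trans ?_, (f3 x hx hx1).trans (le_of_eq ?_)⟩⟩
  · have : 0 ≤ |c| + 1 + B := by positivity
    have h3 : 0 < x ^ 3 := by positivity
    nlinarith
  · ring

/-- Bounded as `y → 0⁺`. -/
def Bd (f : ℝ → ℝ) : Prop := ∃ C : ℝ, ∀ᶠ y in 𝓝[>] (0:ℝ), |f y| ≤ C

lemma Bd.const (c : ℝ) : Bd (fun _ => c) := ⟨|c|, Eventually.of_forall fun _ => le_rfl⟩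

lemma Bd.add {f g : ℝ → ℝ} (hf : Bd f) (hg : Bd g) : Bd (fun y => f y + g y) := by
  obtain ⟨C, hC⟩ := hf
  obtain ⟨D, hD⟩ := hg
  refine ⟨C + D, ?_⟩
  filter_upwards [hC, hD] with y h1 h2
  exact (abs_add_le _ _).trans (add_le_add h1 h2)

lemma Bd.mul {f g : ℝ → ℝ} (hf : Bd f) (hg : Bd g) : Bd (fun y => f y * g y) := by
  obtain ⟨C, hC⟩ := hf
  obtain ⟨D, hD⟩ := hg
  refine ⟨C * D, ?_⟩
  filter_upwards [hC, hD] with y h1 h2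
  rw [abs_mul]
  exact mul_le_mul h1 h2 (abs_nonneg _) ((abs_nonneg _).trans h1)

lemma Bd.neg {f : ℝ → ℝ} (hf : Bd f) : Bd (fun y => - f y) := by
  obtain ⟨C, hC⟩ := hf
  exact ⟨C, by simpa using hC⟩

lemma Bd.sub {f g : ℝ → ℝ} (hf : Bd f) (hg : Bd g) : Bd (fun y => f y - g y) := by
  simpa [sub_eq_add_neg] using hf.add hg.neg

lemma Bd.pow {f : ℝ → ℝ} (hf : Bd f) (n : ℕ) : Bd (fun y => f y ^ n) := by
  induction n with
  | zero => simpa using Bd.const 1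
  | succ k ih => simpa [pow_succ] using ih.mul hf

lemma Bd.congr {f g : ℝ → ℝ} (hf : Bd f) (h : ∀ᶠ y in 𝓝[>] (0:ℝ), g y = f y) : Bd g := by
  obtain ⟨C, hC⟩ := hf
  refine ⟨C, ?_⟩
  filter_upwards [hC, h] with y h1 h2
  rw [h2]; exact h1

lemma ev_small (a : ℝ) (ha : 0 < a) : ∀ᶠ y in 𝓝[>] (0:ℝ), 0 < y ∧ a * y ≤ 1 := by
  filter_upwards [Ioo_mem_nhdsGT (by positivity : (0:ℝ) < 1 / a)] with y hy
  refine ⟨hy.1, ?_⟩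
  have := hy.2.le
  rw [le_div_iff₀ ha] at this
  linarith

lemma Bd.id : Bd (fun y => y) := by
  refine ⟨1, ?_⟩
  filter_upwards [ev_small 1 one_pos] with y hy
  rw [abs_of_pos hy.1]; linarith [hy.2]

lemma Bd.sqrt : Bd (fun y => Real.sqrt y) := by
  refine ⟨1, ?_⟩
  filter_upwards [ev_small 1 one_pos] with y hy
  rw [abs_of_nonneg (Real.sqrt_nonneg y)]
  exact Real.sqrt_le_one.2 (by linarith [hy.2])

lemma Bd.sqrt_log (c a : ℝ) (ha : 0 < a) :
    Bd (fun y => Real.sqrt y * (c - Real.log (a * y))) := by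
  obtain ⟨B, hB0, hB⟩ := sqrt_log_bd
  have h1 : Bd (fun y => Real.sqrt y * Real.log y) := by
    refine ⟨B, ?_⟩
    filter_upwards [ev_small 1 one_pos] with y hy
    rw [abs_mul, abs_of_nonneg (Real.sqrt_nonneg y)]
    exact hB y hy.1 (by linarith [hy.2])
  refine ((Bd.sqrt.mul (Bd.const (c - Real.log a))).sub h1).congr ?_
  filter_upwards [ev_small 1 one_pos] with y hy
  rw [Real.log_mul ha.ne' hy.1.ne']
  ring

lemma bes_signed (c C : ℝ) (H : ∀ x : ℝ, 0 < x → x ≤ 1 →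
    |K0 x - ((c - Real.log x) + x ^ 2 / 4 * ((c - Real.log x) + 1))| ≤ C * x ^ 3 ∧
    |x * K1 x - (1 - x ^ 2 / 2 * ((c - Real.log x) + 1 / 2))| ≤ C * (x ^ 3 * Real.sqrt x))
    (m s : ℝ) (hm : m ≠ 0) (hs : s = 1 ∨ s = -1) (ha : |m| = s * m) :
    ∃ e r : ℝ → ℝ, Bd e ∧ Bd r ∧ ∀ᶠ y in 𝓝[>] (0:ℝ),
      K0 (2 * π * |m| * y) = (c - Real.log (2 * π * |m| * y)) +
        π ^ 2 * m ^ 2 * y ^ 2 * ((c - Real.log (2 * π * |m| * y)) + 1) + y ^ 3 * e y ∧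
      K1 (2 * π * |m| * y) = s * (1 / (2 * π * m) / y -
        π * m * y * ((c - Real.log (2 * π * |m| * y)) + 1 / 2) + y ^ 2 * Real.sqrt y * r y) := by
  have hpi := Real.pi_pos
  have hm0 : 0 < |m| := abs_pos.2 hm
  set a := 2 * π * |m| with hadef
  have hap : 0 < a := by positivity
  have ham : a ^ 2 = 4 * π ^ 2 * m ^ 2 := by rw [hadef, mul_pow, sq_abs]; ring
  have has : a = 2 * π * (s * m) := by rw [hadef, ha]
  refine ⟨fun y => (K0 (a * y) - ((c - Real.log (a * y)) +
      (a * y) ^ 2 / 4 * ((c - Real.log (a * y)) + 1))) / y ^ 3,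
    fun y => s * (K1 (a * y) - (1 / (a * y) - (a * y) / 2 * ((c - Real.log (a * y)) + 1 / 2))) /
      (y ^ 2 * Real.sqrt y), ⟨C * a ^ 3, ?_⟩, ⟨C * (a ^ 2 * Real.sqrt a), ?_⟩, ?_⟩
  · filter_upwards [ev_small a hap] with y hy
    have hy0 := hy.1
    have := (H (a * y) (by positivity) hy.2).1
    rw [abs_div, abs_of_pos (by positivity : 0 < y ^ 3), div_le_iff₀ (by positivity)]
    refine this.trans (le_of_eq ?_)
    ring
  · filter_upwards [ev_small a hap] with y hy
    have hy0 := hy.1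
    have := (H (a * y) (by positivity) hy.2).2
    have hsy : 0 < Real.sqrt y := Real.sqrt_pos.2 hy0
    have hs1 : |s| = 1 := by rcases hs with rfl | rfl <;> simp
    rw [abs_div, abs_of_pos (by positivity : 0 < y ^ 2 * Real.sqrt y), div_le_iff₀ (by positivity),
      abs_mul, hs1, one_mul]
    have hxy : 0 < a * y := by positivity
    rw [← mul_le_mul_iff_right₀ hxy]
    have e1 : a * y * |K1 (a * y) - (1 / (a * y) - (a * y) / 2 * ((c - Real.log (a * y)) + 1 / 2))|
      = |a * y * K1 (a * y) - (1 - (a * y) ^ 2 / 2 * (c - Real.log (a * y) + 1 / 2))| := by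
      rw [← abs_of_pos hxy, ← abs_mul, abs_of_pos hxy]
      congr 1
      field_simp
    rw [e1]
    refine this.trans (le_of_eq ?_)
    rw [Real.sqrt_mul hap.le]
    ring
  · filter_upwards [ev_small a hap] with y hy
    have hy0 := hy.1
    have hsy : 0 < Real.sqrt y := Real.sqrt_pos.2 hy0
    constructor
    · rw [mul_div_cancel₀ _ (by positivity : y ^ 3 ≠ 0)]
      rw [mul_pow, ham]
      ring
    · rw [mul_div_cancel₀ _ (by positivity : y ^ 2 * Real.sqrt y ≠ 0)]
      generalize K1 (a * y) = k
      generalize Real.log (a * y) = l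
      rw [has]
      rcases hs with rfl | rfl
      · field_simp; ring
      · field_simp; ring

lemma K7_bd (a : ℝ) (ha : 0 < a) : ∃ k : ℝ → ℝ, Bd k ∧ ∀ᶠ y in 𝓝[>] (0:ℝ),
    Real.sqrt y * K7half (2 * π * a * y) = 1 / (2 * Real.sqrt a) *
      (15 / (2 * π * a * y) ^ 3 - 3 / 2 / (2 * π * a * y) + k y) := by
  have hpi := Real.pi_pos
  have hap : 0 < 2 * π * a := by positivity
  refine ⟨fun y => (1 + 6 / (2 * π * a * y) + 15 / (2 * π * a * y) ^ 2 + 15 / (2 * π * a * y) ^ 3)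
    * Real.exp (-(2 * π * a * y)) - (15 / (2 * π * a * y) ^ 3 - 3 / 2 / (2 * π * a * y)),
    ⟨60, ?_⟩, ?_⟩
  · filter_upwards [ev_small _ hap] with y hy
    have hx0 : 0 < 2 * π * a * y := mul_pos hap hy.1
    have hx1 := hy.2
    generalize 2 * π * a * y = x at *
    have hb := Real.exp_bound (x := -x) (by rw [abs_neg, abs_of_pos hx0]; exact hx1) (n := 4) (by norm_num)
    simp only [Finset.sum_range_succ, Finset.sum_range_zero] at hb
    norm_num [Nat.factorial] at hb
    obtain ⟨ρ, hρ⟩ : ∃ ρ, Real.exp (-x) = 1 - x + x ^ 2 / 2 - x ^ 3 / 6 + x ^ 4 * ρ :=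
      ⟨(Real.exp (-x) - (1 - x + x ^ 2 / 2 - x ^ 3 / 6)) / x ^ 4, by field_simp; ring⟩
    have hρ1 : |ρ| ≤ 1 := by
      have e : Real.exp (-x) - (1 + -x + x ^ 2 / 2 + (-x) ^ 3 / 6) = x ^ 4 * ρ := by
        rw [hρ]; ring
      rw [e, abs_mul, abs_of_pos (by positivity : 0 < x ^ 4), abs_of_pos hx0] at hb
      have : 0 < x ^ 4 := by positivity
      by_contra hh
      push Not at hh
      nlinarith
    rw [hρ]
    have e2 : (1 + 6 / x + 15 / x ^ 2 + 15 / x ^ 3) * (1 - x + x ^ 2 / 2 - x ^ 3 / 6 + x ^ 4 * ρ)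
      - (15 / x ^ 3 - 3 / 2 / x) = (x ^ 2 * (-1 / 2) - x ^ 3 / 6 - x / 2) + (x ^ 4 + 6 * x ^ 3 + 15 * x ^ 2 + 15 * x) * ρ := by
      field_simp
      ring
    rw [e2]
    have p2 : x ^ 2 ≤ 1 := pow_le_one₀ hx0.le hx1
    have p3 : x ^ 3 ≤ 1 := pow_le_one₀ hx0.le hx1
    have p4 : x ^ 4 ≤ 1 := pow_le_one₀ hx0.le hx1
    have q2 : 0 < x ^ 2 := by positivity
    have q3 : 0 < x ^ 3 := by positivity
    have hW : 0 < x ^ 4 + 6 * x ^ 3 + 15 * x ^ 2 + 15 * x := by positivity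
    refine (abs_add_le _ _).trans ?_
    rw [abs_mul, abs_of_pos hW]
    have b1 : |x ^ 2 * (-1 / 2) - x ^ 3 / 6 - x / 2| ≤ 2 := by
      rw [abs_le]; constructor <;> linarith
    have b2 : (x ^ 4 + 6 * x ^ 3 + 15 * x ^ 2 + 15 * x) * |ρ| ≤
        (x ^ 4 + 6 * x ^ 3 + 15 * x ^ 2 + 15 * x) * 1 := by gcongr
    linarith
  · filter_upwards [ev_small _ hap] with y hy
    have hy0 := hy.1
    have e1 : Real.sqrt y * Real.sqrt (π / (2 * (2 * π * a * y))) = 1 / (2 * Real.sqrt a) := by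
      rw [← Real.sqrt_mul hy0.le]
      have : y * (π / (2 * (2 * π * a * y))) = 1 / (2 ^ 2 * a) := by field_simp
      rw [this, Real.sqrt_div zero_le_one, Real.sqrt_mul (by norm_num), Real.sqrt_sq (by norm_num),
        Real.sqrt_one]
    rw [K7half, ← mul_assoc, ← mul_assoc, e1]
    ring

/-- Expansion of the bilinear combination of Bessel functions. -/
lemma comb_expand (y t L1 L2 e1 e2 r1 r2 p1 p2 k1 k2 h1 h2 A B C1 D1 C2 D2 E : ℝ)
    (hy : 0 < y) (ht : t * t = y) :
    (A * y + B / y) * (L1 + p1 * y ^ 2 * (L1 + 1) + y ^ 3 * e1) *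
        (L2 + p2 * y ^ 2 * (L2 + 1) + y ^ 3 * e2) +
      (C1 + D1 / y ^ 2) * (L1 + p1 * y ^ 2 * (L1 + 1) + y ^ 3 * e1) *
        (k2 / y - h2 * y * (L2 + 1 / 2) + y ^ 2 * t * r2) +
      (C2 + D2 / y ^ 2) * (k1 / y - h1 * y * (L1 + 1 / 2) + y ^ 2 * t * r1) *
        (L2 + p2 * y ^ 2 * (L2 + 1) + y ^ 3 * e2) +
      (A * y + E / y) * (k1 / y - h1 * y * (L1 + 1 / 2) + y ^ 2 * t * r1) *
        (k2 / y - h2 * y * (L2 + 1 / 2) + y ^ 2 * t * r2) =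
    (D1 * L1 * k2 + D2 * L2 * k1 + E * k1 * k2) / y ^ 3 +
    (B * L1 * L2 + C1 * L1 * k2 + D1 * (p1 * k2 * (L1 + 1) - h2 * L1 * (L2 + 1 / 2)) +
      C2 * L2 * k1 + D2 * (p2 * k1 * (L2 + 1) - h1 * L2 * (L1 + 1 / 2)) +
      A * k1 * k2 - E * (k1 * h2 * (L2 + 1 / 2) + k2 * h1 * (L1 + 1 / 2))) / y +
    (A * (t * L1) * (t * L2) + (A * y ^ 2 + B) *
        ((t * L1) * (p2 * (t * L2 + t) + y * t * e2) + (t * L2) * (p1 * (t * L1 + t) + y * t * e1)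
          + y ^ 2 * (p1 * (t * L1 + t) + y * t * e1) * (p2 * (t * L2 + t) + y * t * e2)) +
      C1 * (p1 * k2 * t * (t * L1 + t) - h2 * (t * L1) * (t * L2 + t / 2)) +
      (C1 * y ^ 2 + D1) * ((t * L1) * r2 - p1 * h2 * (t * L1 + t) * (t * L2 + t / 2) +
        y ^ 2 * p1 * (t * L1 + t) * r2 + e1 * k2 - e1 * y * t * h2 * (t * L2 + t / 2) +
        y ^ 3 * t * e1 * r2) +
      C2 * (p2 * k1 * t * (t * L2 + t) - h1 * (t * L2) * (t * L1 + t / 2)) +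
      (C2 * y ^ 2 + D2) * ((t * L2) * r1 - p2 * h1 * (t * L2 + t) * (t * L1 + t / 2) +
        y ^ 2 * p2 * (t * L2 + t) * r1 + e2 * k1 - e2 * y * t * h1 * (t * L1 + t / 2) +
        y ^ 3 * t * e2 * r1) -
      A * (k1 * h2 * t * (t * L2 + t / 2) + k2 * h1 * t * (t * L1 + t / 2)) +
      (A * y ^ 2 + E) * (k1 * t * r2 + k2 * t * r1 + h1 * h2 * (t * L1 + t / 2) * (t * L2 + t / 2)
        - h1 * y ^ 2 * (t * L1 + t / 2) * r2 - h2 * y ^ 2 * (t * L2 + t / 2) * r1 +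
        y ^ 4 * r1 * r2)) := by
  have ht0 : t ≠ 0 := by rintro rfl; simp at ht; linarith
  subst ht
  field_simp
  ring

lemma sing3 (p m1 m2 L1 L2 l : ℝ) (hp : p ≠ 0) (hm1 : m1 ≠ 0) (hm2 : m2 ≠ 0) (hN : m1 + m2 ≠ 0)
    (hl : l = L2 - L1) :
    32 * p / (3 * (m1 * m2) * (m1 + m2) ^ 5) *
      (30 / (p * (m1 + m2)) ^ 2 * (m1 * m2 ^ 2) * (m1 - m2) * L1 * (1 / (2 * p * m2)) +
       30 / (p * (m1 + m2)) ^ 2 * (m2 * m1 ^ 2) * (m2 - m1) * L2 * (1 / (2 * p * m1)) +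
       -((14 * m1 ^ 3 * m2 - 94 * m1 ^ 2 * m2 ^ 2 + 14 * m1 * m2 ^ 3 + m1 ^ 4 + m2 ^ 4) /
         (p * (m1 + m2))) * (1 / (2 * p * m1)) * (1 / (2 * p * m2))) +
    128 * p / (45 * m1 ^ 2 * m2 ^ 2) * (m1 ^ 5 + m2 ^ 5 + 15 * m1 ^ 4 * m2 + 15 * m1 * m2 ^ 4 -
      80 * m1 ^ 3 * m2 ^ 2 - 80 * m1 ^ 2 * m2 ^ 3 + 60 * m1 ^ 2 * m2 ^ 2 * (m1 - m2) * l) /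
      (2 * (m1 + m2) ^ 4) * (15 / (2 * p * (m1 + m2)) ^ 3) = 0 := by
  subst hl
  field_simp
  ring

lemma sing1 (p m1 m2 L1 L2 l : ℝ) (hp : p ≠ 0) (hm1 : m1 ≠ 0) (hm2 : m2 ≠ 0) (hN : m1 + m2 ≠ 0)
    (hl : l = L2 - L1) (A B C1 D1 C2 D2 E p1 p2 k1 k2 h1 h2 : ℝ)
    (hA : A = -4 * (p * (m1 + m2)) * (m1 * m2) * (m1 ^ 2 + m2 ^ 2 - 6 * m1 * m2))
    (hB : B = -(30 / (p * (m1 + m2)) * (m1 * m2) * (m1 - m2) ^ 2))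
    (hC1 : C1 = -m1 * (13 * m1 ^ 2 * m2 - 65 * m1 * m2 ^ 2 + m1 ^ 3 + 19 * m2 ^ 3))
    (hD1 : D1 = 30 / (p * (m1 + m2)) ^ 2 * (m1 * m2 ^ 2) * (m1 - m2))
    (hC2 : C2 = -m2 * (13 * m2 ^ 2 * m1 - 65 * m2 * m1 ^ 2 + m2 ^ 3 + 19 * m1 ^ 3))
    (hD2 : D2 = 30 / (p * (m1 + m2)) ^ 2 * (m2 * m1 ^ 2) * (m2 - m1))
    (hE : E = -((14 * m1 ^ 3 * m2 - 94 * m1 ^ 2 * m2 ^ 2 + 14 * m1 * m2 ^ 3 + m1 ^ 4 + m2 ^ 4) /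
         (p * (m1 + m2))))
    (hp1 : p1 = p ^ 2 * m1 ^ 2) (hp2 : p2 = p ^ 2 * m2 ^ 2)
    (hk1 : k1 = 1 / (2 * p * m1)) (hk2 : k2 = 1 / (2 * p * m2))
    (hh1 : h1 = p * m1) (hh2 : h2 = p * m2) :
    32 * p / (3 * (m1 * m2) * (m1 + m2) ^ 5) *
      (B * L1 * L2 + C1 * L1 * k2 + D1 * (p1 * k2 * (L1 + 1) - h2 * L1 * (L2 + 1 / 2)) +
      C2 * L2 * k1 + D2 * (p2 * k1 * (L2 + 1) - h1 * L2 * (L1 + 1 / 2)) +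
      A * k1 * k2 - E * (k1 * h2 * (L2 + 1 / 2) + k2 * h1 * (L1 + 1 / 2))) -
    128 * p / (45 * m1 ^ 2 * m2 ^ 2) * (m1 ^ 5 + m2 ^ 5 + 15 * m1 ^ 4 * m2 + 15 * m1 * m2 ^ 4 -
      80 * m1 ^ 3 * m2 ^ 2 - 80 * m1 ^ 2 * m2 ^ 3 + 60 * m1 ^ 2 * m2 ^ 2 * (m1 - m2) * l) /
      (2 * (m1 + m2) ^ 4) * (3 / 2 / (2 * p * (m1 + m2))) = 8 / (5 * m1 ^ 2 * m2 ^ 2) := by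
  subst hl hA hB hC1 hD1 hC2 hD2 hE hp1 hp2 hk1 hk2 hh1 hh2
  field_simp
  ring

lemma int_sign_cases (n : ℤ) (hn : n ≠ 0) : ∃ s : ℝ, (s = 1 ∨ s = -1) ∧ (n.sign : ℝ) = s ∧
    |(n : ℝ)| = s * n := by
  rcases lt_or_gt_of_ne hn with h | h
  · refine ⟨-1, Or.inr rfl, by simp [Int.sign_eq_neg_one_of_neg h], ?_⟩
    rw [abs_of_neg (by exact_mod_cast h)]; ring
  · refine ⟨1, Or.inl rfl, by simp [Int.sign_eq_one_of_pos h], ?_⟩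
    rw [abs_of_pos (by exact_mod_cast h)]; ring

lemma eps_eq (n₁ n₂ : ℤ) (h₁ : n₁ ≠ 0) :
    eps1 n₁ n₂ = ((n₁.sign * (n₁ + n₂).sign : ℤ) : ℝ) ∧
    eps2 n₁ n₂ = ((n₂.sign * (n₁ + n₂).sign : ℤ) : ℝ) := by
  unfold eps1 eps2
  split_ifs with hp
  · rcases lt_or_gt_of_ne h₁ with a | a
    · have b : n₂ < 0 := by
        by_contra hb; push Not at hb; nlinarith
      simp [Int.sign_eq_neg_one_of_neg a, Int.sign_eq_neg_one_of_neg b,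
        Int.sign_eq_neg_one_of_neg (by omega : n₁ + n₂ < 0)]
    · have b : 0 < n₂ := by
        by_contra hb; push Not at hb; nlinarith
      simp [Int.sign_eq_one_of_pos a, Int.sign_eq_one_of_pos b,
        Int.sign_eq_one_of_pos (by omega : 0 < n₁ + n₂)]
  · exact ⟨rfl, rfl⟩

lemma fP2_signed (n₁ n₂ : ℤ) (h₁ : n₁ ≠ 0) (y s1 s2 s κ1 κ2 : ℝ) (hs1 : s1 = 1 ∨ s1 = -1) (hs2 : s2 = 1 ∨ s2 = -1) (hs : s = 1 ∨ s = -1)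
    (g1 : (n₁.sign : ℝ) = s1) (g2 : (n₂.sign : ℝ) = s2) (g : ((n₁ + n₂).sign : ℝ) = s)
    (a1 : |(n₁ : ℝ)| = s1 * n₁) (a2 : |(n₂ : ℝ)| = s2 * n₂)
    (a : |((n₁ + n₂ : ℤ) : ℝ)| = s * (n₁ + n₂))
    (hk1 : K1 (2 * π * |(n₁ : ℝ)| * y) = s1 * κ1) (hk2 : K1 (2 * π * |(n₂ : ℝ)| * y) = s2 * κ2)
    (k01 k02 : ℝ) (hk01 : K0 (2 * π * |(n₁ : ℝ)| * y) = k01)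
    (hk02 : K0 (2 * π * |(n₂ : ℝ)| * y) = k02)
    (m1 m2 : ℝ) (hm1 : (n₁ : ℝ) = m1) (hm2 : (n₂ : ℝ) = m2) :
    fP2 n₁ n₂ y = (sigma2 n₁.natAbs : ℝ) * (sigma2 n₂.natAbs : ℝ) *
      (32 * π / (3 * (m1 * m2) * (m1 + m2) ^ 5) *
      ((-4 * (π * (m1 + m2)) * (m1 * m2) * (m1 ^ 2 + m2 ^ 2 - 6 * m1 * m2) * y +
          -(30 / (π * (m1 + m2)) * (m1 * m2) * (m1 - m2) ^ 2) / y) * k01 * k02 +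
       (-m1 * (13 * m1 ^ 2 * m2 - 65 * m1 * m2 ^ 2 + m1 ^ 3 + 19 * m2 ^ 3) +
          30 / (π * (m1 + m2)) ^ 2 * (m1 * m2 ^ 2) * (m1 - m2) / y ^ 2) * k01 * κ2 +
       (-m2 * (13 * m2 ^ 2 * m1 - 65 * m2 * m1 ^ 2 + m2 ^ 3 + 19 * m1 ^ 3) +
          30 / (π * (m1 + m2)) ^ 2 * (m2 * m1 ^ 2) * (m2 - m1) / y ^ 2) * κ1 * k02 +
       (-4 * (π * (m1 + m2)) * (m1 * m2) * (m1 ^ 2 + m2 ^ 2 - 6 * m1 * m2) * y +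
          -((14 * m1 ^ 3 * m2 - 94 * m1 ^ 2 * m2 ^ 2 + 14 * m1 * m2 ^ 3 + m1 ^ 4 + m2 ^ 4) /
         (π * (m1 + m2))) / y) * κ1 * κ2)) := by
  obtain ⟨ee1, ee2⟩ := eps_eq n₁ n₂ h₁
  have hsg : ((n₁ * n₂).sign : ℝ) = s1 * s2 := by
    rw [Int.sign_mul]; push_cast; rw [g1, g2]
  have ha12 : |((n₁ * n₂ : ℤ) : ℝ)| = s1 * s2 * (m1 * m2) := by
    push_cast; rw [abs_mul, a1, a2, hm1, hm2]; ring
  unfold fP2 q00 q01 q10 q11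
  rw [ee1, ee2, hsg, ha12, a, hk1, hk2, hk01, hk02]
  push_cast
  rw [g1, g2, g, hm1, hm2]
  clear hk1 hk2 hk01 hk02 a1 a2 a g1 g2 g ee1 ee2 hsg ha12 hm1 hm2
  generalize m1 + m2 = N
  generalize (sigma2 n₁.natAbs : ℝ) = σ1
  generalize (sigma2 n₂.natAbs : ℝ) = σ2
  rcases hs1 with rfl | rfl <;> rcases hs2 with rfl | rfl <;> rcases hs with rfl | rfl <;>
    simp only [one_mul, mul_one, neg_mul, mul_neg, neg_neg] <;> ring

lemma alpha_signed (n₁ n₂ : ℤ) (h : n₁ + n₂ ≠ 0) (y s v k : ℝ) (hs : s = 1 ∨ s = -1)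
    (g : ((n₁ + n₂).sign : ℝ) = s)
    (m1 m2 : ℝ) (hm1 : (n₁ : ℝ) = m1) (hm2 : (n₂ : ℝ) = m2)
    (a : |((n₁ + n₂ : ℤ) : ℝ)| = s * (m1 + m2))
    (hv : Real.sqrt y * v = 1 / (2 * Real.sqrt |((n₁ + n₂ : ℤ) : ℝ)|) *
      (15 / (2 * π * |((n₁ + n₂ : ℤ) : ℝ)| * y) ^ 3 -
        3 / 2 / (2 * π * |((n₁ + n₂ : ℤ) : ℝ)| * y) + k)) :
    alphaN1N2 n₁ n₂ * Real.sqrt y * v = (sigma2 n₁.natAbs : ℝ) * (sigma2 n₂.natAbs : ℝ) *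
      (128 * π / (45 * m1 ^ 2 * m2 ^ 2) * (m1 ^ 5 + m2 ^ 5 + 15 * m1 ^ 4 * m2 + 15 * m1 * m2 ^ 4 -
      80 * m1 ^ 3 * m2 ^ 2 - 80 * m1 ^ 2 * m2 ^ 3 + 60 * m1 ^ 2 * m2 ^ 2 * (m1 - m2) *
        Real.log |m1 / m2|) / (2 * (m1 + m2) ^ 4) *
      (15 / (2 * π * (m1 + m2)) ^ 3 / y ^ 3 - 3 / 2 / (2 * π * (m1 + m2)) / y + s * k)) := by
  have hN : 0 < |((n₁ + n₂ : ℤ) : ℝ)| := abs_pos.2 (by exact_mod_cast h)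
  rw [mul_assoc, hv, alphaN1N2, g, hm1, hm2]
  have hpw : ∀ b : ℝ, 0 < b → b ^ ((7:ℝ)/2) = b ^ 3 * Real.sqrt b := by
    intro b hb
    rw [Real.sqrt_eq_rpow, ← Real.rpow_natCast b 3, ← Real.rpow_add hb]
    norm_num
  rw [hpw _ hN]
  have hsq := Real.mul_self_sqrt hN.le
  have h4 : ∀ X : ℝ, |((n₁ + n₂ : ℤ) : ℝ)| ^ 3 * Real.sqrt |((n₁ + n₂ : ℤ) : ℝ)| *
      Real.sqrt |((n₁ + n₂ : ℤ) : ℝ)| = (m1 + m2) ^ 4 := by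
    intro _
    rw [mul_assoc, hsq, a]
    rcases hs with rfl | rfl <;> ring
  have h5 := h4 0
  generalize Real.sqrt |((n₁ + n₂ : ℤ) : ℝ)| = q at *
  generalize Real.log |m1 / m2| = l at *
  generalize (sigma2 n₁.natAbs : ℝ) = σ1 at *
  generalize (sigma2 n₂.natAbs : ℝ) = σ2 at *
  rw [← h5, a]
  clear h4 h5 hsq hv a hN
  generalize m1 + m2 = N
  rcases hs with rfl | rfl <;> ring

set_option maxHeartbeats 4000000 in
/-- the complete mode `f̂_{n₁,n₂}` differs from
`8σ₂(|n₁|)σ₂(|n₂|)/(5 n₁² n₂² y)` by a bounded quantity as `y → 0⁺`. -/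
theorem mode_n1n2_small_y (n₁ n₂ : ℤ) (h₁ : n₁ ≠ 0) (h₂ : n₂ ≠ 0) (h : n₁ + n₂ ≠ 0) :
    ∃ C : ℝ, ∀ᶠ y in nhdsWithin (0 : ℝ) (Set.Ioi 0),
      |(fP2 n₁ n₂ y +
          alphaN1N2 n₁ n₂ * Real.sqrt y * K7half (2 * π * |((n₁ + n₂ : ℤ) : ℝ)| * y)) -
        8 * (sigma2 n₁.natAbs : ℝ) * (sigma2 n₂.natAbs : ℝ) /
          (5 * (n₁ : ℝ) ^ 2 * (n₂ : ℝ) ^ 2 * y)| ≤ C := by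
  obtain ⟨c, C, H⟩ := bes_asymp
  obtain ⟨s1, hs1, g1, a1⟩ := int_sign_cases n₁ h₁
  obtain ⟨s2, hs2, g2, a2⟩ := int_sign_cases n₂ h₂
  obtain ⟨s, hs, g, a⟩ := int_sign_cases (n₁ + n₂) h
  have hm1 : (n₁ : ℝ) ≠ 0 := by exact_mod_cast h₁
  have hm2 : (n₂ : ℝ) ≠ 0 := by exact_mod_cast h₂
  have hN : (n₁ : ℝ) + n₂ ≠ 0 := by exact_mod_cast h
  have hpi := Real.pi_pos
  obtain ⟨e1, r1, be1, br1, E1⟩ := bes_signed c C H n₁ s1 hm1 hs1 a1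
  obtain ⟨e2, r2, be2, br2, E2⟩ := bes_signed c C H n₂ s2 hm2 hs2 a2
  obtain ⟨k, bk, Ek⟩ := K7_bd |((n₁ + n₂ : ℤ) : ℝ)| (abs_pos.2 (by exact_mod_cast h))
  have a' : |((n₁ + n₂ : ℤ) : ℝ)| = s * ((n₁ : ℝ) + n₂) := by rw [a]; push_cast; ring
  have bl1 := Bd.sqrt_log c (2 * π * |(n₁ : ℝ)|) (by positivity)
  have bl2 := Bd.sqrt_log c (2 * π * |(n₂ : ℝ)|) (by positivity)
  have bt := Bd.sqrt
  have bid := Bd.id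
  change Bd _
  obtain ⟨A, hA⟩ : ∃ A : ℝ, A = -4 * (π * ((n₁:ℝ) + n₂)) * (n₁ * n₂) * ((n₁:ℝ) ^ 2 + (n₂:ℝ) ^ 2 - 6 * n₁ * n₂) := ⟨_, rfl⟩
  obtain ⟨B, hB⟩ : ∃ B : ℝ, B = -(30 / (π * ((n₁:ℝ) + n₂)) * (n₁ * n₂) * ((n₁:ℝ) - n₂) ^ 2) := ⟨_, rfl⟩
  obtain ⟨C1, hC1⟩ : ∃ x : ℝ, x = -(n₁:ℝ) * (13 * (n₁:ℝ) ^ 2 * n₂ - 65 * n₁ * (n₂:ℝ) ^ 2 + (n₁:ℝ) ^ 3 + 19 * (n₂:ℝ) ^ 3) := ⟨_, rfl⟩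
  obtain ⟨D1, hD1⟩ : ∃ x : ℝ, x = 30 / (π * ((n₁:ℝ) + n₂)) ^ 2 * (n₁ * (n₂:ℝ) ^ 2) * ((n₁:ℝ) - n₂) := ⟨_, rfl⟩
  obtain ⟨C2, hC2⟩ : ∃ x : ℝ, x = -(n₂:ℝ) * (13 * (n₂:ℝ) ^ 2 * n₁ - 65 * n₂ * (n₁:ℝ) ^ 2 + (n₂:ℝ) ^ 3 + 19 * (n₁:ℝ) ^ 3) := ⟨_, rfl⟩
  obtain ⟨D2, hD2⟩ : ∃ x : ℝ, x = 30 / (π * ((n₁:ℝ) + n₂)) ^ 2 * (n₂ * (n₁:ℝ) ^ 2) * ((n₂:ℝ) - n₁) := ⟨_, rfl⟩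
  obtain ⟨E, hE⟩ : ∃ x : ℝ, x = -((14 * (n₁:ℝ) ^ 3 * n₂ - 94 * (n₁:ℝ) ^ 2 * (n₂:ℝ) ^ 2 + 14 * n₁ * (n₂:ℝ) ^ 3 + (n₁:ℝ) ^ 4 + (n₂:ℝ) ^ 4) /
         (π * ((n₁:ℝ) + n₂))) := ⟨_, rfl⟩
  obtain ⟨p1, hp1⟩ : ∃ x : ℝ, x = π ^ 2 * (n₁:ℝ) ^ 2 := ⟨_, rfl⟩
  obtain ⟨p2, hp2⟩ : ∃ x : ℝ, x = π ^ 2 * (n₂:ℝ) ^ 2 := ⟨_, rfl⟩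
  obtain ⟨k1, hk1⟩ : ∃ x : ℝ, x = 1 / (2 * π * (n₁:ℝ)) := ⟨_, rfl⟩
  obtain ⟨k2, hk2⟩ : ∃ x : ℝ, x = 1 / (2 * π * (n₂:ℝ)) := ⟨_, rfl⟩
  obtain ⟨h1, hh1⟩ : ∃ x : ℝ, x = π * (n₁:ℝ) := ⟨_, rfl⟩
  obtain ⟨h2, hh2⟩ : ∃ x : ℝ, x = π * (n₂:ℝ) := ⟨_, rfl⟩
  obtain ⟨P, hP⟩ : ∃ x : ℝ, x = 32 * π / (3 * ((n₁:ℝ) * n₂) * ((n₁:ℝ) + n₂) ^ 5) := ⟨_, rfl⟩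
  obtain ⟨l, hl⟩ : ∃ x : ℝ, x = Real.log |(n₁:ℝ) / n₂| := ⟨_, rfl⟩
  obtain ⟨Q, hQ⟩ : ∃ x : ℝ, x = 128 * π / (45 * (n₁:ℝ) ^ 2 * (n₂:ℝ) ^ 2) * ((n₁:ℝ) ^ 5 + (n₂:ℝ) ^ 5 + 15 * (n₁:ℝ) ^ 4 * n₂ + 15 * n₁ * (n₂:ℝ) ^ 4 -
      80 * (n₁:ℝ) ^ 3 * (n₂:ℝ) ^ 2 - 80 * (n₁:ℝ) ^ 2 * (n₂:ℝ) ^ 3 + 60 * (n₁:ℝ) ^ 2 * (n₂:ℝ) ^ 2 * ((n₁:ℝ) - n₂) *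
        l) / (2 * ((n₁:ℝ) + n₂) ^ 4) := ⟨_, rfl⟩
  obtain ⟨L1, hL1⟩ : ∃ f : ℝ → ℝ, f = fun y => c - Real.log (2 * π * |(n₁:ℝ)| * y) := ⟨_, rfl⟩
  obtain ⟨L2, hL2⟩ : ∃ f : ℝ → ℝ, f = fun y => c - Real.log (2 * π * |(n₂:ℝ)| * y) := ⟨_, rfl⟩
  have bL1 : Bd (fun y => Real.sqrt y * L1 y) := by rw [hL1]; exact bl1
  have bL2 : Bd (fun y => Real.sqrt y * L2 y) := by rw [hL2]; exact bl2
  have hLL : ∀ y : ℝ, 0 < y → l = L2 y - L1 y := by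
    intro y hy
    rw [hl, hL1, hL2, abs_div, Real.log_div (abs_pos.2 hm1).ne' (abs_pos.2 hm2).ne']
    simp only
    rw [Real.log_mul (by positivity) hy.ne', Real.log_mul (by positivity) hy.ne',
      Real.log_mul (by positivity) (abs_pos.2 hm1).ne', Real.log_mul (by positivity) (abs_pos.2 hm2).ne']
    ring
  have key : Bd (fun y => (sigma2 n₁.natAbs : ℝ) * (sigma2 n₂.natAbs : ℝ) * (P *
    (A * (Real.sqrt y * L1 y) * (Real.sqrt y * L2 y) + (A * y ^ 2 + B) *
        ((Real.sqrt y * L1 y) * (p2 * (Real.sqrt y * L2 y + Real.sqrt y) + y * Real.sqrt y * e2 y) + (Real.sqrt y * L2 y) * (p1 * (Real.sqrt y * L1 y + Real.sqrt y) + y * Real.sqrt y * e1 y)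
          + y ^ 2 * (p1 * (Real.sqrt y * L1 y + Real.sqrt y) + y * Real.sqrt y * e1 y) * (p2 * (Real.sqrt y * L2 y + Real.sqrt y) + y * Real.sqrt y * e2 y)) +
      C1 * (p1 * k2 * Real.sqrt y * (Real.sqrt y * L1 y + Real.sqrt y) - h2 * (Real.sqrt y * L1 y) * (Real.sqrt y * L2 y + Real.sqrt y / 2)) +
      (C1 * y ^ 2 + D1) * ((Real.sqrt y * L1 y) * r2 y - p1 * h2 * (Real.sqrt y * L1 y + Real.sqrt y) * (Real.sqrt y * L2 y + Real.sqrt y / 2) +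
        y ^ 2 * p1 * (Real.sqrt y * L1 y + Real.sqrt y) * r2 y + e1 y * k2 - e1 y * y * Real.sqrt y * h2 * (Real.sqrt y * L2 y + Real.sqrt y / 2) +
        y ^ 3 * Real.sqrt y * e1 y * r2 y) +
      C2 * (p2 * k1 * Real.sqrt y * (Real.sqrt y * L2 y + Real.sqrt y) - h1 * (Real.sqrt y * L2 y) * (Real.sqrt y * L1 y + Real.sqrt y / 2)) +
      (C2 * y ^ 2 + D2) * ((Real.sqrt y * L2 y) * r1 y - p2 * h1 * (Real.sqrt y * L2 y + Real.sqrt y) * (Real.sqrt y * L1 y + Real.sqrt y / 2) +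
        y ^ 2 * p2 * (Real.sqrt y * L2 y + Real.sqrt y) * r1 y + e2 y * k1 - e2 y * y * Real.sqrt y * h1 * (Real.sqrt y * L1 y + Real.sqrt y / 2) +
        y ^ 3 * Real.sqrt y * e2 y * r1 y) -
      A * (k1 * h2 * Real.sqrt y * (Real.sqrt y * L2 y + Real.sqrt y / 2) + k2 * h1 * Real.sqrt y * (Real.sqrt y * L1 y + Real.sqrt y / 2)) +
      (A * y ^ 2 + E) * (k1 * Real.sqrt y * r2 y + k2 * Real.sqrt y * r1 y + h1 * h2 * (Real.sqrt y * L1 y + Real.sqrt y / 2) * (Real.sqrt y * L2 y + Real.sqrt y / 2)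
        - h1 * y ^ 2 * (Real.sqrt y * L1 y + Real.sqrt y / 2) * r2 y - h2 * y ^ 2 * (Real.sqrt y * L2 y + Real.sqrt y / 2) * r1 y +
        y ^ 4 * r1 y * r2 y)) + Q * (s * k y))) := by
    simp only [div_eq_mul_inv]
    repeat' first
      | with_reducible exact Bd.const _
      | with_reducible assumption
      | with_reducible apply Bd.add
      | with_reducible apply Bd.sub
      | with_reducible apply Bd.mul
      | with_reducible apply Bd.pow
  refine key.congr ?_
  filter_upwards [E1, E2, Ek, self_mem_nhdsWithin] with y F1 F2 Fk hy
  have hy : 0 < y := hy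
  rw [show c - Real.log (2 * π * |(n₁:ℝ)| * y) = L1 y by rw [hL1],
    ← hp1, ← hk1, ← hh1] at F1
  rw [show c - Real.log (2 * π * |(n₂:ℝ)| * y) = L2 y by rw [hL2],
    ← hp2, ← hk2, ← hh2] at F2
  have hLy := hLL y hy
  rw [fP2_signed n₁ n₂ h₁ y s1 s2 s _ _ hs1 hs2 hs g1 g2 g a1 a2 a' F1.2 F2.2 _ _ F1.1 F2.1
    _ _ rfl rfl, alpha_signed n₁ n₂ h y s _ _ hs g _ _ rfl rfl a' Fk]
  rw [← hA, ← hB, ← hC1, ← hC2, ← hD1, ← hD2, ← hE, ← hP, ← hl, ← hQ,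
    comb_expand y (Real.sqrt y) (L1 y) (L2 y) (e1 y) (e2 y) (r1 y) (r2 y) p1 p2 k1 k2 h1 h2 A B C1 D1 C2 D2 E hy
      (Real.mul_self_sqrt hy.le)]
  have S3 := sing3 π n₁ n₂ (L1 y) (L2 y) l hpi.ne' hm1 hm2 hN hLy
  have S1 := sing1 π n₁ n₂ (L1 y) (L2 y) l hpi.ne' hm1 hm2 hN hLy A B C1 D1 C2 D2 E p1 p2 k1 k2 h1 h2
    hA hB hC1 hD1 hC2 hD2 hE hp1 hp2 hk1 hk2 hh1 hh2
  rw [← hD1, ← hD2, ← hE, ← hk1, ← hk2, ← hP, ← hQ] at S3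
  rw [← hP, ← hQ] at S1
  have T : 8 * (sigma2 n₁.natAbs : ℝ) * (sigma2 n₂.natAbs : ℝ) / (5 * (n₁ : ℝ) ^ 2 * (n₂ : ℝ) ^ 2 * y)
    = (sigma2 n₁.natAbs : ℝ) * (sigma2 n₂.natAbs : ℝ) * (8 / (5 * (n₁ : ℝ) ^ 2 * (n₂ : ℝ) ^ 2)) / y := by
    field_simp
  rw [T, ← S1]
  linear_combination ((sigma2 n₁.natAbs : ℝ) * (sigma2 n₂.natAbs : ℝ) / y ^ 3) * S3
end

section
/- Let n₁ be a nonzero integer and let f(y) = (32π·σ₂(|n₁|)²/(315·|n₁|³)) · ∑_{i,j ∈ {0,1}} r^{ij}(π|n₁|y)·K_i(2π|n₁|y)·K_j(2π|n₁|y), where r⁰⁰(z) = z·(−512z⁴ + 48z² − 15), r⁰¹(z) = r¹⁰(z) = −(128z⁴ + 12z² + 15), and r¹¹(z) = (512z⁶ + 16z⁴ + 33z² − 15)/z. Then f(y) + 8·σ₂(|n₁|)²/(21·n₁⁶·π²·y³) − 8·σ₂(|n₁|)²/(5·n₁⁴·y) remains bounded as y → 0⁺. -/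
open Real

/-- The coefficient `r⁰⁰`. -/
noncomputable def r00 (z : ℝ) : ℝ := z * (-512 * z ^ 4 + 48 * z ^ 2 - 15)

/-- The coefficient `r⁰¹ = r¹⁰`. -/
noncomputable def r01 (z : ℝ) : ℝ := -(128 * z ^ 4 + 12 * z ^ 2 + 15)

/-- The coefficient `r¹¹`. -/
noncomputable def r11 (z : ℝ) : ℝ := (512 * z ^ 6 + 16 * z ^ 4 + 33 * z ^ 2 - 15) / z

/-- The particular solution `f̂^P_{n₁,-n₁}`. -/
noncomputable def fPdiag (n₁ : ℤ) (y : ℝ) : ℝ :=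
  32 * π * (sigma2 n₁.natAbs : ℝ) ^ 2 / (315 * |(n₁ : ℝ)| ^ 3) *
    (r00 (π * |(n₁ : ℝ)| * y) * K0 (2 * π * |(n₁ : ℝ)| * y) * K0 (2 * π * |(n₁ : ℝ)| * y) +
      r01 (π * |(n₁ : ℝ)| * y) * K0 (2 * π * |(n₁ : ℝ)| * y) * K1 (2 * π * |(n₁ : ℝ)| * y) +
      r01 (π * |(n₁ : ℝ)| * y) * K1 (2 * π * |(n₁ : ℝ)| * y) * K0 (2 * π * |(n₁ : ℝ)| * y) +
      r11 (π * |(n₁ : ℝ)| * y) * K1 (2 * π * |(n₁ : ℝ)| * y) * K1 (2 * π * |(n₁ : ℝ)| * y))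



noncomputable def Spoly (z v w e m k l : ℝ) : ℝ := w*(-512*z^4+48*z^2-15) -12*v-128*v*z^2+4*m*(15+12*z^2+128*z^4)+4*z+128*z^3-60*e-2*k*(33+16*z^2+512*z^4)+4*l*(-15+33*z^2+16*z^4+512*z^6)
noncomputable def Spoly2 (z v w e : ℝ) : ℝ := Spoly z v w e (w/2+v/4-2*v*z*e) (v/2+z/4-2*z^2*e)
  ((w/2+v/4-2*v*z*e)/2 + (v/2+z/4-2*z^2*e)/4 - 2*z*(v/2+z/4-2*z^2*e)*e)

lemma Spoly_bdd : ∃ C : ℝ, ∀ z v w e : ℝ, z ∈ Set.Icc (0:ℝ) 1 → v ∈ Set.Icc (0:ℝ) 1 →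
   w ∈ Set.Icc (0:ℝ) 4 → e ∈ Set.Icc (0:ℝ) 1 → |Spoly2 z v w e| ≤ C := by
  have hK : IsCompact ((Set.Icc (0:ℝ) 1) ×ˢ (Set.Icc (0:ℝ) 1) ×ˢ (Set.Icc (0:ℝ) 4) ×ˢ (Set.Icc (0:ℝ) 1)) :=
    isCompact_Icc.prod (isCompact_Icc.prod (isCompact_Icc.prod isCompact_Icc))
  have hc : Continuous (fun p : ℝ × ℝ × ℝ × ℝ => Spoly2 p.1 p.2.1 p.2.2.1 p.2.2.2) := by
    unfold Spoly2 Spoly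
    fun_prop
  obtain ⟨C, hC⟩ := hK.exists_bound_of_continuousOn hc.continuousOn
  exact ⟨C, fun z v w e hz hv hw he => hC (z, v, w, e) ⟨hz, hv, hw, he⟩⟩

lemma S_eq (z a b e : ℝ) (hz : z ≠ 0) (hb : 2*z*b = 1 - (2*z)^2*a/2 - (2*z)^2/4 + (2*z)^3*e) :
   (z * (-512 * z ^ 4 + 48 * z ^ 2 - 15)) * a * a + (-(128 * z ^ 4 + 12 * z ^ 2 + 15)) * a * b
   + (-(128 * z ^ 4 + 12 * z ^ 2 + 15)) * b * a + ((512 * z ^ 6 + 16 * z ^ 4 + 33 * z ^ 2 - 15) / z) * b * b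
   + 15/(4*z^3) - 63/(4*z) = Spoly2 z (z*a) (z*a^2) e := by
  have : b = (1 - (2*z)^2*a/2 - (2*z)^2/4 + (2*z)^3*e)/(2*z) := by
    field_simp; linarith
  rw [this]
  unfold Spoly2 Spoly
  field_simp
  ring

open MeasureTheory ProbabilityTheory Filter Topology

lemma cosh_ge_self' {t : ℝ} (ht : 0 < t) : t ≤ Real.cosh t :=
  (Real.self_le_sinh_iff.2 ht.le).trans (Real.sinh_lt_cosh t).le

lemma int_exp {x : ℝ} (hx : 0 < x) :
    IntegrableOn (fun t => Real.exp (-x * Real.cosh t)) (Set.Ioi (0:ℝ)) := by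
  refine Integrable.mono' (exp_neg_integrableOn_Ioi 0 hx) (by fun_prop) ?_
  refine (ae_restrict_iff' measurableSet_Ioi).2 (ae_of_all _ fun t ht => ?_)
  rw [Real.norm_eq_abs, abs_of_pos (Real.exp_pos _)]
  apply Real.exp_le_exp.2
  have := cosh_ge_self' (Set.mem_Ioi.1 ht)
  nlinarith

lemma mem_int {x : ℝ} (hx : 0 < x) :
    -x ∈ interior (integrableExpSet Real.cosh (volume.restrict (Set.Ioi (0:ℝ)))) := by
  refine mem_interior.2 ⟨Set.Iio 0, ?_, isOpen_Iio, by simpa using hx⟩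
  intro t ht
  have := int_exp (x := -t) (by simpa using ht)
  simpa [integrableExpSet, IntegrableOn] using this

noncomputable def KK (n : ℕ) (x : ℝ) : ℝ :=
  ∫ t in Set.Ioi (0 : ℝ), Real.cosh t ^ n * Real.exp (-x * Real.cosh t)

lemma K0_eq : K0 = KK 0 := by
  funext x; simp [K0, KK]

lemma K1_eq : K1 = KK 1 := by
  funext x; simp [K1, KK, mul_comm]

lemma KK_int (n : ℕ) {x : ℝ} (hx : 0 < x) :
    IntegrableOn (fun t => Real.cosh t ^ n * Real.exp (-x * Real.cosh t)) (Set.Ioi (0:ℝ)) :=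
  integrable_pow_mul_exp_of_mem_interior_integrableExpSet (mem_int hx) n

lemma KK_deriv (n : ℕ) {x : ℝ} (hx : 0 < x) : HasDerivAt (KK n) (-KK (n+1) x) x := by
  have h := hasDerivAt_integral_pow_mul_exp_real (mem_int hx) n
  have h2 := h.scomp x (hasDerivAt_neg x)
  have e : KK n = (fun t ↦ ∫ ω in Set.Ioi (0:ℝ), Real.cosh ω ^ n * Real.exp (t * Real.cosh ω)) ∘ Neg.neg := by
    funext u; simp [KK]
  rw [e]
  refine h2.congr_deriv ?_
  simp [KK]

lemma tendsto_cosh_top : Tendsto Real.cosh atTop atTop :=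
  tendsto_atTop_mono' _ ((eventually_gt_atTop 0).mono fun _ h => cosh_ge_self' h) tendsto_id

lemma KK_rec {x : ℝ} (hx : 0 < x) : x * KK 2 x = x * KK 0 x + KK 1 x := by
  have hint : IntegrableOn (fun t => Real.cosh t ^ 1 * Real.exp (-x * Real.cosh t)
      - (x * (Real.cosh t ^ 2 * Real.exp (-x * Real.cosh t))
        - x * (Real.cosh t ^ 0 * Real.exp (-x * Real.cosh t)))) (Set.Ioi (0:ℝ)) :=
    (KK_int 1 hx).sub (((KK_int 2 hx).const_mul x).sub ((KK_int 0 hx).const_mul x))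
  have hlim : Tendsto (fun t => Real.sinh t * Real.exp (-x * Real.cosh t)) atTop (𝓝 0) := by
    have h1 : Tendsto (fun u : ℝ => u ^ (1:ℝ) * Real.exp (-x * u)) atTop (𝓝 0) :=
      tendsto_rpow_mul_exp_neg_mul_atTop_nhds_zero 1 x hx
    have h2 := h1.comp tendsto_cosh_top
    refine tendsto_of_tendsto_of_tendsto_of_le_of_le' tendsto_const_nhds h2 ?_ ?_
    · filter_upwards [eventually_gt_atTop 0] with t ht
      have := Real.sinh_pos_iff.2 ht
      positivity
    · filter_upwards with t
      simp only [Function.comp, Real.rpow_one]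
      exact mul_le_mul_of_nonneg_right (Real.sinh_lt_cosh t).le (Real.exp_pos _).le
  have key := integral_Ioi_of_hasDerivAt_of_tendsto' (a := 0)
    (f := fun t => Real.sinh t * Real.exp (-x * Real.cosh t)) (m := 0) ?_ hint hlim
  · have hi2 : IntegrableOn (fun t => x * (Real.cosh t ^ 2 * Real.exp (-x * Real.cosh t))
        - x * (Real.cosh t ^ 0 * Real.exp (-x * Real.cosh t))) (Set.Ioi (0:ℝ)) :=
      ((KK_int 2 hx).const_mul x).sub ((KK_int 0 hx).const_mul x)
    rw [integral_sub (KK_int 1 hx) hi2,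
      integral_sub ((KK_int 2 hx).const_mul x) ((KK_int 0 hx).const_mul x),
      integral_const_mul, integral_const_mul] at key
    simp only [Real.sinh_zero, zero_mul, sub_zero] at key
    change KK 1 x - (x * KK 2 x - x * KK 0 x) = 0 at key
    linarith
  · intro t _
    have h := (Real.hasDerivAt_sinh t).mul ((((Real.hasDerivAt_cosh t).const_mul (-x))).exp)
    refine h.congr_deriv ?_
    have := Real.sinh_sq t
    linear_combination -(x * Real.exp (-x * Real.cosh t)) * this

lemma sinh_int {x : ℝ} (hx : 0 < x) :
    IntegrableOn (fun t => x * Real.cosh t * Real.exp (-x * Real.sinh t)) (Set.Ioi (0:ℝ)) ∧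
    ∫ t in Set.Ioi (0:ℝ), x * Real.cosh t * Real.exp (-x * Real.sinh t) = 1 := by
  have hd : ∀ t ∈ Set.Ici (0:ℝ), HasDerivAt (fun t => -Real.exp (-x * Real.sinh t))
      (x * Real.cosh t * Real.exp (-x * Real.sinh t)) t := by
    intro t _
    have h := (((Real.hasDerivAt_sinh t).const_mul (-x))).exp.neg
    refine h.congr_deriv ?_
    ring
  have hp : ∀ t ∈ Set.Ioi (0:ℝ), 0 ≤ x * Real.cosh t * Real.exp (-x * Real.sinh t) := by
    intro t _
    have := Real.cosh_pos t
    positivity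
  have hs : Tendsto Real.sinh atTop atTop :=
    tendsto_atTop_mono' _ ((eventually_ge_atTop 0).mono fun _ h => Real.self_le_sinh_iff.2 h)
      tendsto_id
  have hl : Tendsto (fun t => -Real.exp (-x * Real.sinh t)) atTop (𝓝 0) := by
    have : Tendsto (fun t => -x * Real.sinh t) atTop atBot :=
      hs.const_mul_atTop_of_neg (by linarith)
    simpa using (Real.tendsto_exp_atBot.comp this).neg
  refine ⟨integrableOn_Ioi_deriv_of_nonneg' hd hp hl, ?_⟩
  rw [integral_Ioi_of_hasDerivAt_of_nonneg' hd hp hl]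
  simp

lemma K1_le {x : ℝ} (hx : 0 < x) : x * KK 1 x ≤ 1 := by
  rw [← (sinh_int hx).2, KK, ← integral_const_mul]
  refine setIntegral_mono_on ((KK_int 1 hx).const_mul x) (sinh_int hx).1 measurableSet_Ioi ?_
  intro t _
  rw [pow_one, mul_assoc]
  have h1 := (Real.sinh_lt_cosh t).le
  have h2 := Real.cosh_pos t
  have h3 : Real.exp (-x * Real.cosh t) ≤ Real.exp (-x * Real.sinh t) :=
    Real.exp_le_exp.2 (by nlinarith)
  gcongr

lemma K1_ge {x : ℝ} (hx : 0 < x) : 1 - x ≤ x * KK 1 x := by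
  have h0 : 1 - x ≤ Real.exp (-x) * 1 := by
    have := Real.add_one_le_exp (-x); linarith
  refine h0.trans ?_
  rw [← (sinh_int hx).2, KK, ← integral_const_mul, ← integral_const_mul]
  refine setIntegral_mono_on ((sinh_int hx).1.const_mul _) ((KK_int 1 hx).const_mul x)
    measurableSet_Ioi ?_
  intro t ht
  have h2 := Real.cosh_pos t
  have h3 : Real.cosh t ≤ Real.sinh t + 1 := by
    have := Real.cosh_sub_sinh t
    have h4 : Real.exp (-t) ≤ 1 := Real.exp_le_one_iff.2 (by linarith [Set.mem_Ioi.1 ht])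
    linarith
  have h5 : Real.exp (-x) * Real.exp (-x * Real.sinh t) ≤ Real.exp (-x * Real.cosh t) := by
    rw [← Real.exp_add]
    apply Real.exp_le_exp.2
    nlinarith
  calc _ = x * Real.cosh t * (Real.exp (-x) * Real.exp (-x * Real.sinh t)) := by ring
    _ ≤ x * Real.cosh t * Real.exp (-x * Real.cosh t) := by gcongr
    _ = _ := by ring

lemma K0_nonneg (x : ℝ) : 0 ≤ KK 0 x := by
  unfold KK
  simp only [pow_zero, one_mul]
  exact integral_nonneg fun t => (Real.exp_pos _).le

lemma K0_le_K1 {x : ℝ} (hx : 0 < x) : KK 0 x ≤ KK 1 x := by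
  refine setIntegral_mono_on (KK_int 0 hx) (KK_int 1 hx) measurableSet_Ioi ?_
  intro t _
  have := Real.one_le_cosh t
  simp only [pow_zero, pow_one]
  gcongr

lemma K0_sq {x : ℝ} (hx : 0 < x) : x * KK 0 x ^ 2 ≤ 8 := by
  have hi : ∫ t in Set.Ioi (0:ℝ), Real.exp ((-1/2) * t) = 2 := by
    rw [integral_exp_mul_Ioi (by norm_num)]; norm_num
  have hb : KK 0 x ≤ (√2 / √x) * ∫ t in Set.Ioi (0:ℝ), Real.exp ((-1/2) * t) := by
    rw [← integral_const_mul]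
    refine setIntegral_mono_on (KK_int 0 hx)
      ((integrableOn_exp_mul_Ioi (by norm_num) 0).const_mul _) measurableSet_Ioi ?_
    intro t ht
    have hc : Real.exp t / 2 ≤ Real.cosh t := by
      rw [Real.cosh_eq]; linarith [Real.exp_pos (-t)]
    rw [pow_zero, one_mul]
    have hcp := Real.cosh_pos t
    have hxs : 0 < √x := Real.sqrt_pos.2 hx
    refine (sq_le_sq₀ (Real.exp_pos _).le (by positivity)).1 ?_
    rw [mul_pow, div_pow, Real.sq_sqrt (by norm_num), Real.sq_sqrt hx.le, ← Real.exp_nat_mul,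
      ← Real.exp_nat_mul]
    have e1 : ((2:ℕ):ℝ) * (-x * Real.cosh t) = -(2 * (x * Real.cosh t)) := by push_cast; ring
    have e2 : ((2:ℕ):ℝ) * (-1/2 * t) = -t := by push_cast; ring
    rw [e1, e2, Real.exp_neg, Real.exp_neg, ← div_eq_mul_inv, div_div, inv_eq_one_div,
      div_le_div_iff₀ (Real.exp_pos _) (by positivity)]
    have := Real.add_one_le_exp (2 * (x * Real.cosh t))
    nlinarith
  rw [hi] at hb
  have h0 := K0_nonneg x
  have hxs : 0 < √x := Real.sqrt_pos.2 hx
  calc x * KK 0 x ^ 2 ≤ x * ((√2 / √x) * 2)^2 := by gcongr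
    _ = 8 := by
      rw [mul_pow, div_pow, Real.sq_sqrt (by norm_num), Real.sq_sqrt hx.le]
      field_simp; norm_num

noncomputable def EE (x : ℝ) : ℝ := x * KK 1 x - 1 + x^2 * KK 0 x / 2 + x^2/4

lemma EE_deriv {x : ℝ} (hx : 0 < x) : HasDerivAt EE (x/2 * (1 - x * KK 1 x)) x := by
  have h := ((((hasDerivAt_id x).mul (KK_deriv 1 hx)).sub_const 1).add
    ((((hasDerivAt_id x).pow 2).mul (KK_deriv 0 hx)).div_const 2)).add
    (((hasDerivAt_id x).pow 2).div_const 4)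
  refine h.congr_deriv ?_
  simp
  linear_combination -KK_rec hx

lemma EE_lim : Tendsto EE (𝓝[>] 0) (𝓝 0) := by
  have hl : Tendsto (fun x : ℝ => x) (𝓝[>] 0) (𝓝 0) := tendsto_nhdsWithin_of_tendsto_nhds tendsto_id
  have h1 : Tendsto (fun x : ℝ => -x) (𝓝[>] 0) (𝓝 0) := by simpa using hl.neg
  have h2 : Tendsto (fun x : ℝ => x/2 + x^2/4) (𝓝[>] 0) (𝓝 0) := by
    simpa using (hl.div_const 2).add ((hl.pow 2).div_const 4)
  refine tendsto_of_tendsto_of_tendsto_of_le_of_le' h1 h2 ?_ ?_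
  · filter_upwards [self_mem_nhdsWithin] with x hx
    have hx : 0 < x := hx
    have a := K1_ge hx
    have b := K0_nonneg x
    have : 0 ≤ x^2 * KK 0 x / 2 + x^2/4 := by positivity
    unfold EE; linarith
  · filter_upwards [self_mem_nhdsWithin] with x hx
    have hx : 0 < x := hx
    have a := K1_le hx
    have b := K0_le_K1 hx
    have c : x * KK 0 x ≤ 1 := (mul_le_mul_of_nonneg_left b hx.le).trans a
    have : x^2 * KK 0 x ≤ x := by nlinarith
    unfold EE; linarith

lemma nonneg_of_deriv {F F' : ℝ → ℝ} (hd : ∀ x, 0 < x → HasDerivAt F (F' x) x)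
    (hp : ∀ x, 0 < x → 0 ≤ F' x) (hl : Tendsto F (𝓝[>] 0) (𝓝 0)) {x : ℝ} (hx : 0 < x) :
    0 ≤ F x := by
  have hm : MonotoneOn F (Set.Ioi 0) := by
    apply monotoneOn_of_deriv_nonneg (convex_Ioi 0)
    · exact fun y hy => (hd y hy).continuousAt.continuousWithinAt
    · rw [interior_Ioi]
      exact fun y hy => (hd y hy).differentiableAt.differentiableWithinAt
    · rw [interior_Ioi]
      intro y hy
      rw [(hd y hy).deriv]; exact hp y hy
  refine le_of_tendsto hl ?_
  filter_upwards [Ioo_mem_nhdsGT hx] with y hy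
  exact hm hy.1 hx hy.2.le

lemma EE_nonneg {x : ℝ} (hx : 0 < x) : 0 ≤ EE x := by
  refine nonneg_of_deriv (fun x hx => EE_deriv hx) (fun x hx => ?_) EE_lim hx
  have := K1_le hx
  have : 0 ≤ 1 - x * KK 1 x := by linarith
  positivity

lemma EE_le {x : ℝ} (hx : 0 < x) : EE x ≤ x^3 := by
  have : 0 ≤ x^3 - EE x := by
    refine nonneg_of_deriv (F := fun x => x^3 - EE x)
      (fun x hx => (hasDerivAt_pow 3 x).sub (EE_deriv hx)) (fun x hx => ?_) ?_ hx
    · have := K1_ge hx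
      have := mul_le_mul_of_nonneg_left (show 1 - x * KK 1 x ≤ x by linarith) hx.le
      norm_num
      nlinarith
    · have hl : Tendsto (fun x : ℝ => x) (𝓝[>] 0) (𝓝 0) :=
        tendsto_nhdsWithin_of_tendsto_nhds tendsto_id
      simpa using (hl.pow 3).sub EE_lim
  linarith

theorem mode_diag_small_y (n₁ : ℤ) (h₁ : n₁ ≠ 0) :
    ∃ C : ℝ, ∀ᶠ y in nhdsWithin (0 : ℝ) (Set.Ioi 0),
      |fPdiag n₁ y + 8 * (sigma2 n₁.natAbs : ℝ) ^ 2 / (21 * (n₁ : ℝ) ^ 6 * π ^ 2 * y ^ 3) -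
          8 * (sigma2 n₁.natAbs : ℝ) ^ 2 / (5 * (n₁ : ℝ) ^ 4 * y)| ≤ C := by
  obtain ⟨C, hC⟩ := Spoly_bdd
  have hN : 0 < |(n₁ : ℝ)| := abs_pos.2 (by exact_mod_cast h₁)
  have e6 : (n₁ : ℝ)^6 = |(n₁ : ℝ)|^6 := (Even.pow_abs (by decide) _).symm
  have e4 : (n₁ : ℝ)^4 = |(n₁ : ℝ)|^4 := (Even.pow_abs (by decide) _).symm
  rw [e6, e4]
  unfold fPdiag
  generalize |(n₁ : ℝ)| = N at hN
  generalize (sigma2 n₁.natAbs : ℝ) = s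
  have hpi := Real.pi_pos
  refine ⟨|32 * π * s^2 / (315 * N^3)| * C, ?_⟩
  have hpos : 0 < 1 / (2 * π * N) := by positivity
  filter_upwards [Ioo_mem_nhdsGT hpos] with y hy
  obtain ⟨hy0, hy1⟩ := hy
  rw [lt_div_iff₀ (by positivity)] at hy1
  have hz : 0 < π * N * y := by positivity
  have hx2 : 2 * π * N * y = 2 * (π * N * y) := by ring
  rw [hx2, K0_eq, K1_eq]
  have hz1 : 2 * (π * N * y) ≤ 1 := by linarith
  have hS : 32 * π * s^2 / (315 * N^3) * (15/(4*(π * N * y)^3) - 63/(4*(π * N * y)))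
      = 8 * s ^ 2 / (21 * N ^ 6 * π ^ 2 * y ^ 3) - 8 * s ^ 2 / (5 * N ^ 4 * y) := by
    field_simp
    ring
  rw [add_sub_assoc, ← hS, ← mul_add, abs_mul]
  gcongr
  generalize π * N * y = z at hz hz1
  have hx : 0 < 2 * z := by linarith
  have hE0 := EE_nonneg hx
  have hE1 := EE_le hx
  have hK0 := K0_nonneg (2*z)
  have hsq := K0_sq hx
  have hxa : 2 * z * KK 0 (2*z) ≤ 1 :=
    (mul_le_mul_of_nonneg_left (K0_le_K1 hx) hx.le).trans (K1_le hx)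
  have hb := S_eq z (KK 0 (2*z)) (KK 1 (2*z)) (EE (2*z) / (2*z)^3) hz.ne' (by
    rw [mul_div_cancel₀ _ (by positivity)]; unfold EE; ring)
  have := hC z (z * KK 0 (2*z)) (z * KK 0 (2*z)^2) (EE (2*z) / (2*z)^3)
    ⟨hz.le, by linarith⟩ ⟨by positivity, by linarith⟩ ⟨by positivity, by linarith⟩
    ⟨by positivity, (div_le_one (by positivity)).2 hE1⟩
  rw [← hb] at this
  unfold r00 r01 r11
  rw [← add_sub_assoc]
  exact this
end

section
/- Let n₁ be a nonzero integer and let f(y) = (32π·σ₂(|n₁|)²/(315·|n₁|³)) · ∑_{i,j ∈ {0,1}} r^{ij}(π|n₁|y)·K_i(2π|n₁|y)·K_j(2π|n₁|y), where r⁰⁰(z) = z·(−512z⁴ + 48z² − 15), r⁰¹(z) = r¹⁰(z) = −(128z⁴ + 12z² + 15), and r¹¹(z) = (512z⁶ + 16z⁴ + 33z² − 15)/z, and set F(y) = f(y) + 8·σ₂(|n₁|)²/(21·n₁⁶·π²·y³). Then y·( y²·e^{4π|n₁|y}·( F(y) − 8·σ₂(|n₁|)²/(21·π²·n₁⁶·y³)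 ) + σ₂(|n₁|)²/|n₁|⁵ ) remains bounded as y → ∞; equivalently, F(y) = 8·σ₂(|n₁|)²/(21·π²·n₁⁶·y³) − e^{−4π|n₁|y}·( σ₂(|n₁|)²/(|n₁|⁵·y²) + O(y^{−3}) ) as y → ∞. -/
open Real

/-- The complete mode `f̂_{n₁,-n₁}`. -/
noncomputable def fDiag (n₁ : ℤ) (y : ℝ) : ℝ :=
  fPdiag n₁ y + 8 * (sigma2 n₁.natAbs : ℝ) ^ 2 / (21 * (n₁ : ℝ) ^ 6 * π ^ 2 * y ^ 3)


noncomputable def UU (t : ℝ) : ℝ := Real.cosh t - 1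

lemma UU_ge (t : ℝ) : t ^ 2 / 2 ≤ UU t := by
  have h1 : UU t = 2 * Real.sinh (t / 2) ^ 2 := by
    have h := Real.cosh_two_mul (t / 2)
    have h2 := Real.cosh_sq (t / 2)
    rw [show 2 * (t / 2) = t by ring] at h
    unfold UU; rw [h, h2]; ring
  have h3 : (t / 2) ^ 2 ≤ Real.sinh (t / 2) ^ 2 := by
    rw [sq_le_sq]
    rcases le_total 0 (t / 2) with h | h
    · rw [abs_of_nonneg h, abs_of_nonneg (Real.sinh_nonneg_iff.2 h)]
      exact Real.self_le_sinh_iff.2 h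
    · rw [abs_of_nonpos h, abs_of_nonpos (Real.sinh_nonpos_iff.2 h)]
      exact neg_le_neg (Real.sinh_le_self_iff.2 h)
  rw [h1]; nlinarith

lemma UU_nonneg (t : ℝ) : 0 ≤ UU t := le_trans (by positivity) (UU_ge t)

lemma UU_cont : Continuous UU := by unfold UU; exact Real.continuous_cosh.sub continuous_const

noncomputable def MM (k : ℕ) (x : ℝ) : ℝ :=
  ∫ t in Set.Ioi (0 : ℝ), Real.exp (-x * UU t) * UU t ^ k

lemma UU_bound (k : ℕ) {x : ℝ} (hx : 0 < x) (t : ℝ) :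
    Real.exp (-x * UU t) * UU t ^ k ≤ (k.factorial * (2 / x) ^ k) * Real.exp (-(x / 4) * t ^ 2) := by
  have hU := UU_nonneg t
  have h1 : (x / 2 * UU t) ^ k / k.factorial ≤ Real.exp (x / 2 * UU t) :=
    Real.pow_div_factorial_le_exp _ (by positivity) k
  have hk : (0 : ℝ) < k.factorial := by positivity
  rw [div_le_iff₀ hk, mul_pow] at h1
  have h2 : UU t ^ k ≤ (k.factorial * (2 / x) ^ k) * Real.exp (x / 2 * UU t) := by
    have : UU t ^ k = (2 / x) ^ k * ((x / 2) ^ k * UU t ^ k) := by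
      rw [← mul_assoc, ← mul_pow, show 2 / x * (x / 2) = 1 by field_simp, one_pow, one_mul]
    rw [this]
    calc _ ≤ (2 / x) ^ k * (Real.exp (x / 2 * UU t) * k.factorial) := by gcongr
      _ = _ := by ring
  calc _ ≤ Real.exp (-x * UU t) * ((k.factorial * (2 / x) ^ k) * Real.exp (x / 2 * UU t)) := by
        gcongr
    _ = (k.factorial * (2 / x) ^ k) * Real.exp (-(x / 2) * UU t) := by
        rw [show -(x / 2) * UU t = -x * UU t + x / 2 * UU t by ring, Real.exp_add]; ring
    _ ≤ _ := by
        refine mul_le_mul_of_nonneg_left (Real.exp_le_exp.2 ?_) (by positivity)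
        have := UU_ge t
        nlinarith

lemma MM_int (k : ℕ) {x : ℝ} (hx : 0 < x) :
    MeasureTheory.IntegrableOn (fun t => Real.exp (-x * UU t) * UU t ^ k) (Set.Ioi 0) := by
  have hg : MeasureTheory.Integrable
      (fun t : ℝ => (k.factorial * (2 / x) ^ k) * Real.exp (-(x / 4) * t ^ 2)) :=
    (integrable_exp_neg_mul_sq (by positivity)).const_mul _
  apply MeasureTheory.Integrable.integrableOn
  refine hg.mono' ?_ ?_
  · have := UU_cont
    exact (by fun_prop : Continuous (fun t => Real.exp (-x * UU t) * UU t ^ k)).aestronglyMeasurable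
  · filter_upwards with t
    rw [Real.norm_of_nonneg (mul_nonneg (Real.exp_pos _).le (pow_nonneg (UU_nonneg t) k))]
    exact UU_bound k hx t

lemma MM_tendsto (k : ℕ) {x : ℝ} (hx : 0 < x) :
    Filter.Tendsto (fun t => Real.exp (-x * UU t) * UU t ^ k) Filter.atTop (nhds 0) := by
  have h1 : Filter.Tendsto (fun t : ℝ => (k.factorial * (2 / x) ^ k) * Real.exp (-(x / 4) * t ^ 2))
      Filter.atTop (nhds ((k.factorial * (2 / x) ^ k) * 0)) := by
    apply Filter.Tendsto.const_mul
    apply Real.tendsto_exp_atBot.comp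
    exact (Filter.tendsto_pow_atTop (two_ne_zero)).const_mul_atTop_of_neg (by linarith)
  rw [mul_zero] at h1
  exact squeeze_zero (fun t => mul_nonneg (Real.exp_pos _).le (pow_nonneg (UU_nonneg t) k))
    (fun t => UU_bound k hx t) h1

lemma MM_nonneg (k : ℕ) (x : ℝ) : 0 ≤ MM k x :=
  MeasureTheory.setIntegral_nonneg measurableSet_Ioi
    (fun t _ => mul_nonneg (Real.exp_pos _).le (pow_nonneg (UU_nonneg t) k))

lemma MM_rec (k : ℕ) {x : ℝ} (hx : 0 < x) :
    x * (MM (k + 2) x + 2 * MM (k + 1) x) = (2 * k + 1) * MM k x + (k + 1) * MM (k + 1) x := by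
  have hU : ∀ t, HasDerivAt UU (Real.sinh t) t := fun t => (Real.hasDerivAt_cosh t).sub_const 1
  have hs : ∀ t, Real.sinh t ^ 2 = UU t * (UU t + 2) := fun t => by
    have := Real.cosh_sq t
    unfold UU; nlinarith
  set f : ℝ → ℝ := fun t => Real.exp (-x * UU t) * UU t ^ k * Real.sinh t with hf
  set E : ℕ → ℝ → ℝ := fun k t => Real.exp (-x * UU t) * UU t ^ k with hE
  have hint : ∀ k, MeasureTheory.IntegrableOn (E k) (Set.Ioi 0) := fun k => MM_int k hx
  set f' : ℝ → ℝ := fun t => ((2 * k + 1) * E k t + (k + 1) * E (k + 1) t)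
      - (x * E (k + 2) t + 2 * x * E (k + 1) t) with hf'
  have hd : ∀ t ∈ Set.Ioi (0 : ℝ), HasDerivAt f (f' t) t := by
    intro t _
    have h := (((hU t).const_mul (-x)).exp.mul ((hU t).pow k)).mul (Real.hasDerivAt_sinh t)
    refine h.congr_deriv ?_
    simp only [hf', hE]
    have hc : Real.cosh t = UU t + 1 := by unfold UU; ring
    rw [hc]
    rcases k with _ | k
    · simp
      linear_combination (-x * Real.exp (-(x * UU t))) * hs t
    · simp
      linear_combination (-x * Real.exp (-(x * UU t)) * UU t ^ (k + 1) +
        (k + 1) * UU t ^ k * Real.exp (-(x * UU t))) * hs t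
  have hfc : Continuous f := by
    have := UU_cont
    have := Real.continuous_sinh
    simp only [hf]; fun_prop
  have i1 : MeasureTheory.IntegrableOn (fun t => (2 * k + 1) * E k t + (k + 1) * E (k + 1) t) (Set.Ioi 0) :=
    ((hint k).const_mul _).add ((hint (k+1)).const_mul _)
  have i2 : MeasureTheory.IntegrableOn (fun t => x * E (k + 2) t + 2 * x * E (k + 1) t) (Set.Ioi 0) :=
    ((hint _).const_mul _).add ((hint _).const_mul _)
  have ht : Filter.Tendsto f Filter.atTop (nhds 0) := by
    have h := (MM_tendsto (k + 1) hx).add (MM_tendsto k hx)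
    rw [add_zero] at h
    refine squeeze_zero' ?_ ?_ h
    · filter_upwards [Filter.eventually_ge_atTop 0] with t ht
      exact mul_nonneg (mul_nonneg (Real.exp_pos _).le (pow_nonneg (UU_nonneg t) k))
        (Real.sinh_nonneg_iff.2 ht)
    · filter_upwards with t
      have h1 : Real.sinh t ≤ UU t + 1 := by
        have := Real.sinh_lt_cosh t
        unfold UU; linarith
      calc _ ≤ Real.exp (-x * UU t) * UU t ^ k * (UU t + 1) :=
            mul_le_mul_of_nonneg_left h1 (mul_nonneg (Real.exp_pos _).le (pow_nonneg (UU_nonneg t) k))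
        _ = _ := by ring
  have h := MeasureTheory.integral_Ioi_of_hasDerivAt_of_tendsto (hfc.continuousWithinAt)
    hd (i1.sub i2) ht
  have h0 : f 0 = 0 := by simp [hf]
  have e1 : ∫ t in Set.Ioi (0:ℝ), f' t = ((2 * k + 1) * MM k x + (k + 1) * MM (k + 1) x)
      - (x * MM (k + 2) x + 2 * x * MM (k + 1) x) := by
    simp only [hf']
    rw [MeasureTheory.integral_sub i1 i2,
      MeasureTheory.integral_add ((hint k).const_mul _) ((hint (k+1)).const_mul _),
      MeasureTheory.integral_add ((hint _).const_mul _) ((hint _).const_mul _)]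
    simp only [MeasureTheory.integral_const_mul]
    rfl
  rw [e1, h0] at h
  linarith

lemma K0_eq_s10 (x : ℝ) : K0 x = Real.exp (-x) * MM 0 x := by
  unfold K0 MM
  rw [← MeasureTheory.integral_const_mul]
  congr 1; ext t
  rw [pow_zero, mul_one, ← Real.exp_add]; congr 1; unfold UU; ring

lemma K1_eq_s10 {x : ℝ} (hx : 0 < x) : K1 x = Real.exp (-x) * (MM 0 x + MM 1 x) := by
  unfold K1 MM
  rw [← MeasureTheory.integral_add (MM_int 0 hx) (MM_int 1 hx), ← MeasureTheory.integral_const_mul]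
  congr 1; ext t
  rw [show -x * Real.cosh t = -x + -x * UU t by unfold UU; ring, Real.exp_add]
  unfold UU; ring

lemma gauss_eq {x : ℝ} (hx : 0 < x) :
    ∫ t in Set.Ioi (0 : ℝ), Real.exp (-x * UU t) * Real.cosh (t / 2) = √(π / (2 * x)) := by
  have hUs : ∀ t, UU t = 2 * Real.sinh (t / 2) ^ 2 := by
    intro t
    have h := Real.cosh_two_mul (t / 2)
    have h2 := Real.cosh_sq (t / 2)
    rw [show 2 * (t / 2) = t by ring] at h
    unfold UU; rw [h, h2]; ring
  have hder : ∀ t : ℝ, HasDerivAt (fun t : ℝ => 2 * Real.sinh (t / 2)) (Real.cosh (t / 2)) t := by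
    intro t
    have := (((hasDerivAt_id t).div_const 2).sinh).const_mul 2
    refine this.congr_deriv ?_
    simp only [id]; ring
  have htop : Filter.Tendsto (fun t : ℝ => 2 * Real.sinh (t / 2)) Filter.atTop Filter.atTop := by
    refine Filter.tendsto_atTop_mono' _ ?_ Filter.tendsto_id
    filter_upwards [Filter.eventually_ge_atTop 0] with t ht
    have := Real.self_le_sinh_iff.2 (by positivity : 0 ≤ t / 2)
    simp only [id]; linarith
  have hcosh : ∀ t : ℝ, Real.cosh (t / 2) ≤ 1 + UU t := by
    intro t
    have h1 := Real.cosh_sq (t / 2)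
    have h2 := Real.one_le_cosh (t / 2)
    rw [hUs]; nlinarith [sq_nonneg (Real.sinh (t / 2))]
  have hgi := integrable_exp_neg_mul_sq (b := x / 2) (by positivity)
  have hc := UU_cont
  have hcc := Real.continuous_cosh
  have key := MeasureTheory.integral_comp_mul_deriv_Ioi (a := 0)
    (f := fun t : ℝ => 2 * Real.sinh (t / 2)) (f' := fun t => Real.cosh (t / 2))
    (g := fun w => Real.exp (-(x / 2) * w ^ 2))
    (Continuous.continuousOn (by have := Real.continuous_sinh; fun_prop)) htop
    (fun t _ => (hder t).hasDerivWithinAt) (Continuous.continuousOn (by fun_prop))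
    hgi.integrableOn
    (by
      rw [integrableOn_Ici_iff_integrableOn_Ioi]
      refine ((MM_int 0 hx).add (MM_int 1 hx)).mono' ?_ ?_
      · refine Continuous.aestronglyMeasurable ?_
        have := Real.continuous_sinh
        simp only [Function.comp_def]
        fun_prop
      · filter_upwards with t
        have hp : 0 < Real.cosh (t / 2) := Real.cosh_pos _
        simp only [Function.comp, Pi.add_apply]
        rw [Real.norm_of_nonneg (by positivity)]
        rw [show -(x / 2) * (2 * Real.sinh (t / 2)) ^ 2 = -x * UU t by rw [hUs]; ring]
        have := mul_le_mul_of_nonneg_left (hcosh t) (Real.exp_pos (-x * UU t)).le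
        linarith)
  have e : ∀ t, Real.exp (-x * UU t) * Real.cosh (t / 2) =
    ((fun w => Real.exp (-(x / 2) * w ^ 2)) ∘ (fun t : ℝ => 2 * Real.sinh (t / 2))) t *
      Real.cosh (t / 2) := by
    intro t
    simp only [Function.comp]
    rw [show -(x / 2) * (2 * Real.sinh (t / 2)) ^ 2 = -x * UU t by rw [hUs]; ring]
  simp_rw [e]
  rw [key]
  simp only [zero_div, Real.sinh_zero, mul_zero]
  rw [integral_gaussian_Ioi]
  rw [show π / (2 * x) = π / (x / 2) / 4 by field_simp; norm_num,
    Real.sqrt_div (x := π / (x / 2)) (by positivity) 4,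
    show √(4:ℝ) = 2 by rw [show (4:ℝ) = 2 ^ 2 by norm_num, Real.sqrt_sq (by norm_num)]]

lemma MM0_bounds {x : ℝ} (hx : 0 < x) :
    MM 0 x ≤ √(π / (2 * x)) ∧ √(π / (2 * x)) ≤ MM 0 x + MM 1 x / 4 := by
  have hUs : ∀ t, UU t = 2 * Real.sinh (t / 2) ^ 2 := by
    intro t
    have h := Real.cosh_two_mul (t / 2)
    have h2 := Real.cosh_sq (t / 2)
    rw [show 2 * (t / 2) = t by ring] at h
    unfold UU; rw [h, h2]; ring
  have hcosh : ∀ t : ℝ, Real.cosh (t / 2) ≤ 1 + UU t / 4 := by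
    intro t
    have h1 := Real.cosh_sq (t / 2)
    have h2 := Real.one_le_cosh (t / 2)
    rw [hUs]; nlinarith [sq_nonneg (Real.sinh (t / 2)), sq_nonneg (Real.cosh (t / 2) - 1)]
  have hc := UU_cont
  have hcc := Real.continuous_cosh
  have i3 : MeasureTheory.IntegrableOn (fun t => Real.exp (-x * UU t) * UU t ^ 0 +
      Real.exp (-x * UU t) * UU t ^ 1 / 4) (Set.Ioi 0) := (MM_int 0 hx).add ((MM_int 1 hx).div_const 4)
  have hpt : ∀ t, Real.exp (-x * UU t) * Real.cosh (t / 2) ≤ Real.exp (-x * UU t) * UU t ^ 0 +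
      Real.exp (-x * UU t) * UU t ^ 1 / 4 := fun t => by
    have := mul_le_mul_of_nonneg_left (hcosh t) (Real.exp_pos (-x * UU t)).le
    rw [pow_zero, pow_one]; linarith
  have iG : MeasureTheory.IntegrableOn (fun t => Real.exp (-x * UU t) * Real.cosh (t / 2)) (Set.Ioi 0) := by
    refine i3.mono' (Continuous.aestronglyMeasurable (by fun_prop)) ?_
    filter_upwards with t
    have hp : 0 < Real.cosh (t / 2) := Real.cosh_pos _
    rw [Real.norm_of_nonneg (by positivity)]
    exact hpt t
  rw [← gauss_eq hx]
  constructor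
  · refine MeasureTheory.integral_mono (MM_int 0 hx) iG fun t => ?_
    rw [pow_zero]
    exact mul_le_mul_of_nonneg_left (Real.one_le_cosh _) (Real.exp_pos _).le
  · calc _ ≤ ∫ t in Set.Ioi (0 : ℝ), (Real.exp (-x * UU t) * UU t ^ 0 +
          Real.exp (-x * UU t) * UU t ^ 1 / 4) := MeasureTheory.integral_mono iG i3 hpt
      _ = _ := by
        rw [MeasureTheory.integral_add (MM_int 0 hx) ((MM_int 1 hx).div_const 4),
          MeasureTheory.integral_div]
        rfl

lemma MM0_pos {x : ℝ} (hx : 1 ≤ x) : 0 < MM 0 x := by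
  have hx0 : 0 < x := by linarith
  have h1 := (MM0_bounds hx0).2
  have h2 := MM_rec 0 hx0
  have h3 := MM_nonneg 2 x
  have h4 : 0 < √(π / (2 * x)) := Real.sqrt_pos.2 (by positivity)
  have h5 := MM_nonneg 1 x
  have h6 := MM_nonneg 0 x
  norm_num at h2
  by_contra hc
  have h7 : MM 0 x = 0 := le_antisymm (not_lt.1 hc) h6
  have h8 : 0 < MM 1 x := by linarith
  nlinarith [mul_nonneg hx0.le h3, mul_le_mul_of_nonneg_right hx h5]

lemma MM_le (k : ℕ) : ∃ C : ℝ, 0 ≤ C ∧ ∀ x : ℝ, (k : ℝ) + 1 ≤ x → x ^ k * MM k x ≤ C * MM 0 x := by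
  induction k with
  | zero => exact ⟨1, by norm_num, fun x _ => by simp⟩
  | succ k ih =>
    obtain ⟨C, hC0, hC⟩ := ih
    refine ⟨(2 * k + 1) * C, by positivity, fun x hx => ?_⟩
    push_cast at hx
    have hk : (0:ℝ) ≤ k := by positivity
    have hx0 : 0 < x := by linarith
    have h1 := MM_rec k hx0
    have h2 := mul_nonneg hx0.le (MM_nonneg (k + 2) x)
    have h3 := mul_le_mul_of_nonneg_right (show (k:ℝ) + 1 ≤ x by linarith) (MM_nonneg (k + 1) x)
    have h4 : x * MM (k + 1) x ≤ (2 * k + 1) * MM k x := by linarith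
    have h5 := hC x (by linarith)
    calc x ^ (k + 1) * MM (k + 1) x = x ^ k * (x * MM (k + 1) x) := by ring
      _ ≤ x ^ k * ((2 * k + 1) * MM k x) := by gcongr
      _ = (2 * k + 1) * (x ^ k * MM k x) := by ring
      _ ≤ (2 * k + 1) * (C * MM 0 x) := by gcongr
      _ = _ := by ring

noncomputable def PP (e : ℝ) : ℝ :=
  1/2 - 1/8*e + 1/8*e^2 - 25/128*e^3 + 13/32*e^4 - 1073/1024*e^5

lemma ratio_exp : ∃ C : ℝ, ∀ x : ℝ, 8 ≤ x → ∃ R : ℝ, |R| ≤ C ∧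
    MM 1 x / MM 0 x = (1 / x) * (PP (1 / x) + (1 / x) ^ 6 * R) := by
  choose C hC0 hC using MM_le
  refine ⟨2 * (C 1 + C 2 + C 3 + C 4 + C 5 + C 6 + C 7), fun x hx => ?_⟩
  have hx0 : 0 < x := by linarith
  have hM := MM0_pos (x := x) (by linarith)
  set a : ℕ → ℝ := fun k => x ^ k * MM k x / MM 0 x with ha
  have hb : ∀ k : ℕ, k ≤ 7 → 0 ≤ a k ∧ a k ≤ C k := by
    intro k hk
    constructor
    · exact div_nonneg (mul_nonneg (by positivity) (MM_nonneg k x)) hM.le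
    · rw [ha]
      simp only
      rw [div_le_iff₀ hM]
      refine hC k x ?_
      have : (k : ℝ) ≤ 7 := by exact_mod_cast hk
      linarith
  have hr : ∀ k : ℕ, 2 * a (k + 1) = (2 * k + 1) * a k +
      (1 / x) * ((k + 1) * a (k + 1) - a (k + 2)) := by
    intro k
    have h := MM_rec k hx0
    simp only [ha]
    field_simp
    linear_combination (x ^ (k + 1)) * h
  have a0 : a 0 = 1 := by simp only [ha]; rw [pow_zero, one_mul, div_self hM.ne']
  have h0 := hr 0
  have h1 := hr 1
  have h2 := hr 2
  have h3 := hr 3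
  have h4 := hr 4
  have h5 := hr 5
  norm_num only [Nat.cast_ofNat, Nat.cast_zero, Nat.cast_one] at h0 h1 h2 h3 h4 h5
  have e1 : MM 1 x / MM 0 x = (1 / x) * a 1 := by
    simp only [ha]; field_simp
  have b1 := hb 1 (by norm_num)
  have b2 := hb 2 (by norm_num)
  have b3 := hb 3 (by norm_num)
  have b4 := hb 4 (by norm_num)
  have b5 := hb 5 (by norm_num)
  have b6 := hb 6 (by norm_num)
  have b7 := hb 7 (by norm_num)
  refine ⟨(-1073/1024)*a 1 + (-635/1024)*a 2 + (-167/512)*a 3 + (-37/256)*a 4 + (-1/16)*a 5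
    + (-7/128)*a 6 + (1/64)*a 7, ?_, ?_⟩
  · rw [abs_le]
    constructor <;> linarith [b1.1, b1.2, b2.1, b2.2, b3.1, b3.2, b4.1, b4.2, b5.1, b5.2, b6.1,
      b6.2, b7.1, b7.2]
  · rw [e1]
    congr 1
    unfold PP
    generalize 1 / x = e at *
    rw [a0] at h0
    linear_combination ((1/2)*e^0 + (-1/8)*e^1 + (1/8)*e^2 + (-25/128)*e^3 + (13/32)*e^4 + (-1073/1024)*e^5)*h0 + ((-1/4)*e^1 + (1/8)*e^2 + (-11/64)*e^3 + (43/128)*e^4 + (-427/512)*e^5)*h1 + ((1/8)*e^2 + (-3/32)*e^3 + (21/128)*e^4 + (-99/256)*e^5)*h2 + ((-1/16)*e^3 + (1/16)*e^4 + (-17/128)*e^5)*h3 + ((1/32)*e^4 + (-5/128)*e^5)*h4 + ((-1/64)*e^5)*h5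

noncomputable def TT (x : ℝ) : ℝ :=
  r00 (x / 2) + 2 * r01 (x / 2) * (1 + MM 1 x / MM 0 x) + r11 (x / 2) * (1 + MM 1 x / MM 0 x) ^ 2

noncomputable def rem (p : ℝ × ℝ) : ℝ :=
  (-97/4) + (-7307/1024)*p.1^1 + (143/16)*p.1^2 + (-176185/8192)*p.1^3 + (-10433/512)*p.1^4
    + (4855837/65536)*p.1^5 + (27959/1024)*p.1^6 + (-197819/524288)*p.1^7 + (-46797/32768)*p.1^8
    + (1858497/2097152)*p.1^9 + (209235/8192)*p.1^10 + (-17269935/524288)*p.1^11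
    + p.2 * (-2 * (8 * p.1 + 3 * p.1 ^ 3 + 15 * p.1 ^ 5)
      + 2 * (16 + 2 * p.1 ^ 2 + 33 / 2 * p.1 ^ 4 - 30 * p.1 ^ 6) * (1 + p.1 * PP p.1))
    + (16 + 2 * p.1 ^ 2 + 33 / 2 * p.1 ^ 4 - 30 * p.1 ^ 6) * p.1 ^ 7 * p.2 ^ 2

lemma TT_bound : ∃ C : ℝ, ∀ x : ℝ, 8 ≤ x → |x * (x * TT x + 315 / 4)| ≤ C := by
  obtain ⟨C, hC⟩ := ratio_exp
  have hcont : Continuous rem := by unfold rem PP; fun_prop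
  obtain ⟨D, hD⟩ := (isCompact_Icc.prod isCompact_Icc :
    IsCompact (Set.Icc (0:ℝ) 1 ×ˢ Set.Icc (-C) C)).exists_bound_of_continuousOn hcont.continuousOn
  refine ⟨D, fun x hx => ?_⟩
  obtain ⟨R, hR, hq⟩ := hC x hx
  have hx0 : 0 < x := by linarith
  have h1 := hD (1 / x, R) ⟨⟨by positivity, by
    simp only; rw [div_le_one hx0]; linarith⟩, abs_le.1 hR⟩
  have : x * (x * TT x + 315 / 4) = rem (1 / x, R) := by
    unfold TT
    rw [hq]
    obtain ⟨e, he, rfl⟩ : ∃ e : ℝ, 0 < e ∧ x = 1 / e := ⟨1 / x, by positivity, by field_simp⟩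
    rw [one_div_one_div]
    unfold rem PP r00 r01 r11
    simp only
    field_simp
    ring
  rw [this]
  exact h1

lemma M0_sq {x : ℝ} (hx : 1 ≤ x) :
    |x * (x * MM 0 x ^ 2 - π / 2)| ≤ π / 4 ∧ x * MM 0 x ^ 2 ≤ π / 2 := by
  have hx0 : 0 < x := by linarith
  obtain ⟨h1, h2⟩ := MM0_bounds hx0
  have h3 := MM_rec 0 hx0
  norm_num at h3
  have h4 := mul_nonneg hx0.le (MM_nonneg 2 x)
  have h5 := mul_le_mul_of_nonneg_right hx (MM_nonneg 1 x)
  have h6 := MM0_pos hx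
  have h7 : x * MM 1 x ≤ MM 0 x := by linarith
  have hs : x * √(π / (2 * x)) ^ 2 = π / 2 := by
    rw [Real.sq_sqrt (by positivity)]; field_simp
  set s := √(π / (2 * x))
  have h8 : x * (s - MM 0 x) ≤ s / 4 := by nlinarith
  have h9 : 0 ≤ s - MM 0 x := by linarith
  have h10 : x * (s - MM 0 x) * (x * (s + MM 0 x)) ≤ s / 4 * (x * (2 * s)) := by
    apply mul_le_mul h8 _ (by positivity) (by linarith)
    gcongr; linarith
  have h11 : 0 ≤ x * (s - MM 0 x) * (s + MM 0 x) :=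
    mul_nonneg (mul_nonneg hx0.le h9) (by linarith)
  constructor
  · rw [abs_le]
    constructor
    · nlinarith
    · have := mul_nonneg hx0.le h11
      nlinarith [Real.pi_pos]
  · nlinarith

lemma Q_bound : ∃ C : ℝ, ∀ x : ℝ, 8 ≤ x →
    |x * (x ^ 2 * MM 0 x ^ 2 * TT x + 315 * π / 8)| ≤ C := by
  obtain ⟨C, hC⟩ := TT_bound
  refine ⟨π / 2 * C + 315 / 4 * (π / 4), fun x hx => ?_⟩
  obtain ⟨h1, h2⟩ := M0_sq (x := x) (by linarith)
  have h3 := hC x hx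
  have h0 : 0 ≤ x * MM 0 x ^ 2 := mul_nonneg (by linarith) (sq_nonneg _)
  rw [show x * (x ^ 2 * MM 0 x ^ 2 * TT x + 315 * π / 8) =
    (x * MM 0 x ^ 2) * (x * (x * TT x + 315 / 4)) - 315 / 4 * (x * (x * MM 0 x ^ 2 - π / 2)) by ring]
  refine (abs_sub _ _).trans (add_le_add ?_ ?_)
  · rw [abs_mul, abs_of_nonneg h0]
    exact mul_le_mul h2 h3 (abs_nonneg _) (by positivity)
  · rw [abs_mul, abs_of_pos (by norm_num : (0:ℝ) < 315 / 4)]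
    gcongr

/-- large-`y` behaviour of the complete mode `f̂_{n₁,-n₁}`:
`y·( y²·e^{4π|n₁|y}·(F(y) − 8σ₂(|n₁|)²/(21π²n₁⁶y³)) + σ₂(|n₁|)²/|n₁|⁵ )` stays bounded
as `y → ∞`. -/
theorem mode_diag_large_y (n₁ : ℤ) (h₁ : n₁ ≠ 0) :
    ∃ C : ℝ, ∀ᶠ y in Filter.atTop,
      |y * (y ^ 2 * Real.exp (4 * π * |(n₁ : ℝ)| * y) *
            (fDiag n₁ y -
              8 * (sigma2 n₁.natAbs : ℝ) ^ 2 / (21 * π ^ 2 * (n₁ : ℝ) ^ 6 * y ^ 3)) +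
          (sigma2 n₁.natAbs : ℝ) ^ 2 / |(n₁ : ℝ)| ^ 5)| ≤ C := by

  obtain ⟨C, hC⟩ := Q_bound
  have hN : 0 < |(n₁ : ℝ)| := abs_pos.2 (by exact_mod_cast h₁)
  have h6 : (n₁ : ℝ) ^ 6 = |(n₁ : ℝ)| ^ 6 := by
    rw [← abs_pow, abs_of_nonneg (Even.pow_nonneg (by decide) _)]
  have hsub : ∀ y, fDiag n₁ y -
      8 * (sigma2 n₁.natAbs : ℝ) ^ 2 / (21 * π ^ 2 * (n₁ : ℝ) ^ 6 * y ^ 3) = fPdiag n₁ y := by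
    intro y
    unfold fDiag
    rw [show 21 * (n₁ : ℝ) ^ 6 * π ^ 2 * y ^ 3 = 21 * π ^ 2 * (n₁ : ℝ) ^ 6 * y ^ 3 by ring]
    ring
  simp_rw [hsub]
  unfold fPdiag
  generalize |(n₁ : ℝ)| = N at *
  generalize (sigma2 n₁.natAbs : ℝ) = s
  set κ : ℝ := 32 * π * s ^ 2 / (315 * N ^ 3) / (2 * π * N) ^ 3 with hκ
  have hpi := Real.pi_pos
  refine ⟨C * |κ|, ?_⟩
  filter_upwards [Filter.eventually_ge_atTop (8 / (2 * π * N))] with y hy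
  have hx : 8 ≤ 2 * π * N * y := by
    rw [div_le_iff₀ (by positivity)] at hy; linarith
  have h1 := hC _ hx
  have hM := MM0_pos (x := 2 * π * N * y) (by linarith)
  have key : y * (y ^ 2 * Real.exp (4 * π * N * y) *
      (32 * π * s ^ 2 / (315 * N ^ 3) *
    (r00 (π * N * y) * K0 (2 * π * N * y) * K0 (2 * π * N * y) +
      r01 (π * N * y) * K0 (2 * π * N * y) * K1 (2 * π * N * y) +
      r01 (π * N * y) * K1 (2 * π * N * y) * K0 (2 * π * N * y) +
      r11 (π * N * y) * K1 (2 * π * N * y) * K1 (2 * π * N * y))) + s ^ 2 / N ^ 5) =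
      ((2 * π * N * y) * ((2 * π * N * y) ^ 2 * MM 0 (2 * π * N * y) ^ 2 * TT (2 * π * N * y)
        + 315 * π / 8)) * κ := by
    rw [K0_eq_s10, K1_eq_s10 (by linarith)]
    unfold TT
    rw [show 2 * π * N * y / 2 = π * N * y by ring]
    have hE : Real.exp (4 * π * N * y) * Real.exp (-(2 * π * N * y)) ^ 2 = 1 := by
      rw [← Real.exp_nat_mul, ← Real.exp_add]
      push_cast
      rw [← Real.exp_zero]; congr 1; ring
    generalize r00 (π * N * y) = A
    generalize r01 (π * N * y) = B
    generalize r11 (π * N * y) = D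
    generalize MM 0 (2 * π * N * y) = m0 at *
    generalize MM 1 (2 * π * N * y) = m1
    generalize Real.exp (4 * π * N * y) = E1 at *
    generalize Real.exp (-(2 * π * N * y)) = E2 at *
    have e1 : m0 ^ 2 * (A + 2 * B * (1 + m1 / m0) + D * (1 + m1 / m0) ^ 2) =
      A * m0 ^ 2 + 2 * B * m0 * (m0 + m1) + D * (m0 + m1) ^ 2 := by
      field_simp
    rw [mul_assoc ((2 * π * N * y) ^ 2), e1]
    have e2 : 2 * π * N * (315 * π / 8) * κ = s ^ 2 / N ^ 5 := by
      rw [hκ]; field_simp; norm_num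
    have e3 : (2 * π * N) ^ 3 * κ = 32 * π * s ^ 2 / (315 * N ^ 3) := by
      rw [hκ]; field_simp
    rw [← e2, ← e3]
    linear_combination (y ^ 3 * (2 * π * N) ^ 3 * κ *
      (A * m0 ^ 2 + 2 * B * m0 * (m0 + m1) + D * (m0 + m1) ^ 2)) * hE
  rw [key, abs_mul]
  exact mul_le_mul_of_nonneg_right h1 (abs_nonneg _)
end
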